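/- arXiv:2101.03101 — 2 statements merged into one kernel-verified Lean document; each statement's English description precedes it below -/
import Mathlib

section
/- Hecke-type converse theorem. Let k be a negative integer and N a positive integer. Let f, g : ℍ → ℂ be given by the Fourier series f(τ) = Σ_{n=0}^∞ c_f⁺(n)q^n + c_f⁻(0)v^{1−k} + Σ_{n<0} c_f⁻(n)Γ(1−k,−4πnv)q^n and likewise g, with coefficients c_f^±(n), c_g^±(n) = O(|n|^α) for some α ≥ 0. Then the following are equivalent. (1) g = f|_k ω(N). (2) Each of Λ_N(f,s), Λ_N(g,s), Ω_N(f,s), Ω_N(g,s) admits a meromorphic continuation to all of ℂ, the functional equations Λ_N(f,s) = i^k Λ_N(g, k−s) and Ω_N(f,s) = −i^k Ω_N(g, k−s) hold, and each of the pole-corrected functions Λ*_N(f,s), Λ*_N(g,s), Ω*_N(f,s), Ω*_N(g,s) is entire and bounded in vertical strips. -/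
open Complex MeasureTheory Set Filter

noncomputable section

/-- The upper half-plane, as a subset of `ℂ`. -/
def UHP : Set ℂ := {τ : ℂ | 0 < τ.im}

/-- The weight-`k` slash operator for the matrix `(a b; c d)` (assumed of positive
determinant): `(f|_k γ)(τ) = (det γ)^(k/2) (cτ+d)^(-k) f((aτ+b)/(cτ+d))`. -/
def slash (k : ℤ) (a b c d : ℂ) (f : ℂ → ℂ) : ℂ → ℂ := fun τ =>
  (a * d - b * c) ^ ((k : ℂ) / 2) * (c * τ + d) ^ (-k) * f ((a * τ + b) / (c * τ + d))

/-- The Fricke involution `f ↦ f|_k ω(M)` with `ω(M) = (0 -1; M 0)`. -/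
def fricke (k : ℤ) (M : ℕ) (f : ℂ → ℂ) : ℂ → ℂ := slash k 0 (-1) (M : ℂ) 0 f

/-- Partial derivative in the real (`u`) direction. -/
def pdU (f : ℂ → ℂ) (τ : ℂ) : ℂ := fderiv ℝ f τ 1

/-- Partial derivative in the imaginary (`v`) direction. -/
def pdV (f : ℂ → ℂ) (τ : ℂ) : ℂ := fderiv ℝ f τ Complex.I

/-- Wirtinger derivative `∂/∂τ`. -/
def wirt (f : ℂ → ℂ) (τ : ℂ) : ℂ := (pdU f τ - Complex.I * pdV f τ) / 2

/-- Wirtinger derivative `∂/∂τ̄`. -/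
def wirtBar (f : ℂ → ℂ) (τ : ℂ) : ℂ := (pdU f τ + Complex.I * pdV f τ) / 2

/-- The weight-`k` hyperbolic Laplacian
`Δ_k = -v²(∂²/∂u² + ∂²/∂v²) + ikv(∂/∂u + i ∂/∂v)`. -/
def hypLaplacian (k : ℤ) (f : ℂ → ℂ) (τ : ℂ) : ℂ :=
  -(τ.im : ℂ) ^ 2 * (pdU (pdU f) τ + pdV (pdV f) τ)
    + Complex.I * (k : ℂ) * (τ.im : ℂ) * (pdU f τ + Complex.I * pdV f τ)

/-- Maass raising operator `R_k = 2i ∂/∂τ + k/v`. -/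
def Rop (k : ℤ) (f : ℂ → ℂ) (τ : ℂ) : ℂ :=
  2 * Complex.I * wirt f τ + (k : ℂ) / (τ.im : ℂ) * f τ

/-- Maass lowering operator `L_k = -2iv² ∂/∂τ̄`. -/
def Lop (f : ℂ → ℂ) (τ : ℂ) : ℂ := -2 * Complex.I * (τ.im : ℂ) ^ 2 * wirtBar f τ

/-- Shadow operator `ξ_k f = 2i v^k conj(∂f/∂τ̄)`. -/
def xiOp (k : ℤ) (f : ℂ → ℂ) (τ : ℂ) : ℂ :=
  2 * Complex.I * (τ.im : ℂ) ^ k * (starRingEnd ℂ) (wirtBar f τ)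

/-- The operator `D = (1/(2πi)) ∂/∂τ`. -/
def Dop (f : ℂ → ℂ) : ℂ → ℂ := fun τ => wirt f τ / (2 * Real.pi * Complex.I)

/-- Modularity: `f|_k γ = χ(d) f` for all `γ = (a b; c d) ∈ Γ₀(N)`. -/
def SlashInv (k : ℤ) (N : ℕ) (χ : DirichletCharacter ℂ N) (f : ℂ → ℂ) : Prop :=
  ∀ a b c d : ℤ, a * d - b * c = 1 → (N : ℤ) ∣ c → ∀ τ ∈ UHP,
    slash k (a : ℂ) (b : ℂ) (c : ℂ) (d : ℂ) f τ = χ (d : ZMod N) * f τ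

/-- At every cusp, `f|_k γ` grows at most linear-exponentially:
`(f|_k γ)(τ) = O(e^(εv))` as `v → ∞`. -/
def ExpGrowthAtCusps (k : ℤ) (f : ℂ → ℂ) : Prop :=
  ∀ a b c d : ℤ, a * d - b * c = 1 →
    ∃ ε > (0 : ℝ), ∃ C v₀ : ℝ, ∀ τ ∈ UHP, v₀ ≤ τ.im →
      ‖slash k (a : ℂ) (b : ℂ) (c : ℂ) (d : ℂ) f τ‖ ≤ C * Real.exp (ε * τ.im)

/-- At every cusp, `f|_k γ` has at most polynomial growth as `v → ∞`. -/
def PolyGrowthAtCusps (k : ℤ) (f : ℂ → ℂ) : Prop :=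
  ∀ a b c d : ℤ, a * d - b * c = 1 →
    ∃ A C v₀ : ℝ, ∀ τ ∈ UHP, v₀ ≤ τ.im →
      ‖slash k (a : ℂ) (b : ℂ) (c : ℂ) (d : ℂ) f τ‖ ≤ C * τ.im ^ A

/-- At every cusp, `f|_k γ` stays bounded as `v → ∞`. -/
def BoundedAtCusps (k : ℤ) (f : ℂ → ℂ) : Prop :=
  ∀ a b c d : ℤ, a * d - b * c = 1 →
    ∃ C v₀ : ℝ, ∀ τ ∈ UHP, v₀ ≤ τ.im →
      ‖slash k (a : ℂ) (b : ℂ) (c : ℂ) (d : ℂ) f τ‖ ≤ C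

/-- Harmonic Maass forms of manageable growth: the space `H^!_k(N,χ)`. -/
def IsHarmonicMaassMG (k : ℤ) (N : ℕ) (χ : DirichletCharacter ℂ N) (f : ℂ → ℂ) : Prop :=
  ContDiffOn ℝ (⊤ : ℕ∞) f UHP ∧ SlashInv k N χ f ∧ (∀ τ ∈ UHP, hypLaplacian k f τ = 0) ∧
    ExpGrowthAtCusps k f

/-- Harmonic Maass forms of polynomial growth: the space `H^#_k(N,χ)`. -/
def IsHMFPolyGrowth (k : ℤ) (N : ℕ) (χ : DirichletCharacter ℂ N) (f : ℂ → ℂ) : Prop :=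
  IsHarmonicMaassMG k N χ f ∧ PolyGrowthAtCusps k f

/-- Holomorphic modular forms of weight `k`: the space `M_k(N,χ)`. -/
def IsHolomorphicModularForm (k : ℤ) (N : ℕ) (χ : DirichletCharacter ℂ N) (f : ℂ → ℂ) : Prop :=
  DifferentiableOn ℂ f UHP ∧ SlashInv k N χ f ∧ BoundedAtCusps k f

/-- The (real) incomplete gamma function `Γ(ν, x) = ∫_x^∞ e^(-t) t^(ν-1) dt`. -/
def incGamma (ν : ℝ) (x : ℝ) : ℝ := ∫ t in Ioi x, Real.exp (-t) * t ^ (ν - 1)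

/-- The series `Σ_{n≥0} c⁺(n) qⁿ + c⁻(0) v^(1-k) + Σ_{n<0} c⁻(n) Γ(1-k, -4πnv) qⁿ`,
with `cm j` standing for `c⁻(-j)`. -/
def maassSeries (k : ℤ) (cp cm : ℕ → ℂ) : ℂ → ℂ := fun τ =>
  (∑' n : ℕ, cp n * Complex.exp (2 * Real.pi * Complex.I * n * τ))
    + cm 0 * (τ.im : ℂ) ^ (1 - k)
    + ∑' n : ℕ, cm (n + 1) * (incGamma ((1 - k : ℤ) : ℝ) (4 * Real.pi * (n + 1) * τ.im) : ℂ)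
        * Complex.exp (-(2 * Real.pi * Complex.I * (n + 1) * τ))

/-- `f` is given on `ℍ` by the harmonic-Maass-type Fourier series with
holomorphic-part coefficients `cp n = c⁺(n)` and nonholomorphic-part
coefficients `cm n = c⁻(-n)`. -/
def FourierShape (k : ℤ) (cp cm : ℕ → ℂ) (f : ℂ → ℂ) : Prop :=
  ∀ τ ∈ UHP, f τ = maassSeries k cp cm τ

/-- Coefficients bounded by `O(n^α)`. -/
def CoeffBound (α : ℝ) (c : ℕ → ℂ) : Prop :=
  ∃ C : ℝ, ∀ n : ℕ, 1 ≤ n → ‖c n‖ ≤ C * (n : ℝ) ^ α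

/-- Dirichlet series `Σ_{n≥1} c(n) n^(-s)`. -/
def LSer (c : ℕ → ℂ) (s : ℂ) : ℂ := ∑' n : ℕ, c (n + 1) / ((n : ℂ) + 1) ^ s

/-- `W_ν(s) = ∫₀^∞ Γ(ν,2x) eˣ x^(s-1) dx`. -/
def Wnu (ν : ℝ) (s : ℂ) : ℂ :=
  ∫ x in Ioi (0 : ℝ), ((incGamma ν (2 * x) * Real.exp x : ℝ) : ℂ) * (x : ℂ) ^ (s - 1)

/-- Completed `L`-function `Λ_N(f,s)` (with twisting conductor `m`; `m = 1` is
the untwisted case): `(m√N/(2π))^s [Γ(s) L⁺(s) + W_{1-k}(s) L⁻(s)]`. -/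
def LambdaN (N : ℕ) (k : ℤ) (m : ℕ) (cp cm : ℕ → ℂ) (s : ℂ) : ℂ :=
  ((m * Real.sqrt N / (2 * Real.pi) : ℝ) : ℂ) ^ s *
    (Complex.Gamma s * LSer cp s + Wnu ((1 - k : ℤ) : ℝ) s * LSer cm s)

/-- `Ξ_N(f,s) = (m√N/(2π))^s [Γ(s+1) L⁺(s) - W_{1-k}(s+1) L⁻(s)]`. -/
def XiN (N : ℕ) (k : ℤ) (m : ℕ) (cp cm : ℕ → ℂ) (s : ℂ) : ℂ :=
  ((m * Real.sqrt N / (2 * Real.pi) : ℝ) : ℂ) ^ s *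
    (Complex.Gamma (s + 1) * LSer cp s - Wnu ((1 - k : ℤ) : ℝ) (s + 1) * LSer cm s)

/-- `Ω_N(f,s) = -2 Ξ_N(f,s) + k Λ_N(f,s)`. -/
def OmegaN (N : ℕ) (k : ℤ) (m : ℕ) (cp cm : ℕ → ℂ) (s : ℂ) : ℂ :=
  -2 * XiN N k m cp cm s + (k : ℂ) * LambdaN N k m cp cm s

/-- Bounded on every vertical strip. -/
def BoundedVert (F : ℂ → ℂ) : Prop :=
  ∀ a b : ℝ, ∃ M : ℝ, ∀ s : ℂ, a ≤ s.re → s.re ≤ b → ‖F s‖ ≤ M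

/-- `N^((1-k)/2)` as a complex number. -/
def Npow (N : ℕ) (k : ℤ) : ℂ := (N : ℂ) ^ ((1 - (k : ℂ)) / 2)

/-- Pole-correction terms for `Λ*`. -/
def corrL (N : ℕ) (k : ℤ) (ι c0 d0 c0' d0' : ℂ) (s : ℂ) : ℂ :=
  c0 / s + ι * d0 / ((k : ℂ) - s) + c0' / Npow N k / (s - (k : ℂ) + 1)
    + ι * d0' / Npow N k / (1 - s)

/-- Pole-correction terms for `Ω*`. -/
def corrO (N : ℕ) (k : ℤ) (ι c0 d0 c0' d0' : ℂ) (s : ℂ) : ℂ :=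
  (k : ℂ) * (c0 / s - ι * d0 / ((k : ℂ) - s) + c0' / Npow N k / (s - (k : ℂ) + 1)
    - ι * d0' / Npow N k / (1 - s))

/-- The pole-corrected function `L + corr` agrees away from `{0, k, 1, k-1}` with an
entire function that is bounded on vertical strips. -/
def EntireBddCorrected (k : ℤ) (L corr : ℂ → ℂ) : Prop :=
  ∃ F : ℂ → ℂ, Differentiable ℂ F ∧ BoundedVert F ∧
    ∀ s : ℂ, s ≠ 0 → s ≠ (k : ℂ) → s ≠ 1 → s ≠ (k : ℂ) - 1 → F s = L s + corr s

/-- Condition (2)(a) of the main theorem: meromorphic continuation, functional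
equations, and entire pole-corrected completions bounded on vertical strips. -/
def AnalyticPackage (N : ℕ) (k : ℤ) (α : ℝ) (cfp cfm cgp cgm : ℕ → ℂ) : Prop :=
  ∃ Lf Lg Of' Og : ℂ → ℂ,
    (∀ s : ℂ, α + 1 < s.re → Lf s = LambdaN N k 1 cfp cfm s) ∧
    (∀ s : ℂ, α + 1 < s.re → Lg s = LambdaN N k 1 cgp cgm s) ∧
    (∀ s : ℂ, α + 1 < s.re → Of' s = OmegaN N k 1 cfp cfm s) ∧
    (∀ s : ℂ, α + 1 < s.re → Og s = OmegaN N k 1 cgp cgm s) ∧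
    (∀ s : ℂ, Lf s = Complex.I ^ k * Lg ((k : ℂ) - s)) ∧
    (∀ s : ℂ, Of' s = -(Complex.I ^ k) * Og ((k : ℂ) - s)) ∧
    EntireBddCorrected k Lf (corrL N k (Complex.I ^ k) (cfp 0) (cgp 0) (cfm 0) (cgm 0)) ∧
    EntireBddCorrected k Lg (corrL N k (Complex.I ^ (-k)) (cgp 0) (cfp 0) (cgm 0) (cfm 0)) ∧
    EntireBddCorrected k Of' (corrO N k (Complex.I ^ k) (cfp 0) (cgp 0) (cfm 0) (cgm 0)) ∧
    EntireBddCorrected k Og (corrO N k (Complex.I ^ (-k)) (cgp 0) (cfp 0) (cgm 0) (cfm 0))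

/-- The complex conjugate of a Dirichlet character. -/
def conjChar {N : ℕ} (χ : DirichletCharacter ℂ N) : DirichletCharacter ℂ N :=
  χ.ringHomComp (starRingEnd ℂ)

/-- Twist of a coefficient sequence by a Dirichlet character. -/
def twistC {m : ℕ} (ψ : DirichletCharacter ℂ m) (c : ℕ → ℂ) : ℕ → ℂ :=
  fun n => ψ (n : ZMod m) * c n

/-- The twisted Fourier series `f_ψ`. -/
def twistFn (k : ℤ) {m : ℕ} (ψ : DirichletCharacter ℂ m) (cp cm : ℕ → ℂ) : ℂ → ℂ :=
  maassSeries k (twistC ψ cp) (twistC ψ cm)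

/-- The Gauss sum `τ(ψ) = Σ_{a=0}^{m-1} ψ(a) e^(2πia/m)`. -/
def gSum (m : ℕ) (ψ : DirichletCharacter ℂ m) : ℂ :=
  ∑ a ∈ Finset.range m, ψ (a : ZMod m) * Complex.exp (2 * Real.pi * Complex.I * a / m)

/-- The analytic package for the `ψ`-twisted completed Dirichlet series: entire
continuations, bounded on vertical strips, with functional equations with
constant `Cψ`. -/
def TwistedPackage (N : ℕ) (k : ℤ) (α : ℝ) (m : ℕ) (ψ : DirichletCharacter ℂ m)
    (cfp cfm cgp cgm : ℕ → ℂ) (Cψ : ℂ) : Prop :=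
  ∃ Lf Lg Of' Og : ℂ → ℂ,
    (∀ s : ℂ, α + 1 < s.re → Lf s = LambdaN N k m (twistC ψ cfp) (twistC ψ cfm) s) ∧
    (∀ s : ℂ, α + 1 < s.re →
      Lg s = LambdaN N k m (twistC (conjChar ψ) cgp) (twistC (conjChar ψ) cgm) s) ∧
    (∀ s : ℂ, α + 1 < s.re → Of' s = OmegaN N k m (twistC ψ cfp) (twistC ψ cfm) s) ∧
    (∀ s : ℂ, α + 1 < s.re →
      Og s = OmegaN N k m (twistC (conjChar ψ) cgp) (twistC (conjChar ψ) cgm) s) ∧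
    Differentiable ℂ Lf ∧ Differentiable ℂ Lg ∧ Differentiable ℂ Of' ∧ Differentiable ℂ Og ∧
    BoundedVert Lf ∧ BoundedVert Lg ∧ BoundedVert Of' ∧ BoundedVert Og ∧
    (∀ s : ℂ, Lf s = Complex.I ^ k * Cψ * Lg ((k : ℂ) - s)) ∧
    (∀ s : ℂ, Of' s = -(Complex.I ^ k) * Cψ * Og ((k : ℂ) - s))

abbrev SL2Z := Matrix.SpecialLinearGroup (Fin 2) ℤ

/-- Entry of a matrix in `SL₂(ℤ)`. -/
def mEntry (g : SL2Z) (i j : Fin 2) : ℤ := (g : Matrix (Fin 2) (Fin 2) ℤ) i j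

/-- Slash by a matrix in `SL₂(ℤ)`. -/
def slashM (k : ℤ) (g : SL2Z) (f : ℂ → ℂ) : ℂ → ℂ :=
  slash k (mEntry g 0 0 : ℂ) (mEntry g 0 1 : ℂ) (mEntry g 1 0 : ℂ) (mEntry g 1 1 : ℂ) f

/-- `Γ₀(N)` as a subset of `SL₂(ℤ)`. -/
def Gamma0Set (N : ℕ) : Set SL2Z := {g | (N : ℤ) ∣ mEntry g 1 0}

/-- `Γ_∞`, the stabiliser of `i∞` in `SL₂(ℤ)`. -/
def GammaInfSet : Set SL2Z := {g | mEntry g 1 0 = 0}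

/-- `Γ_ρ = Γ₀(N) ∩ γ_ρ Γ_∞ γ_ρ⁻¹` for the cusp `ρ = γ_ρ(i∞)`. -/
def GammaCusp (N : ℕ) (γρ : SL2Z) : Set SL2Z :=
  {g | g ∈ Gamma0Set N ∧ γρ⁻¹ * g * γρ ∈ GammaInfSet}

/-- `R` is a complete set of representatives for `Γ_ρ \ Γ₀(N)`. -/
def IsCosetReps (N : ℕ) (γρ : SL2Z) (R : Set SL2Z) : Prop :=
  R ⊆ Gamma0Set N ∧
    ∀ g ∈ Gamma0Set N, ∃! r : SL2Z, r ∈ R ∧ ∃ γ ∈ GammaCusp N γρ, g = γ * r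

/-- `χ(g) := χ(d)` for `g = (a b; c d)`. -/
def chiOf {N : ℕ} (χ : DirichletCharacter ℂ N) (g : SL2Z) : ℂ :=
  χ ((mEntry g 1 1 : ℤ) : ZMod N)

/-- The preimage `𝓕_{k,ρ}(N,χ;τ) = Σ_{g ∈ Γ_ρ\Γ₀(N)} χ̄(g) (v^(1-k)/(1-k))|_k γ_ρ⁻¹ g`,
computed using a set `R` of coset representatives. -/
def FEis (k : ℤ) (N : ℕ) (χ : DirichletCharacter ℂ N) (γρ : SL2Z) (R : Set SL2Z) : ℂ → ℂ :=
  fun τ => ∑' r : R, (starRingEnd ℂ) (chiOf χ (r : SL2Z)) *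
    slashM k (γρ⁻¹ * (r : SL2Z)) (fun z => (z.im : ℂ) ^ (1 - k) / ((1 : ℂ) - (k : ℂ))) τ

/-- The Eisenstein series `E_{2-k,ρ}(N,χ;τ) = Σ_{g ∈ Γ_ρ\Γ₀(N)} χ̄(g) j(γ_ρ⁻¹g, τ)^(k-2)`,
computed using a set `R` of coset representatives. -/
def EisSeries (k : ℤ) (N : ℕ) (χ : DirichletCharacter ℂ N) (γρ : SL2Z) (R : Set SL2Z) :
    ℂ → ℂ := fun τ => ∑' r : R, (starRingEnd ℂ) (chiOf χ (r : SL2Z)) *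
      ((mEntry (γρ⁻¹ * (r : SL2Z)) 1 0 : ℂ) * τ + (mEntry (γρ⁻¹ * (r : SL2Z)) 1 1 : ℂ)) ^ (k - 2)

/-- Two cusps `γν(i∞)` and `γρ(i∞)` are `Γ₀(N)`-equivalent. -/
def CuspEquiv (N : ℕ) (γν γρ : SL2Z) : Prop :=
  ∃ g ∈ Gamma0Set N, ∃ h ∈ GammaInfSet, γν = g * γρ * h


open scoped Topology ComplexConjugate

section PartA

/-- Tail functions. -/
def IsTail (σ : ℝ) (a : ℝ → ℂ) : Prop :=
  ContinuousOn a (Ioi 0) ∧ ∀ β > σ, ∃ C : ℝ, ∀ t > 0, ‖a t‖ ≤ C * t ^ (-β)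

lemma IsTail.mellinConvergent {σ : ℝ} {a : ℝ → ℂ} (h : IsTail σ a) {s : ℂ} (hs : σ < s.re) :
    MellinConvergent a s := by
  obtain ⟨C1, h1⟩ := h.2 (s.re + 1) (by linarith)
  obtain ⟨C2, h2⟩ := h.2 ((σ + s.re) / 2) (by linarith)
  refine mellinConvergent_of_isBigO_rpow (a := s.re + 1) (b := (σ + s.re) / 2)
    (h.1.locallyIntegrableOn measurableSet_Ioi) ?_ (by linarith) ?_ (by linarith)
  · refine Asymptotics.IsBigO.of_bound C1 ?_
    filter_upwards [eventually_gt_atTop 0] with t ht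
    rw [Real.norm_of_nonneg (Real.rpow_nonneg ht.le _)]
    exact h1 t ht
  · refine Asymptotics.IsBigO.of_bound C2 ?_
    filter_upwards [self_mem_nhdsWithin] with t ht
    rw [Real.norm_of_nonneg (Real.rpow_nonneg (le_of_lt ht) _)]
    exact h2 t ht

/-- The restriction to `(1,∞)`. -/
def cut (a : ℝ → ℂ) : ℝ → ℂ := indicator (Ioi 1) a

lemma cut_locInt {σ : ℝ} {a : ℝ → ℂ} (h : IsTail σ a) : LocallyIntegrableOn (cut a) (Ioi 0) := by
  have := h.1.locallyIntegrableOn (μ := volume) measurableSet_Ioi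
  rw [locallyIntegrableOn_iff isOpen_Ioi.isLocallyClosed] at this ⊢
  intro K hK hKc
  exact (this K hK hKc).indicator measurableSet_Ioi

lemma cut_top {σ : ℝ} {a : ℝ → ℂ} (h : IsTail σ a) {r : ℝ} (hr : σ < r) :
    (cut a) =O[atTop] (fun t : ℝ => t ^ (-r)) := by
  obtain ⟨C1, h1⟩ := h.2 r hr
  refine Asymptotics.IsBigO.of_bound C1 ?_
  filter_upwards [eventually_gt_atTop 1] with t ht
  rw [Real.norm_of_nonneg (Real.rpow_nonneg (by linarith) _), cut, indicator_of_mem (by exact ht)]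
  exact h1 t (by linarith)

lemma cut_bot {a : ℝ → ℂ} (r : ℝ) :
    (cut a) =O[𝓝[>] 0] (fun t : ℝ => t ^ (-r)) := by
  have : (cut a) =ᶠ[𝓝[>] 0] (fun _ => (0:ℂ)) := by
    filter_upwards [Ioo_mem_nhdsGT (zero_lt_one (α := ℝ))] with t ht
    rw [cut, indicator_of_notMem]
    simp [ht.2.le]
  exact this.trans_isBigO (Asymptotics.isBigO_zero _ _)

lemma cut_conv {σ : ℝ} {a : ℝ → ℂ} (h : IsTail σ a) (s : ℂ) : MellinConvergent (cut a) s :=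
  mellinConvergent_of_isBigO_rpow (a := max σ s.re + 1) (b := s.re - 1) (cut_locInt h)
    (cut_top h (by linarith [le_max_left σ s.re])) (by linarith [le_max_right σ s.re])
    (cut_bot _) (by linarith)

lemma cut_diff {σ : ℝ} {a : ℝ → ℂ} (h : IsTail σ a) : Differentiable ℂ (mellin (cut a)) := fun s =>
  mellin_differentiableAt_of_isBigO_rpow (a := max σ s.re + 1) (b := s.re - 1) (cut_locInt h)
    (cut_top h (by linarith [le_max_left σ s.re])) (by linarith [le_max_right σ s.re])
    (cut_bot _) (by linarith)

lemma cut_bdd {σ : ℝ} {a : ℝ → ℂ} (h : IsTail σ a) : BoundedVert (mellin (cut a)) := by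
  intro x y
  refine ⟨∫ t in Ioi (0:ℝ), ‖(t : ℂ) ^ ((y:ℂ) - 1) • cut a t‖, fun s _ hs => ?_⟩
  refine norm_integral_le_of_norm_le (cut_conv h (y:ℂ)).norm ?_
  filter_upwards [ae_restrict_mem measurableSet_Ioi] with t ht
  rw [norm_smul, norm_smul]
  by_cases h1 : t ∈ Ioi (1:ℝ)
  · gcongr ?_ * _
    rw [norm_cpow_eq_rpow_re_of_pos ht, norm_cpow_eq_rpow_re_of_pos ht]
    apply Real.rpow_le_rpow_of_exponent_le (le_of_lt h1)
    simpa using hs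
  · simp [cut, indicator_of_notMem h1]

/-- restriction to `(0,1]` is bounded in right half planes -/
lemma low_bdd {b : ℝ → ℂ} {x : ℝ} (h : MellinConvergent (indicator (Ioc 0 1) b) x) :
    ∃ M : ℝ, ∀ s : ℂ, x ≤ s.re → ‖mellin (indicator (Ioc 0 1) b) s‖ ≤ M := by
  refine ⟨∫ t in Ioi (0:ℝ), ‖(t : ℂ) ^ ((x:ℂ) - 1) • indicator (Ioc 0 1) b t‖, fun s hs => ?_⟩
  refine norm_integral_le_of_norm_le h.norm ?_
  filter_upwards [ae_restrict_mem measurableSet_Ioi] with t ht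
  rw [norm_smul, norm_smul]
  by_cases h1 : t ∈ Ioc (0:ℝ) 1
  · gcongr ?_ * _
    rw [norm_cpow_eq_rpow_re_of_pos ht, norm_cpow_eq_rpow_re_of_pos ht]
    apply Real.rpow_le_rpow_of_exponent_ge ht h1.2
    simpa using hs
  · simp [indicator_of_notMem h1]

/-- completed function -/
def full (K : ℕ) (a : ℝ → ℂ) (c0 c1 : ℂ) (t : ℝ) : ℂ := a t + c0 + c1 * (t : ℂ) ^ (K + 1)

/-- defect function -/
def defect (K : ℕ) (ε : ℂ) (a b : ℝ → ℂ) (c0 c1 d0 d1 : ℂ) (t : ℝ) : ℂ :=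
  full K a c0 c1 t - ε * (t : ℂ) ^ K * full K b d0 d1 t⁻¹

/-- correction -/
def corr (K : ℕ) (ε c0 c1 d0 d1 : ℂ) (s : ℂ) : ℂ :=
  c0 / s + ε * d0 / (-(K:ℂ) - s) + c1 / (s + K + 1) + ε * d1 / (1 - s)

lemma defect_mellin {σ : ℝ} (hσ : 1 ≤ σ) (K : ℕ) (ε : ℂ) {a b : ℝ → ℂ} (ha : IsTail σ a)
    (hb : IsTail σ b) (c0 c1 d0 d1 : ℂ) {s : ℂ} (hs : σ < s.re) :
    HasMellin (indicator (Ioc 0 1) (defect K ε a b c0 c1 d0 d1)) s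
      (mellin a s - mellin (cut a) s + corr K ε c0 c1 d0 d1 s
        - ε * mellin (cut b) (-(K:ℂ) - s)) := by
  have key : HasMellin (fun t : ℝ => (a t - cut a t)
      + ((c0 • indicator (Ioc 0 1) (fun _ => (1:ℂ)) t
      + c1 • indicator (Ioc 0 1) (fun t : ℝ => (t:ℂ) ^ ((K:ℂ)+1)) t)
      - (ε * d0) • indicator (Ioc 0 1) (fun t : ℝ => (t:ℂ) ^ (K:ℂ)) t)
      - (ε * d1) • indicator (Ioc 0 1) (fun t : ℝ => (t:ℂ) ^ (-1:ℂ)) t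
      - ε • ((t:ℂ) ^ (K:ℂ) • cut b t⁻¹)) s
      ((mellin a s - mellin (cut a) s)
      + ((c0 • (1 / s) + c1 • (1 / (s + (K + 1)))) - (ε * d0) • (1 / (s + K)))
      - (ε * d1) • (1 / (s + (-1)))
      - ε • mellin (cut b) (-(K:ℂ) - s)) := by
    have h1 := hasMellin_sub (ha.mellinConvergent hs) (cut_conv ha s)
    have h2 := hasMellin_one_Ioc (s := s) (by linarith)
    have hK : (0:ℝ) ≤ K := Nat.cast_nonneg K
    have h3 := hasMellin_cpow_Ioc ((K:ℂ)+1) (s := s) (by simp; linarith)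
    have h4 := hasMellin_cpow_Ioc (K:ℂ) (s := s) (by simp; linarith)
    have h5 := hasMellin_cpow_Ioc (-1:ℂ) (s := s) (by simp; linarith)
    have h6 : HasMellin (fun t : ℝ => (t:ℂ) ^ (K:ℂ) • cut b t⁻¹) s
        (mellin (cut b) (-(K:ℂ) - s)) := by
      constructor
      · rw [MellinConvergent.cpow_smul]
        have := (MellinConvergent.comp_rpow (f := cut b) (s := s + K) (a := -1) (by norm_num)).2
          (cut_conv hb _)
        simpa only [Real.rpow_neg_one] using this
      · rw [mellin_cpow_smul, mellin_comp_inv]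
        congr 1
        ring
    have h2' := hasMellin_const_smul h2.1 c0
    have h3' := hasMellin_const_smul h3.1 c1
    have h4' := hasMellin_const_smul h4.1 (ε * d0)
    have h5' := hasMellin_const_smul h5.1 (ε * d1)
    have h6' := hasMellin_const_smul h6.1 ε
    have a1 := hasMellin_add h2'.1 h3'.1
    have a2 := hasMellin_sub a1.1 h4'.1
    have a3 := hasMellin_add h1.1 a2.1
    have a4 := hasMellin_sub a3.1 h5'.1
    have a5 := hasMellin_sub a4.1 h6'.1
    refine ⟨a5.1, ?_⟩
    rw [a5.2, a4.2, a3.2, a2.2, a1.2, h1.2, h2'.2, h3'.2, h4'.2, h5'.2, h6'.2, h2.2, h3.2, h4.2,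
      h5.2, h6.2]
  have hfun : ∀ t ∈ Ioi (0:ℝ), indicator (Ioc 0 1) (defect K ε a b c0 c1 d0 d1) t =
      (a t - cut a t)
      + ((c0 • indicator (Ioc 0 1) (fun _ => (1:ℂ)) t
      + c1 • indicator (Ioc 0 1) (fun t : ℝ => (t:ℂ) ^ ((K:ℂ)+1)) t)
      - (ε * d0) • indicator (Ioc 0 1) (fun t : ℝ => (t:ℂ) ^ (K:ℂ)) t)
      - (ε * d1) • indicator (Ioc 0 1) (fun t : ℝ => (t:ℂ) ^ (-1:ℂ)) t
      - ε • ((t:ℂ) ^ (K:ℂ) • cut b t⁻¹) - 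
        (if t = 1 then ε * b 1 else 0) := by
    intro t ht
    have ht0 : (0:ℝ) < t := ht
    have htc : (t:ℂ) ≠ 0 := ofReal_ne_zero.2 ht0.ne'
    rcases lt_trichotomy t 1 with h1 | h1 | h1
    · have m : t ∈ Ioc (0:ℝ) 1 := ⟨ht, h1.le⟩
      have m' : t ∉ Ioi (1:ℝ) := by simp [h1.le]
      have m'' : t⁻¹ ∈ Ioi (1:ℝ) := (one_lt_inv₀ ht0).2 h1
      have e1 : (t:ℂ) ^ ((K:ℂ) + 1) = (t:ℂ) ^ (K + 1) := by
        rw [← cpow_natCast]; push_cast; rfl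
      simp only [indicator_of_mem m, cut, indicator_of_mem m'', indicator_of_notMem m', h1.ne,
        if_false, defect, full, smul_eq_mul, cpow_natCast, cpow_neg_one, e1]
      push_cast
      rw [inv_pow]
      field_simp
      ring
    · subst h1
      simp [cut, defect, full]
      ring
    · have m : t ∉ Ioc (0:ℝ) 1 := by simp [h1]
      have m' : t ∈ Ioi (1:ℝ) := h1
      have m'' : t⁻¹ ∉ Ioi (1:ℝ) := by simp [inv_le_one_of_one_le₀ h1.le]
      simp only [indicator_of_notMem m, cut, indicator_of_notMem m'', indicator_of_mem m', h1.ne',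
        if_false]
      simp
  have hae : (fun t : ℝ => (t:ℂ) ^ (s - 1) • indicator (Ioc 0 1) (defect K ε a b c0 c1 d0 d1) t)
      =ᵐ[volume.restrict (Ioi 0)] (fun t : ℝ => (t:ℂ) ^ (s - 1) • ((a t - cut a t)
      + ((c0 • indicator (Ioc 0 1) (fun _ => (1:ℂ)) t
      + c1 • indicator (Ioc 0 1) (fun t : ℝ => (t:ℂ) ^ ((K:ℂ)+1)) t)
      - (ε * d0) • indicator (Ioc 0 1) (fun t : ℝ => (t:ℂ) ^ (K:ℂ)) t)
      - (ε * d1) • indicator (Ioc 0 1) (fun t : ℝ => (t:ℂ) ^ (-1:ℂ)) t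
      - ε • ((t:ℂ) ^ (K:ℂ) • cut b t⁻¹))) := by
    filter_upwards [ae_restrict_mem measurableSet_Ioi,
      ae_restrict_of_ae (Measure.ae_ne volume (1:ℝ))] with t ht ht1
    rw [hfun t ht, if_neg ht1, sub_zero]
  constructor
  · exact key.1.congr hae.symm
  · rw [mellin, integral_congr_ae hae]
    refine key.2.trans ?_
    have n1 : s ≠ 0 := by rintro rfl; simp at hs; linarith
    have n2 : s + (K + 1) ≠ 0 := by
      intro h
      have := congrArg re h
      have hK : (0:ℝ) ≤ K := Nat.cast_nonneg K
      simp at this; linarith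
    have n3 : s + K ≠ 0 := by
      intro h
      have := congrArg re h
      have hK : (0:ℝ) ≤ K := Nat.cast_nonneg K
      simp at this; linarith
    have n4 : s + -1 ≠ 0 := by
      intro h
      have := congrArg re h
      simp at this; linarith
    have q1 : -(K:ℂ) - s = -(s + K) := by ring
    have q2 : 1 - s = -(s + -1) := by ring
    have q3 : s + K + 1 = s + (K + 1) := by ring
    simp only [corr, smul_eq_mul]
    rw [q2, q3, show ε * d0 / (-(K:ℂ) - s) = ε * d0 / (-(s+K)) by rw [q1]]
    rw [div_neg, div_neg]
    ring

lemma corr_symm (K : ℕ) {ε : ℂ} (hε : ε ≠ 0) (c0 c1 d0 d1 s : ℂ) :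
    corr K ε c0 c1 d0 d1 s = ε * corr K ε⁻¹ d0 d1 c0 c1 (-(K:ℂ) - s) := by
  simp only [corr]
  rw [show -(K:ℂ) - (-(K:ℂ) - s) = s by ring, show -(K:ℂ) - s + K + 1 = 1 - s by ring,
    show 1 - (-(K:ℂ) - s) = s + K + 1 by ring]
  have : ∀ x y, ε * (ε⁻¹ * x / y) = x / y := by intro x y; field_simp
  rw [mul_add, mul_add, mul_add, this, this]
  ring

lemma abstract_forward_entire {σ : ℝ} (K : ℕ) (ε : ℂ) {a b : ℝ → ℂ} (ha : IsTail σ a)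
    (hb : IsTail σ b) :
    Differentiable ℂ (fun s => mellin (cut a) s + ε * mellin (cut b) (-(K:ℂ) - s)) ∧
    BoundedVert (fun s => mellin (cut a) s + ε * mellin (cut b) (-(K:ℂ) - s)) := by
  constructor
  · exact (cut_diff ha).add (((cut_diff hb).comp (by fun_prop)).const_mul ε)
  · intro x y
    obtain ⟨M1, h1⟩ := cut_bdd ha x y
    obtain ⟨M2, h2⟩ := cut_bdd hb (-K - y) (-K - x)
    refine ⟨M1 + ‖ε‖ * M2, fun s hx hy => ?_⟩
    refine (norm_add_le _ _).trans (add_le_add (h1 s hx hy) ?_)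
    rw [norm_mul]
    gcongr
    apply h2 <;> simp <;> linarith

lemma defect_swap (K : ℕ) {ε : ℂ} (hε : ε ≠ 0) (a b : ℝ → ℂ) (c0 c1 d0 d1 : ℂ) {t : ℝ}
    (ht : 0 < t) : defect K ε a b c0 c1 d0 d1 t
      = - (ε * (t:ℂ) ^ K * defect K ε⁻¹ b a d0 d1 c0 c1 t⁻¹) := by
  have htc : (t:ℂ) ≠ 0 := ofReal_ne_zero.2 ht.ne'
  simp only [defect, inv_inv]
  push_cast
  rw [inv_pow]
  field_simp
  ring

lemma defect_cont {σ : ℝ} (K : ℕ) (ε : ℂ) {a b : ℝ → ℂ} (ha : IsTail σ a)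
    (hb : IsTail σ b) (c0 c1 d0 d1 : ℂ) : ContinuousOn (defect K ε a b c0 c1 d0 d1) (Ioi 0) := by
  unfold defect full
  have h1 : ContinuousOn (fun t : ℝ => t⁻¹) (Ioi 0) :=
    continuousOn_inv₀.mono (fun t ht => ne_of_gt ht)
  have h2 : ContinuousOn (fun t : ℝ => b t⁻¹) (Ioi 0) :=
    hb.1.comp h1 (fun t ht => mem_Ioi.2 (inv_pos.2 (mem_Ioi.1 ht)))
  have h3 : ContinuousOn (fun t : ℝ => ((t⁻¹ : ℝ):ℂ)) (Ioi 0) :=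
    continuous_ofReal.comp_continuousOn h1
  have h5 : ContinuousOn (fun t : ℝ => (t:ℂ)) (Ioi 0) := continuous_ofReal.continuousOn
  exact ((ha.1.add continuousOn_const).add (continuousOn_const.mul (h5.pow _))).sub
    ((continuousOn_const.mul (h5.pow _)).mul
      ((h2.add continuousOn_const).add (continuousOn_const.mul (h3.pow _))))

lemma abstract_half {σ : ℝ} (hσ : 1 ≤ σ) (K : ℕ) {ε : ℂ} (hε : ε ≠ 0) {a b : ℝ → ℂ}
    (ha : IsTail σ a)
    (hb : IsTail σ b) (c0 c1 d0 d1 : ℂ) {F Lf Lg : ℂ → ℂ}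
    (hLf : ∀ s : ℂ, σ < s.re → Lf s = mellin a s) (hLg : ∀ s : ℂ, σ < s.re → Lg s = mellin b s)
    (hfe : ∀ s, Lf s = ε * Lg (-(K:ℂ) - s))
    (hF : Differentiable ℂ F) (hFb : BoundedVert F)
    (hFL : ∀ s : ℂ, s ≠ 0 → s ≠ -(K:ℂ) → s ≠ 1 → s ≠ -(K:ℂ) - 1 →
      F s = Lf s + corr K ε c0 c1 d0 d1 s) :
    ∀ t ∈ Ioo (0:ℝ) 1, defect K ε a b c0 c1 d0 d1 t = 0 := by
  have hK : (0:ℝ) ≤ K := Nat.cast_nonneg K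
  have good : ∀ s : ℂ, σ < s.re → s ≠ 0 ∧ s ≠ -(K:ℂ) ∧ s ≠ 1 ∧ s ≠ -(K:ℂ) - 1 := by
    intro s hs
    refine ⟨?_, ?_, ?_, ?_⟩ <;> rintro rfl <;> simp at hs <;> linarith
  have bad : ∀ s : ℂ, s.re < -K - σ → s ≠ 0 ∧ s ≠ -(K:ℂ) ∧ s ≠ 1 ∧ s ≠ -(K:ℂ) - 1 := by
    intro s hs
    refine ⟨?_, ?_, ?_, ?_⟩ <;> rintro rfl <;> simp at hs <;> linarith
  set H : ℂ → ℂ := fun s => F s - (mellin (cut a) s + ε * mellin (cut b) (-(K:ℂ) - s)) with hH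
  have hE := abstract_forward_entire K ε ha hb
  have hHd : Differentiable ℂ H := hF.sub hE.1
  set h1 := indicator (Ioc 0 1) (defect K ε a b c0 c1 d0 d1) with hh1
  set h2 := indicator (Ioc 0 1) (defect K ε⁻¹ b a d0 d1 c0 c1) with hh2
  have m1 : ∀ s : ℂ, σ < s.re → HasMellin h1 s (H s) := by
    intro s hs
    have := defect_mellin hσ K ε ha hb c0 c1 d0 d1 hs
    refine ⟨this.1, this.2.trans ?_⟩
    obtain ⟨g1, g2, g3, g4⟩ := good s hs
    simp only [hH]
    rw [hFL s g1 g2 g3 g4, hLf s hs]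
    ring
  have m2 : ∀ s : ℂ, s.re < -K - σ → H s = ε * mellin h2 (-(K:ℂ) - s) := by
    intro s hs
    have hs' : σ < (-(K:ℂ) - s).re := by simp; linarith
    have := (defect_mellin hσ K ε⁻¹ hb ha d0 d1 c0 c1 hs').2
    rw [this]
    obtain ⟨g1, g2, g3, g4⟩ := bad s hs
    simp only [hH]
    rw [hFL s g1 g2 g3 g4, hfe s, corr_symm K hε, hLg _ hs',
      show -(K:ℂ) - (-(K:ℂ) - s) = s by ring]
    have : ∀ x, ε * (ε⁻¹ * x) = x := by intro x; field_simp
    rw [mul_sub, mul_add, mul_sub, this]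
    ring
  obtain ⟨M1, hM1⟩ := low_bdd (b := defect K ε a b c0 c1 d0 d1) (x := σ + 1)
    (m1 _ (by simp)).1
  obtain ⟨M2, hM2⟩ := low_bdd (b := defect K ε⁻¹ b a d0 d1 c0 c1) (x := σ + 1)
    (defect_mellin hσ K ε⁻¹ hb ha d0 d1 c0 c1 (by simp)).1
  obtain ⟨M3, hM3⟩ := hFb (-K - σ - 1) (σ + 1)
  obtain ⟨M4, hM4⟩ := hE.2 (-K - σ - 1) (σ + 1)
  have hbdd : Bornology.IsBounded (range H) := by
    rw [isBounded_iff_forall_norm_le]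
    refine ⟨max M1 (max (‖ε‖ * M2) (M3 + M4)), ?_⟩
    rintro _ ⟨s, rfl⟩
    by_cases q1 : σ + 1 ≤ s.re
    · refine le_trans ?_ (le_max_left _ _)
      rw [← (m1 s (by linarith)).2]
      exact hM1 s q1
    · refine le_trans ?_ (le_max_right _ _)
      by_cases q2 : s.re < -K - σ - 1
      · refine le_trans ?_ (le_max_left _ _)
        rw [m2 s (by linarith), norm_mul]
        gcongr
        apply hM2
        simp; linarith
      · refine le_trans ?_ (le_max_right _ _)
        exact (norm_sub_le _ _).trans (add_le_add (hM3 s (by linarith) (by linarith))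
          (hM4 s (by linarith) (by linarith)))
  have hconst := hHd.apply_eq_apply_of_bounded hbdd
  intro x hx
  set h3 : ℝ → ℂ := fun t => h1 t - (t:ℂ) ^ (1:ℂ) • h1 t with hh3
  have m3 : ∀ s : ℂ, σ < s.re → HasMellin h3 s 0 := by
    intro s hs
    have p1 := m1 s hs
    have p2 := m1 (s + 1) (by simp; linarith)
    have p3 := hasMellin_sub p1.1 (MellinConvergent.cpow_smul.2 p2.1)
    refine ⟨p3.1, p3.2.trans ?_⟩
    rw [mellin_cpow_smul, p1.2, p2.2, hconst s (s+1), sub_self]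
  have hz : (fun y : ℝ => mellin h3 (((σ + 1 : ℝ) : ℂ) + y * I)) = fun _ => 0 := by
    funext y
    exact (m3 _ (by simp)).2
  have hcont : ContinuousAt h3 x := by
    have hd : ContinuousAt (defect K ε a b c0 c1 d0 d1) x :=
      (defect_cont K ε ha hb c0 c1 d0 d1).continuousAt (Ioi_mem_nhds hx.1)
    have : ContinuousAt h1 x := by
      refine hd.congr ?_
      filter_upwards [Ioo_mem_nhds hx.1 hx.2] with t ht
      rw [hh1, indicator_of_mem (show t ∈ Ioc (0:ℝ) 1 from ⟨ht.1, ht.2.le⟩)]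
    simp only [hh3, cpow_one]
    fun_prop
  have inv := mellinInv_mellin_eq (σ + 1) h3 hx.1 (m3 _ (by simp)).1
    (by unfold VerticalIntegrable; rw [hz]; exact integrable_zero _ _ _) hcont
  have hz' : ∀ y : ℝ, mellin h3 (((σ + 1 : ℝ) : ℂ) + y * I) = 0 := fun y => congrFun hz y
  rw [mellinInv] at inv
  simp only [hz', smul_zero, integral_zero] at inv
  simp only [hh3, hh1, indicator_of_mem (show x ∈ Ioc (0:ℝ) 1 from ⟨hx.1, hx.2.le⟩), cpow_one,
    smul_eq_mul] at inv
  have hx1 : (1 - (x:ℂ)) ≠ 0 := by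
    rw [sub_ne_zero]
    intro h
    have := hx.2
    norm_cast at h
    linarith
  refine (mul_eq_zero.1 (?_ : (1 - (x:ℂ)) * _ = 0)).resolve_left hx1
  rw [sub_mul, one_mul]
  exact inv.symm

theorem abstract_hecke {σ : ℝ} (hσ : 1 ≤ σ) (K : ℕ) {ε : ℂ} (hε : ε ≠ 0) {a b : ℝ → ℂ}
    (ha : IsTail σ a) (hb : IsTail σ b) (c0 c1 d0 d1 : ℂ) :
    (∀ t : ℝ, 0 < t → full K a c0 c1 t = ε * (t:ℂ) ^ K * full K b d0 d1 t⁻¹) ↔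
    ∃ Lf Lg : ℂ → ℂ, (∀ s : ℂ, σ < s.re → Lf s = mellin a s) ∧
      (∀ s : ℂ, σ < s.re → Lg s = mellin b s) ∧
      (∀ s : ℂ, Lf s = ε * Lg (((-(K:ℤ) : ℤ) : ℂ) - s)) ∧
      EntireBddCorrected (-(K:ℤ)) Lf (corr K ε c0 c1 d0 d1) ∧
      EntireBddCorrected (-(K:ℤ)) Lg (corr K ε⁻¹ d0 d1 c0 c1) := by
  have hkc : ((-(K:ℤ) : ℤ) : ℂ) = -(K:ℂ) := by push_cast; rfl
  simp only [EntireBddCorrected, hkc]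
  constructor
  · intro h
    have hd : ∀ t : ℝ, 0 < t → defect K ε a b c0 c1 d0 d1 t = 0 := by
      intro t ht; rw [defect, h t ht, sub_self]
    have hd' : ∀ t : ℝ, 0 < t → defect K ε⁻¹ b a d0 d1 c0 c1 t = 0 := by
      intro t ht
      rw [defect_swap K (inv_ne_zero hε) _ _ _ _ _ _ ht, inv_inv, hd _ (inv_pos.2 ht)]
      simp
    have gen : ∀ (ε : ℂ) (a b : ℝ → ℂ) (_ : IsTail σ a) (_ : IsTail σ b) (c0 c1 d0 d1 : ℂ),
        (∀ t : ℝ, 0 < t → defect K ε a b c0 c1 d0 d1 t = 0) → ∀ s : ℂ, σ < s.re →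
        mellin (cut a) s + ε * mellin (cut b) (-(K:ℂ) - s) - corr K ε c0 c1 d0 d1 s
          = mellin a s := by
      intro ε a b ha hb c0 c1 d0 d1 hz s hs
      have := (defect_mellin hσ K ε ha hb c0 c1 d0 d1 hs).2
      have h0 : indicator (Ioc 0 1) (defect K ε a b c0 c1 d0 d1) = fun _ => 0 := by
        funext t
        by_cases ht : t ∈ Ioc (0:ℝ) 1
        · rw [indicator_of_mem ht, hz t ht.1]
        · rw [indicator_of_notMem ht]
      rw [h0] at this
      simp only [mellin, smul_zero, integral_zero] at this
      simp only [mellin]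
      linear_combination this
    have E1 := abstract_forward_entire K ε ha hb
    have E2 := abstract_forward_entire K ε⁻¹ hb ha
    refine ⟨fun s => mellin (cut a) s + ε * mellin (cut b) (-(K:ℂ) - s) - corr K ε c0 c1 d0 d1 s,
      fun s => mellin (cut b) s + ε⁻¹ * mellin (cut a) (-(K:ℂ) - s) - corr K ε⁻¹ d0 d1 c0 c1 s,
      gen _ _ _ ha hb _ _ _ _ hd, gen _ _ _ hb ha _ _ _ _ hd', ?_,
      ⟨_, E1.1, E1.2, ?_⟩, ⟨_, E2.1, E2.2, ?_⟩⟩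
    · intro s
      beta_reduce
      rw [corr_symm K hε, show -(K:ℂ) - (-(K:ℂ) - s) = s by ring]
      have : ∀ x, ε * (ε⁻¹ * x) = x := by intro x; field_simp
      rw [mul_sub, mul_add, this]
      ring
    · intros; ring
    · intros; ring
  · rintro ⟨Lf, Lg, h1, h2, h3, ⟨F, F1, F2, F3⟩, ⟨G, G1, G2, G3⟩⟩
    have h3' : ∀ s, Lg s = ε⁻¹ * Lf (-(K:ℂ) - s) := by
      intro s
      rw [h3, show -(K:ℂ) - (-(K:ℂ) - s) = s by ring]
      field_simp
    have A := abstract_half hσ K hε ha hb c0 c1 d0 d1 h1 h2 h3 F1 F2 F3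
    have B := abstract_half hσ K (inv_ne_zero hε) hb ha d0 d1 c0 c1 h2 h1 h3' G1 G2 G3
    have hc := defect_cont K ε ha hb c0 c1 d0 d1
    have D : ∀ t : ℝ, 0 < t → defect K ε a b c0 c1 d0 d1 t = 0 := by
      intro t ht
      rcases lt_trichotomy t 1 with q | q | q
      · exact A t ⟨ht, q⟩
      · subst q
        have c1 := (hc.continuousAt (Ioi_mem_nhds ht)).tendsto.mono_left
          (nhdsWithin_le_nhds (s := Iio 1))
        refine tendsto_nhds_unique c1 (tendsto_const_nhds.congr' ?_)
        filter_upwards [Ioo_mem_nhdsLT (zero_lt_one (α := ℝ))] with t ht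
        exact (A t ht).symm
      · rw [defect_swap K hε _ _ _ _ _ _ ht, B _ ⟨inv_pos.2 ht, inv_lt_one_of_one_lt₀ q⟩]
        simp
    intro t ht
    exact sub_eq_zero.1 (D t ht)

end PartA

section PartB

lemma IsTail.add {σ : ℝ} {a b : ℝ → ℂ} (ha : IsTail σ a) (hb : IsTail σ b) :
    IsTail σ (fun t => a t + b t) := by
  refine ⟨ha.1.add hb.1, fun β hβ => ?_⟩
  obtain ⟨C, hC⟩ := ha.2 β hβ
  obtain ⟨D, hD⟩ := hb.2 β hβ
  refine ⟨C + D, fun t ht => (norm_add_le _ _).trans ?_⟩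
  rw [add_mul]
  exact add_le_add (hC t ht) (hD t ht)

lemma IsTail.const_mul {σ : ℝ} {a : ℝ → ℂ} (ha : IsTail σ a) (c : ℂ) :
    IsTail σ (fun t => c * a t) := by
  refine ⟨continuousOn_const.mul ha.1, fun β hβ => ?_⟩
  obtain ⟨C, hC⟩ := ha.2 β hβ
  refine ⟨‖c‖ * C, fun t ht => ?_⟩
  rw [norm_mul, mul_assoc]
  exact mul_le_mul_of_nonneg_left (hC t ht) (norm_nonneg _)

lemma IsTail.zero (σ : ℝ) : IsTail σ (fun _ => 0) :=
  ⟨continuousOn_const, fun β _ => ⟨0, fun t _ => by simp⟩⟩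

lemma IsTail.sum {σ : ℝ} {ι : Type} (S : Finset ι) {a : ι → ℝ → ℂ} (ha : ∀ i ∈ S, IsTail σ (a i)) :
    IsTail σ (fun t => ∑ i ∈ S, a i t) := by
  classical
  induction S using Finset.induction_on with
  | empty => simpa using IsTail.zero σ
  | insert i S hi ih =>
    simp only [Finset.sum_insert hi]
    exact (ha i (by simp)).add (ih fun j hj => ha j (by simp [hj]))

/-- q-series -/
def qS (c : ℕ → ℂ) (τ : ℂ) : ℂ := ∑' n : ℕ, c (n + 1) * exp (2 * Real.pi * I * (n + 1) * τ)

/-- Multiply coefficients by `n^j`. -/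
def nmul (j : ℕ) (c : ℕ → ℂ) : ℕ → ℂ := fun n => (n : ℂ) ^ j * c n

lemma CoeffBound.nmul {α : ℝ} {c : ℕ → ℂ} (h : CoeffBound α c) (j : ℕ) :
    CoeffBound (α + j) (nmul j c) := by
  obtain ⟨C, hC⟩ := h
  refine ⟨C, fun n hn => ?_⟩
  have hn' : (0:ℝ) < n := by exact_mod_cast hn
  have := hC n hn
  rw [_root_.nmul, norm_mul, norm_pow, Complex.norm_natCast, Real.rpow_add hn', Real.rpow_natCast]
  have h2 : (0:ℝ) ≤ (n:ℝ) ^ j := by positivity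
  nlinarith [mul_le_mul_of_nonneg_left this h2]

lemma exp_neg_le_rpow {β x : ℝ} (hβ : 0 < β) (hx : 0 < x) :
    Real.exp (-x) ≤ β ^ β * x ^ (-β) := by
  have h1 : x / β ≤ Real.exp (x / β) := by linarith [Real.add_one_le_exp (x / β)]
  have h2 : (x / β) ^ β ≤ Real.exp x := by
    calc (x / β) ^ β ≤ (Real.exp (x / β)) ^ β := Real.rpow_le_rpow (by positivity) h1 hβ.le
      _ = Real.exp x := by rw [← Real.exp_mul]; congr 1; field_simp
  rw [Real.exp_neg, Real.rpow_neg hx.le]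
  rw [Real.div_rpow hx.le hβ.le] at h2
  have p1 : 0 < x ^ β := by positivity
  have p2 : 0 < β ^ β := by positivity
  rw [div_le_iff₀ p2] at h2
  rw [inv_le_iff_one_le_mul₀ (Real.exp_pos x), ← div_eq_mul_inv, div_mul_eq_mul_div, le_div_iff₀ p1]
  linarith

lemma norm_qterm (n : ℕ) (τ : ℂ) :
    ‖exp (2 * Real.pi * I * (n + 1) * τ)‖ = Real.exp (-(2 * Real.pi * (n + 1) * τ.im)) := by
  rw [Complex.norm_exp]
  congr 1
  have : 2 * Real.pi * I * (n + 1) * τ = ((2 * Real.pi * (n+1) : ℝ) : ℂ) * (I * τ) := by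
    push_cast; ring
  rw [this, re_ofReal_mul]
  simp

lemma qterm_bound {α β : ℝ} {c : ℕ → ℂ} (h : CoeffBound α c) (hβ : 0 < β) :
    ∃ C : ℝ, 0 ≤ C ∧ ∀ τ : ℂ, 0 < τ.im → ∀ n : ℕ,
      ‖c (n + 1) * exp (2 * Real.pi * I * (n + 1) * τ)‖
        ≤ C * ((n:ℝ) + 1) ^ (α - β) * τ.im ^ (-β) := by
  obtain ⟨C, hC⟩ := h
  have hC0 : 0 ≤ C := by
    have := (norm_nonneg _).trans (hC 1 le_rfl); simpa using this
  refine ⟨C * (β ^ β * (2 * Real.pi) ^ (-β)), by positivity, fun τ hτ n => ?_⟩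
  have hn : (0:ℝ) < (n:ℝ) + 1 := by positivity
  have hp : 0 < 2 * Real.pi := by positivity
  have h1 := hC (n + 1) (by omega)
  have h2 := exp_neg_le_rpow hβ (x := 2 * Real.pi * (n + 1) * τ.im) (by positivity)
  rw [Real.mul_rpow (by positivity) hτ.le, Real.mul_rpow hp.le hn.le] at h2
  rw [norm_mul, norm_qterm]
  push_cast at h1
  refine (mul_le_mul h1 h2 (by positivity) (by positivity)).trans (le_of_eq ?_)
  rw [sub_eq_add_neg, Real.rpow_add hn]
  ring

lemma summable_shift_rpow {x : ℝ} (hx : x < -1) : Summable fun n : ℕ => ((n:ℝ) + 1) ^ x := by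
  have := (summable_nat_add_iff 1).2 (Real.summable_nat_rpow.2 hx)
  simpa using this

lemma summable_qterm {α : ℝ} {c : ℕ → ℂ} (h : CoeffBound α c) {τ : ℂ} (hτ : 0 < τ.im) :
    Summable fun n : ℕ => c (n + 1) * exp (2 * Real.pi * I * (n + 1) * τ) := by
  obtain ⟨C, hC, hb⟩ := qterm_bound h (β := |α| + 2) (by positivity)
  refine Summable.of_norm_bounded ?_ (hb τ hτ)
  exact ((summable_shift_rpow (by linarith [le_abs_self α])).mul_left C).mul_right _

lemma qS_bound {α β : ℝ} {c : ℕ → ℂ} (h : CoeffBound α c) (hβ0 : 0 < β) (hβ : α + 1 < β) :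
    ∃ C : ℝ, ∀ τ : ℂ, 0 < τ.im → ‖qS c τ‖ ≤ C * τ.im ^ (-β) := by
  obtain ⟨C, hC, hb⟩ := qterm_bound h hβ0
  have hs := summable_shift_rpow (x := α - β) (by linarith)
  refine ⟨C * ∑' n : ℕ, ((n:ℝ) + 1) ^ (α - β), fun τ hτ => ?_⟩
  rw [← tsum_mul_left, ← tsum_mul_right]
  exact tsum_of_norm_bounded ((hs.mul_left C).mul_right _).hasSum (hb τ hτ)

lemma qS_hasDerivAt {α : ℝ} {c : ℕ → ℂ} (h : CoeffBound α c) {τ : ℂ} (hτ : 0 < τ.im) :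
    HasDerivAt (qS c) (2 * Real.pi * I * qS (nmul 1 c) τ) τ := by
  obtain ⟨C, hC, hb⟩ := qterm_bound (h.nmul 1) (β := |α + 1| + 2) (by positivity)
  have hs := summable_shift_rpow (x := (α + (1:ℕ)) - (|α + 1| + 2))
    (by push_cast; linarith [le_abs_self (α + 1)])
  have hu := ((hs.mul_left C).mul_right ((τ.im / 2) ^ (-(|α + 1| + 2)))).mul_left (2 * Real.pi)
  have hopen : IsOpen {z : ℂ | τ.im / 2 < z.im} := isOpen_lt continuous_const continuous_im
  have hconn : IsPreconnected {z : ℂ | τ.im / 2 < z.im} :=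
    (convex_halfSpace_im_gt _).isPreconnected
  have key := hasDerivAt_tsum_of_isPreconnected (𝕜 := ℂ)
    (g := fun (n : ℕ) (z : ℂ) => c (n + 1) * exp (2 * Real.pi * I * (n + 1) * z))
    (g' := fun (n : ℕ) (z : ℂ) => 2 * Real.pi * I *
      (nmul 1 c (n + 1) * exp (2 * Real.pi * I * (n + 1) * z)))
    hu hopen hconn (y₀ := τ) (y := τ) ?_ ?_ (by simp; linarith) (summable_qterm h hτ)
    (by simp; linarith)
  · rw [tsum_mul_left] at key
    exact key
  · intro n z hz
    have h1 : HasDerivAt (fun z : ℂ => 2 * Real.pi * I * (n + 1) * z)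
      (2 * Real.pi * I * (n + 1)) z := by
      simpa using (hasDerivAt_id z).const_mul (2 * Real.pi * I * (n + 1))
    refine (h1.cexp.const_mul (c (n + 1))).congr_deriv ?_
    simp only [nmul]
    push_cast
    ring
  · intro n z hz
    have hz' : τ.im / 2 < z.im := hz
    rw [norm_mul]
    have e : ‖2 * (Real.pi : ℂ) * I‖ = 2 * Real.pi := by simp [abs_of_pos Real.pi_pos]
    rw [e]
    refine mul_le_mul_of_nonneg_left ((hb z (by linarith) n).trans ?_) (by positivity)
    refine mul_le_mul_of_nonneg_left ?_ (by positivity)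
    exact Real.rpow_le_rpow_of_nonpos (by linarith) hz'.le (by linarith [abs_nonneg (α + 1)])

lemma qS_hasSum {α : ℝ} {c : ℕ → ℂ} (h : CoeffBound α c) {y t : ℝ} (hy : 0 < y) (ht : 0 < t) :
    HasSum (fun n : ℕ => c (n + 1) * Real.exp (-(y * (n + 1)) * t))
      (qS c (I * ((y / (2 * Real.pi) * t : ℝ) : ℂ))) := by
  have h1 : 0 < (I * ((y / (2 * Real.pi) * t : ℝ) : ℂ)).im := by
    rw [I_mul_im, ofReal_re]; have := Real.pi_pos; positivity
  have h2 := (summable_qterm h h1).hasSum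
  refine Eq.mp (congrArg (fun F => HasSum F _) (funext fun n => ?_)) h2
  symm
  congr 1
  rw [ofReal_exp]
  congr 1
  have : (Real.pi : ℂ) ≠ 0 := by simp
  push_cast
  field_simp
  ring_nf
  simp

/-- the basic building block -/
def Tf (y : ℝ) (c : ℕ → ℂ) (j : ℕ) (t : ℝ) : ℂ :=
  ((y * t : ℝ) : ℂ) ^ j * qS (nmul j c) (I * ((y / (2 * Real.pi) * t : ℝ) : ℂ))

lemma Tf_tail {α y : ℝ} (hα : 0 ≤ α) {c : ℕ → ℂ} (h : CoeffBound α c) (hy : 0 < y) (j : ℕ) :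
    IsTail (α + 1) (Tf y c j) := by
  have hpi := Real.pi_pos
  have him : ∀ t : ℝ, (I * ((y / (2 * Real.pi) * t : ℝ) : ℂ)).im = y / (2 * Real.pi) * t := by
    intro t; rw [I_mul_im, ofReal_re]
  constructor
  · intro t ht
    have ht' : 0 < t := ht
    apply ContinuousAt.continuousWithinAt
    have h1 : ContinuousAt (qS (nmul j c)) (I * ((y / (2 * Real.pi) * t : ℝ) : ℂ)) :=
      (qS_hasDerivAt (h.nmul j) (by rw [him]; positivity)).continuousAt
    have h2 : ContinuousAt (fun t : ℝ => (I * ((y / (2 * Real.pi) * t : ℝ) : ℂ))) t := by fun_prop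
    have h3 := ContinuousAt.comp (f := fun t : ℝ => (I * ((y / (2 * Real.pi) * t : ℝ) : ℂ))) h1 h2
    unfold Tf
    refine ContinuousAt.mul (by fun_prop) h3
  · intro β hβ
    obtain ⟨C, hC⟩ := qS_bound (h.nmul j) (β := β + j) (by have : (0:ℝ) ≤ j := j.cast_nonneg
                                                           linarith) (by linarith)
    refine ⟨y ^ j * (C * (y / (2 * Real.pi)) ^ (-(β + j))), fun t ht => ?_⟩
    have := hC _ (by rw [him]; positivity : 0 < (I * ((y / (2 * Real.pi) * t : ℝ) : ℂ)).im)
    rw [him, Real.mul_rpow (by positivity) ht.le] at this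
    rw [Tf, norm_mul, norm_pow, norm_real, Real.norm_of_nonneg (by positivity)]
    refine (mul_le_mul_of_nonneg_left this (by positivity)).trans (le_of_eq ?_)
    rw [neg_add β, Real.rpow_add ht (-β), Real.rpow_neg ht.le (j:ℝ), Real.rpow_natCast, mul_pow]
    field_simp

lemma Tf_mellin {α y : ℝ} (hα : 0 ≤ α) {c : ℕ → ℂ} (h : CoeffBound α c) (hy : 0 < y) (j : ℕ)
    {s : ℂ} (hs : α + 1 < s.re) :
    mellin (Tf y c j) s = ((1 / y : ℝ) : ℂ) ^ s * (Gamma (s + j) * LSer c s) := by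
  have hyc : (y:ℂ) ≠ 0 := ofReal_ne_zero.2 hy.ne'
  have e1 : mellin (Tf y c j) s = (y:ℂ) ^ j *
      mellin (fun t : ℝ => qS (nmul j c) (I * ((y / (2 * Real.pi) * t : ℝ) : ℂ))) (s + j) := by
    rw [← mellin_cpow_smul, ← smul_eq_mul ((y:ℂ)^j), ← mellin_const_smul]
    congr 1
    funext t
    rw [Tf]
    simp only [smul_eq_mul, cpow_natCast]
    push_cast
    ring
  have hsj : (s + j).re = s.re + j := by simp
  have hj : (0:ℝ) ≤ j := j.cast_nonneg
  have hsum : Summable fun n : ℕ => ‖nmul j c (n + 1)‖ / (y * ((n:ℝ) + 1)) ^ (s + j).re := by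
    obtain ⟨C, hC⟩ := h.nmul j
    have := ((summable_shift_rpow (x := α - s.re) (by linarith)).mul_left C).mul_right
      (y ^ (-(s.re + j)))
    refine Summable.of_nonneg_of_le (fun n => by positivity) (fun n => ?_) this
    have hn : (0:ℝ) < (n:ℝ) + 1 := by positivity
    have h1 := hC (n + 1) (by omega)
    push_cast at h1
    rw [hsj, Real.mul_rpow hy.le hn.le, Real.rpow_neg hy.le, div_le_iff₀ (by positivity)]
    refine h1.trans (le_of_eq ?_)
    have : ((n:ℝ) + 1) ^ (α + j) = ((n:ℝ) + 1) ^ (α - s.re) * ((n:ℝ) + 1) ^ (s.re + j) := by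
      rw [← Real.rpow_add hn]; congr 1; ring
    rw [this]
    have : y ^ (s.re + j) ≠ 0 := by positivity
    field_simp
  have key := hasSum_mellin (a := fun n : ℕ => nmul j c (n + 1)) (p := fun n => y * ((n:ℝ) + 1))
    (s := s + j) (fun i => Or.inr (by positivity)) (by rw [hsj]; linarith)
    (fun t ht => qS_hasSum (h.nmul j) hy ht) hsum
  rw [e1, ← key.tsum_eq, LSer, ← tsum_mul_left, ← tsum_mul_left, ← tsum_mul_left]
  congr 1
  funext n
  have hn : (0:ℝ) < (n:ℝ) + 1 := by positivity
  have hnc : ((n:ℂ) + 1) ≠ 0 := by exact_mod_cast hn.ne'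
  have e2 : (((y * ((n:ℝ) + 1) : ℝ)) : ℂ) ^ (s + j) = (y:ℂ) ^ s * (y:ℂ) ^ j *
      (((n:ℂ) + 1) ^ s * ((n:ℂ) + 1) ^ j) := by
    rw [ofReal_mul, mul_cpow_ofReal_nonneg hy.le hn.le, cpow_add _ _ hyc, cpow_natCast]
    push_cast
    rw [cpow_add _ _ hnc, cpow_natCast]
  have e3 : ((1 / y : ℝ) : ℂ) ^ s = ((y:ℂ) ^ s)⁻¹ := by
    rw [one_div, ofReal_inv, inv_cpow]
    rw [arg_ofReal_of_nonneg hy.le]; exact Real.pi_pos.ne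
  have p1 : (y:ℂ) ^ s ≠ 0 := by simp [cpow_eq_zero_iff, hyc]
  have p2 : ((n:ℂ) + 1) ^ s ≠ 0 := by simp [cpow_eq_zero_iff, hnc]
  simp only [nmul]
  rw [e2, e3]
  push_cast
  field_simp

end PartB

section PartC

lemma castK (K : ℕ) : ((1 - -(K:ℤ) : ℤ) : ℝ) = K + 1 := by push_cast; ring

lemma expsum_deriv (K : ℕ) (x : ℝ) :
    HasDerivAt (fun t : ℝ => ∑ j ∈ Finset.range (K + 1), t ^ j / (j.factorial : ℝ))
      (∑ j ∈ Finset.range K, x ^ j / (j.factorial : ℝ)) x := by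
  have h : HasDerivAt (fun t : ℝ => ∑ j ∈ Finset.range (K + 1), t ^ j / (j.factorial : ℝ))
      (∑ j ∈ Finset.range (K + 1), (j * x ^ (j - 1)) / (j.factorial : ℝ)) x :=
    HasDerivAt.fun_sum fun j _ => (hasDerivAt_pow j x).div_const _
  refine h.congr_deriv ?_
  rw [Finset.sum_range_succ']
  simp only [Nat.cast_zero, zero_mul, zero_div, add_zero, Nat.add_sub_cancel]
  refine Finset.sum_congr rfl fun j _ => ?_
  rw [Nat.factorial_succ]
  have : (j.factorial : ℝ) ≠ 0 := by exact_mod_cast j.factorial_ne_zero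
  have : (j : ℝ) + 1 ≠ 0 := by positivity
  push_cast
  field_simp

lemma incGamma_nat (K : ℕ) {x : ℝ} (hx : 0 ≤ x) :
    incGamma (K + 1) x
      = (K.factorial : ℝ) * Real.exp (-x) *
        ∑ j ∈ Finset.range (K + 1), x ^ j / (j.factorial : ℝ) := by
  have hK : (K.factorial : ℝ) ≠ 0 := by exact_mod_cast K.factorial_ne_zero
  have hd : ∀ t ∈ Ici x, HasDerivAt (fun t : ℝ => -((K.factorial : ℝ) * Real.exp (-t) *
        ∑ j ∈ Finset.range (K + 1), t ^ j / (j.factorial : ℝ)))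
      (Real.exp (-t) * t ^ ((K:ℝ) + 1 - 1)) t := by
    intro t _
    have h1 : HasDerivAt (fun t : ℝ => Real.exp (-t)) (-Real.exp (-t)) t := by
      simpa using (hasDerivAt_neg t).exp
    refine ((h1.const_mul _).mul (expsum_deriv K t)).neg.congr_deriv ?_
    rw [Finset.sum_range_succ, add_sub_cancel_right, Real.rpow_natCast]
    field_simp
    ring
  have hi : IntegrableOn (fun t : ℝ => Real.exp (-t) * t ^ ((K:ℝ) + 1 - 1)) (Ioi x) :=
    (Real.GammaIntegral_convergent (s := (K:ℝ) + 1) (by positivity)).mono_set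
      (Ioi_subset_Ioi hx)
  have ht : Tendsto (fun t : ℝ => -((K.factorial : ℝ) * Real.exp (-t) *
        ∑ j ∈ Finset.range (K + 1), t ^ j / (j.factorial : ℝ))) atTop (𝓝 0) := by
    have h1 : ∀ j ∈ Finset.range (K + 1), Tendsto (fun t : ℝ =>
        -((K.factorial : ℝ) / (j.factorial : ℝ)) * (t ^ j * Real.exp (-t))) atTop (𝓝 0) := by
      intro j _
      simpa using (Real.tendsto_pow_mul_exp_neg_atTop_nhds_zero j).const_mul
        (-((K.factorial : ℝ) / (j.factorial : ℝ)))
    have h2 := tendsto_finsetSum _ h1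
    simp only [Finset.sum_const_zero] at h2
    refine h2.congr fun t => ?_
    rw [Finset.mul_sum, ← Finset.sum_neg_distrib]
    refine Finset.sum_congr rfl fun j _ => ?_
    ring
  rw [incGamma, integral_Ioi_of_hasDerivAt_of_tendsto' hd hi ht]
  ring

lemma Wnu_nat (K : ℕ) {s : ℂ} (hs : 0 < s.re) :
    Wnu (K + 1) s = ∑ j ∈ Finset.range (K + 1),
      (K.factorial : ℂ) * 2 ^ j / (j.factorial : ℂ) * Gamma (s + j) := by
  have hre : ∀ j : ℕ, 0 < (s + j).re := by
    intro j; simp; have : (0:ℝ) ≤ j := j.cast_nonneg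
    linarith
  have e : ∀ x ∈ Ioi (0:ℝ), ((incGamma (K + 1) (2 * x) * Real.exp x : ℝ) : ℂ) * (x : ℂ) ^ (s - 1)
      = ∑ j ∈ Finset.range (K + 1), (K.factorial : ℂ) * 2 ^ j / (j.factorial : ℂ) *
        (((Real.exp (-x) : ℝ) : ℂ) * (x : ℂ) ^ (s + j - 1)) := by
    intro x hx
    have hx0 : (0:ℝ) < x := hx
    have hxc : (x:ℂ) ≠ 0 := ofReal_ne_zero.2 hx0.ne'
    have e0 : Real.exp (-(2 * x)) = Real.exp (-x) * Real.exp (-x) := by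
      rw [← Real.exp_add]; congr 1; ring
    have e1 : Real.exp (-x) * Real.exp x = 1 := by rw [← Real.exp_add]; simp
    have e2 : incGamma (K + 1) (2 * x) * Real.exp x = (K.factorial : ℝ) * Real.exp (-x) *
        ∑ j ∈ Finset.range (K + 1), (2 * x) ^ j / (j.factorial : ℝ) := by
      rw [incGamma_nat K (by positivity), e0]
      linear_combination (K.factorial : ℝ) * Real.exp (-x) *
        (∑ j ∈ Finset.range (K + 1), (2 * x) ^ j / (j.factorial : ℝ)) * e1
    rw [e2]
    push_cast
    rw [Finset.mul_sum, Finset.sum_mul]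
    refine Finset.sum_congr rfl fun j _ => ?_
    rw [show s + j - 1 = (s - 1) + j by ring, cpow_add _ _ hxc, cpow_natCast, mul_pow]
    ring
  rw [Wnu, setIntegral_congr_fun measurableSet_Ioi e, integral_finsetSum]
  · refine Finset.sum_congr rfl fun j _ => ?_
    rw [integral_const_mul, Gamma_eq_integral (hre j)]
    rfl
  · intro j _
    exact (GammaIntegral_convergent (hre j)).const_mul _

/-- tail of `f` along the imaginary axis -/
def tailL (K : ℕ) (y : ℝ) (cp cm : ℕ → ℂ) (t : ℝ) : ℂ :=
  Tf y cp 0 t + ∑ j ∈ Finset.range (K + 1),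
    (K.factorial : ℂ) * 2 ^ j / (j.factorial : ℂ) * Tf y cm j t

/-- tail of the derivative -/
def tailX (K : ℕ) (y : ℝ) (cp cm : ℕ → ℂ) (t : ℝ) : ℂ :=
  Tf y cp 1 t + (-1) * ∑ j ∈ Finset.range (K + 1),
    (K.factorial : ℂ) * 2 ^ j / (j.factorial : ℂ) * Tf y cm (j + 1) t

/-- tail for Omega -/
def tailO (K : ℕ) (y : ℝ) (cp cm : ℕ → ℂ) (t : ℝ) : ℂ :=
  (-2) * tailX K y cp cm t + (-(K:ℂ)) * tailL K y cp cm t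

section
variable {α y : ℝ} {cp cm : ℕ → ℂ}

lemma tailL_tail (hα : 0 ≤ α) (hp : CoeffBound α cp) (hm : CoeffBound α cm) (hy : 0 < y) (K : ℕ) :
    IsTail (α + 1) (tailL K y cp cm) :=
  (Tf_tail hα hp hy 0).add (IsTail.sum _ fun j _ => (Tf_tail hα hm hy j).const_mul _)

lemma tailX_tail (hα : 0 ≤ α) (hp : CoeffBound α cp) (hm : CoeffBound α cm) (hy : 0 < y) (K : ℕ) :
    IsTail (α + 1) (tailX K y cp cm) :=
  (Tf_tail hα hp hy 1).add
    ((IsTail.sum _ fun j _ => (Tf_tail hα hm hy (j + 1)).const_mul _).const_mul _)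

lemma tailO_tail (hα : 0 ≤ α) (hp : CoeffBound α cp) (hm : CoeffBound α cm) (hy : 0 < y) (K : ℕ) :
    IsTail (α + 1) (tailO K y cp cm) :=
  ((tailX_tail hα hp hm hy K).const_mul _).add ((tailL_tail hα hp hm hy K).const_mul _)

lemma mellin_add_tail {σ : ℝ} {a b : ℝ → ℂ} (ha : IsTail σ a) (hb : IsTail σ b) {s : ℂ}
    (hs : σ < s.re) : mellin (fun t => a t + b t) s = mellin a s + mellin b s :=
  (hasMellin_add (ha.mellinConvergent hs) (hb.mellinConvergent hs)).2

lemma mellin_cmul (a : ℝ → ℂ) (c s : ℂ) : mellin (fun t => c * a t) s = c * mellin a s := by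
  simpa using mellin_const_smul a s c

lemma mellin_sum_tail {σ : ℝ} {ι : Type} (S : Finset ι) {a : ι → ℝ → ℂ}
    (ha : ∀ i ∈ S, IsTail σ (a i)) {s : ℂ} (hs : σ < s.re) :
    mellin (fun t => ∑ i ∈ S, a i t) s = ∑ i ∈ S, mellin (a i) s := by
  classical
  induction S using Finset.induction_on with
  | empty => simp [mellin]
  | insert i S hi ih =>
    simp only [Finset.sum_insert hi]
    rw [mellin_add_tail (ha i (by simp)) (IsTail.sum S fun j hj => ha j (by simp [hj])) hs,
      ih fun j hj => ha j (by simp [hj])]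

lemma tailL_mellin (hα : 0 ≤ α) (hp : CoeffBound α cp) (hm : CoeffBound α cm) (hy : 0 < y) (K : ℕ)
    {s : ℂ} (hs : α + 1 < s.re) : mellin (tailL K y cp cm) s =
      ((1 / y : ℝ) : ℂ) ^ s * (Gamma s * LSer cp s + Wnu (K + 1) s * LSer cm s) := by
  have t1 := Tf_tail hα hp hy 0
  have t2 : ∀ j ∈ Finset.range (K + 1), IsTail (α + 1) (fun t =>
    (K.factorial : ℂ) * 2 ^ j / (j.factorial : ℂ) * Tf y cm j t) :=
    fun j _ => (Tf_tail hα hm hy j).const_mul _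
  unfold tailL
  rw [mellin_add_tail t1 (IsTail.sum _ t2) hs, mellin_sum_tail _ t2 hs, Tf_mellin hα hp hy 0 hs,
    Wnu_nat K (by linarith), Finset.sum_mul, mul_add, Finset.mul_sum]
  congr 1
  · simp
  · refine Finset.sum_congr rfl fun j _ => ?_
    rw [mellin_cmul, Tf_mellin hα hm hy j hs]
    ring

lemma tailX_mellin (hα : 0 ≤ α) (hp : CoeffBound α cp) (hm : CoeffBound α cm) (hy : 0 < y) (K : ℕ)
    {s : ℂ} (hs : α + 1 < s.re) : mellin (tailX K y cp cm) s =
      ((1 / y : ℝ) : ℂ) ^ s * (Gamma (s + 1) * LSer cp s - Wnu (K + 1) (s + 1) * LSer cm s) := by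
  have t1 := Tf_tail hα hp hy 1
  have t2 : ∀ j ∈ Finset.range (K + 1), IsTail (α + 1) (fun t =>
    (K.factorial : ℂ) * 2 ^ j / (j.factorial : ℂ) * Tf y cm (j + 1) t) :=
    fun j _ => (Tf_tail hα hm hy (j + 1)).const_mul _
  unfold tailX
  rw [mellin_add_tail t1 ((IsTail.sum _ t2).const_mul _) hs, mellin_cmul, mellin_sum_tail _ t2 hs,
    Tf_mellin hα hp hy 1 hs,
    Wnu_nat K (by simp; linarith), Finset.sum_mul, mul_sub, Finset.mul_sum, Finset.mul_sum,
    sub_eq_add_neg, ← Finset.sum_neg_distrib]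
  congr 1
  · simp
  · refine Finset.sum_congr rfl fun j _ => ?_
    rw [mellin_cmul, Tf_mellin hα hm hy (j + 1) hs,
      show s + ((j + 1 : ℕ) : ℂ) = s + 1 + j by push_cast; ring]
    ring

lemma yinv (N : ℕ) : (((1:ℕ):ℝ) * Real.sqrt N / (2 * Real.pi)) = 1 / (2 * Real.pi / Real.sqrt N) := by
  rw [one_div_div]; simp

lemma tailL_Lambda (hα : 0 ≤ α) (hp : CoeffBound α cp) (hm : CoeffBound α cm) {N : ℕ} (hN : 1 ≤ N)
    (K : ℕ) {s : ℂ} (hs : α + 1 < s.re) :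
    mellin (tailL K (2 * Real.pi / Real.sqrt N) cp cm) s = LambdaN N (-(K:ℤ)) 1 cp cm s := by
  have hN' : (0:ℝ) < N := by exact_mod_cast hN
  have := Real.pi_pos
  rw [tailL_mellin hα hp hm (by positivity) K hs, LambdaN, yinv, castK]

lemma tailO_Omega (hα : 0 ≤ α) (hp : CoeffBound α cp) (hm : CoeffBound α cm) {N : ℕ} (hN : 1 ≤ N)
    (K : ℕ) {s : ℂ} (hs : α + 1 < s.re) :
    mellin (tailO K (2 * Real.pi / Real.sqrt N) cp cm) s = OmegaN N (-(K:ℤ)) 1 cp cm s := by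
  have hN' : (0:ℝ) < N := by exact_mod_cast hN
  have := Real.pi_pos
  have hy : 0 < 2 * Real.pi / Real.sqrt N := by positivity
  unfold tailO
  rw [mellin_add_tail ((tailX_tail hα hp hm hy K).const_mul _)
    ((tailL_tail hα hp hm hy K).const_mul _) hs, mellin_cmul, mellin_cmul,
    tailL_Lambda hα hp hm hN K hs, tailX_mellin hα hp hm hy K hs, OmegaN, XiN, yinv, castK]
  push_cast
  rfl
end

end PartC

section PartD

/-- `f` is real differentiable at `τ` with Wirtinger derivatives `a`, `b`. -/
def HasW (f : ℂ → ℂ) (a b τ : ℂ) : Prop :=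
  HasFDerivAt (𝕜 := ℝ) f (a • (1 : ℂ →L[ℝ] ℂ) + b • (conjCLE : ℂ →L[ℝ] ℂ)) τ

lemma HasW.congr {f : ℂ → ℂ} {a b a' b' τ : ℂ} (h : HasW f a b τ) (ha : a = a') (hb : b = b') :
    HasW f a' b' τ := by subst ha hb; exact h

lemma HasW.congr_fun {f f' : ℂ → ℂ} {a b τ : ℂ} (h : HasW f a b τ) (he : f' =ᶠ[𝓝 τ] f) :
    HasW f' a b τ := HasFDerivAt.congr_of_eventuallyEq h he

lemma HasW.add {f g : ℂ → ℂ} {a b c d τ : ℂ} (hf : HasW f a b τ) (hg : HasW g c d τ) :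
    HasW (fun z => f z + g z) (a + c) (b + d) τ :=
  (HasFDerivAt.add hf hg).congr_fderiv (by
    ext z; simp; try ring)

lemma HasW.sub {f g : ℂ → ℂ} {a b c d τ : ℂ} (hf : HasW f a b τ) (hg : HasW g c d τ) :
    HasW (fun z => f z - g z) (a - c) (b - d) τ :=
  (HasFDerivAt.sub hf hg).congr_fderiv (by
    ext z; simp; try ring)

lemma HasW.mul {f g : ℂ → ℂ} {a b c d τ : ℂ} (hf : HasW f a b τ) (hg : HasW g c d τ) :
    HasW (fun z => f z * g z) (a * g τ + f τ * c) (b * g τ + f τ * d) τ :=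
  (HasFDerivAt.mul hf hg).congr_fderiv (by
    ext z; simp; try ring)

lemma hasW_const (c τ : ℂ) : HasW (fun _ => c) 0 0 τ :=
  (hasFDerivAt_const (𝕜 := ℝ) c τ).congr_fderiv (by ext z; simp)

lemma HasW.const_mul {f : ℂ → ℂ} {a b τ : ℂ} (c : ℂ) (hf : HasW f a b τ) :
    HasW (fun z => c * f z) (c * a) (c * b) τ :=
  ((hasW_const c τ).mul hf).congr (by ring) (by ring)

lemma HasW.sum {ι : Type} (S : Finset ι) {f : ι → ℂ → ℂ} {a b : ι → ℂ} {τ : ℂ}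
    (h : ∀ i ∈ S, HasW (f i) (a i) (b i) τ) :
    HasW (fun z => ∑ i ∈ S, f i z) (∑ i ∈ S, a i) (∑ i ∈ S, b i) τ := by
  classical
  induction S using Finset.induction_on with
  | empty => simpa using hasW_const 0 τ
  | insert i S hi ih =>
    simp only [Finset.sum_insert hi]
    exact (h i (by simp)).add (ih fun j hj => h j (by simp [hj]))

lemma hasW_of_holo {f : ℂ → ℂ} {a τ : ℂ} (h : HasDerivAt f a τ) : HasW f a 0 τ :=
  (h.hasFDerivAt.restrictScalars ℝ).congr_fderiv (by ext z; simp; try ring)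

lemma hasW_conj (τ : ℂ) : HasW (fun z => conj z) 0 1 τ :=
  ((conjCLE : ℂ →L[ℝ] ℂ).hasFDerivAt (x := τ)).congr_fderiv (by ext z; simp)

/-- outer holomorphic -/
lemma HasW.outer {f h : ℂ → ℂ} {a b c τ : ℂ} (hf : HasW f a b τ) (hh : HasDerivAt h c (f τ)) :
    HasW (fun z => h (f z)) (c * a) (c * b) τ :=
  (HasFDerivAt.comp τ (hh.hasFDerivAt.restrictScalars ℝ) hf).congr_fderiv (by
    ext z; simp; try ring)

/-- inner holomorphic -/
lemma HasW.inner {f h : ℂ → ℂ} {a b c τ : ℂ} (hf : HasW f a b (h τ)) (hh : HasDerivAt h c τ) :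
    HasW (fun z => f (h z)) (a * c) (b * conj c) τ :=
  (HasFDerivAt.comp τ hf (hh.hasFDerivAt.restrictScalars ℝ)).congr_fderiv (by
    ext z; simp; try ring)

lemma HasW.anti {Q : ℂ → ℂ} {c τ : ℂ} (h : HasDerivAt Q c (-conj τ)) :
    HasW (fun z => Q (-conj z)) 0 (-c) τ :=
  (HasW.outer (f := fun z => -conj z) (a := 0) (b := -1)
    (((hasW_conj τ).const_mul (-1)).congr_fun (Eventually.of_forall fun z => by simp) |>.congr
      (by simp) (by simp)) h).congr (by simp) (by simp)

lemma hasW_im (τ : ℂ) : HasW (fun z => (z.im : ℂ)) (-I / 2) (I / 2) τ :=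
  ((ofRealCLM.comp imCLM).hasFDerivAt (x := τ)).congr_fderiv (by
    ext z; apply Complex.ext <;> simp <;> ring)

lemma hasW_im_pow (n : ℕ) (τ : ℂ) : HasW (fun z => (z.im : ℂ) ^ n)
    (n * (τ.im : ℂ) ^ (n - 1) * (-I / 2)) (n * (τ.im : ℂ) ^ (n - 1) * (I / 2)) τ :=
  HasW.outer (h := fun z => z ^ n) (hasW_im τ) (hasDerivAt_pow n _)

lemma HasW.unique {f : ℂ → ℂ} {a b a' b' τ : ℂ} (h : HasW f a b τ) (h' : HasW f a' b' τ) :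
    a = a' ∧ b = b' := by
  have e := HasFDerivAt.unique h h'
  have e1 := DFunLike.congr_fun e 1
  have e2 := DFunLike.congr_fun e I
  simp at e1 e2
  have e3 : a - b = a' - b' := by
    have := congrArg (fun z => -I * z) e2
    linear_combination this + (a - b - a' + b') * I_sq
  constructor
  · linear_combination (e1 + e3) / 2
  · linear_combination (e1 - e3) / 2

lemma HasW.holo {f : ℂ → ℂ} {a τ : ℂ} (h : HasW f a 0 τ) : DifferentiableAt ℂ f τ := by
  have : HasFDerivAt f (a • (1 : ℂ →L[ℂ] ℂ)) τ :=
    hasFDerivAt_of_restrictScalars ℝ h (by ext z; simp)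
  exact this.differentiableAt

/-- Vanishing on the imaginary axis. -/
lemma HasW.axis {f : ℂ → ℂ} {a b : ℂ} {t : ℝ} (ht : 0 < t) (h : HasW f a b (I * t))
    (h0 : ∀ t : ℝ, 0 < t → f (I * t) = 0) : a = b := by
  have h1 : HasDerivAt (fun s : ℝ => I * (s : ℂ)) (I * 1) t :=
    (Complex.ofRealCLM.hasDerivAt (x := t)).const_mul I
  have h2 := HasFDerivAt.comp_hasDerivAt (f := fun s : ℝ => I * (s : ℂ)) t h h1
  have h3 : HasDerivAt (f ∘ fun s : ℝ => I * (s : ℂ)) 0 t :=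
    (hasDerivAt_const t (0:ℂ)).congr_of_eventuallyEq (by
      filter_upwards [lt_mem_nhds ht] with s hs using h0 s hs)
  have e := h2.unique h3
  simp at e
  have := congrArg (fun z => -I * z) e
  linear_combination this + (a - b) * I_sq

/-- The explicit Fourier shape. -/
def mF (K : ℕ) (cp cm : ℕ → ℂ) (τ : ℂ) : ℂ :=
  cp 0 + qS cp τ + cm 0 * (τ.im : ℂ) ^ (K + 1)
    + ∑ j ∈ Finset.range (K + 1), ((K.factorial : ℂ) / (j.factorial : ℂ)) *
        ((4 * Real.pi) ^ j * ((τ.im : ℂ) ^ j * qS (nmul j cm) (-conj τ)))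

/-- `u`-derivative. -/
def mFu (K : ℕ) (cp cm : ℕ → ℂ) (τ : ℂ) : ℂ :=
  2 * Real.pi * I * qS (nmul 1 cp) τ
    + (-(2 * Real.pi * I)) * ∑ j ∈ Finset.range (K + 1), ((K.factorial : ℂ) / (j.factorial : ℂ)) *
        ((4 * Real.pi) ^ j * ((τ.im : ℂ) ^ j * qS (nmul (j + 1) cm) (-conj τ)))

/-- antiholomorphic part. -/
def mB (K : ℕ) (cm : ℕ → ℂ) (z : ℂ) : ℂ :=
  I / 2 * (K + 1) * cm 0 - 2 * Real.pi * I * (4 * Real.pi) ^ K * qS (nmul (K + 1) cm) z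

lemma nmul_nmul (i j : ℕ) (c : ℕ → ℂ) : nmul i (nmul j c) = nmul (j + i) c := by
  funext n; simp only [nmul]; rw [pow_add]; ring

variable {α : ℝ} {cp cm : ℕ → ℂ}

lemma neg_conj_im (τ : ℂ) : (-conj τ).im = τ.im := by simp

lemma mF_hasW (hp : CoeffBound α cp) (hm : CoeffBound α cm) (K : ℕ) {τ : ℂ} (hτ : 0 < τ.im) :
    HasW (mF K cp cm) (mFu K cp cm τ - (τ.im : ℂ) ^ K * mB K cm (-conj τ))
      ((τ.im : ℂ) ^ K * mB K cm (-conj τ)) τ := by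
  have hτ' : 0 < (-conj τ).im := by rw [neg_conj_im]; exact hτ
  set v : ℂ := (τ.im : ℂ) with hv
  set Q : ℕ → ℂ := fun j => qS (nmul j cm) (-conj τ) with hQ
  have hQd : ∀ j, HasW (fun z => qS (nmul j cm) (-conj z)) 0 (-(2 * Real.pi * I * Q (j+1))) τ := by
    intro j
    have := HasW.anti (qS_hasDerivAt (hm.nmul j) hτ')
    rwa [nmul_nmul] at this
  set G : ℕ → ℂ := fun j => (K.factorial : ℂ) / (j.factorial : ℂ) * j * ((4 * Real.pi) ^ j * v ^ (j-1)) * Q j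
    with hG
  have hGs : ∀ j, G (j+1) = 4 * Real.pi * ((K.factorial : ℂ) / (j.factorial : ℂ) * ((4 * Real.pi) ^ j * (v ^ j * Q (j+1)))) := by
    intro j
    have h1 : (j.factorial : ℂ) ≠ 0 := by exact_mod_cast j.factorial_ne_zero
    have h2 : ((j:ℂ) + 1) ≠ 0 := by exact_mod_cast j.succ_ne_zero
    simp only [hG, Nat.factorial_succ, Nat.add_sub_cancel]
    push_cast
    field_simp
    ring
  have hterm : ∀ j, HasW (fun z : ℂ => ((K.factorial : ℂ) / (j.factorial : ℂ)) *
        ((4 * Real.pi) ^ j * ((z.im : ℂ) ^ j * qS (nmul j cm) (-conj z))))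
        (-(I/2) * G j) (I/2 * (G j - G (j+1))) τ := by
    intro j
    refine ((((hasW_im_pow j τ).mul (hQd j)).const_mul _).const_mul _).congr ?_ ?_
    · simp only [hG]; ring
    · rw [hGs]; simp only [hG]; ring
  have hmain := (((hasW_const (cp 0) τ).add (hasW_of_holo (qS_hasDerivAt hp hτ))).add
    ((hasW_im_pow (K+1) τ).const_mul (cm 0))).add
    (HasW.sum (Finset.range (K+1)) (fun j _ => hterm j))
  have hs : ∑ j ∈ Finset.range (K+1), I/2 * (G j - G (j+1)) = - (I/2 * G (K+1)) := by
    rw [← Finset.mul_sum, Finset.sum_range_sub']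
    simp [hG]
  have hs2 : ∑ j ∈ Finset.range (K+1), -(I/2) * G j = - ∑ j ∈ Finset.range (K+1), I/2 * G (j+1)
     + I/2 * G (K+1) := by
    rw [← neg_eq_iff_eq_neg.mpr hs, ← Finset.sum_neg_distrib, ← Finset.sum_neg_distrib, ← Finset.sum_add_distrib]
    refine Finset.sum_congr rfl fun j _ => by ring
  have hGK : G (K+1) = 4 * Real.pi * ((4 * Real.pi) ^ K * (v ^ K * Q (K+1))) := by
    rw [hGs, div_self (by exact_mod_cast K.factorial_ne_zero), one_mul]
  have hb : (0:ℂ) + 0 + cm 0 * (((K+1:ℕ):ℂ) * v ^ (K + 1 - 1) * (I/2)) + ∑ j ∈ Finset.range (K+1), I/2 * (G j - G (j+1))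
      = v ^ K * mB K cm (-conj τ) := by
    rw [hs, hGK, mB, Nat.add_sub_cancel]; push_cast; simp only [hQ]; ring
  refine hmain.congr ?_ hb
  rw [← hb, hs, hs2, mFu]
  simp only [hGs]
  rw [Finset.mul_sum, ← Finset.sum_neg_distrib]
  rw [show (∑ x ∈ Finset.range (K+1), -(I / 2 * (4 * ↑Real.pi * (↑K.factorial / ↑x.factorial * ((4 * (Real.pi:ℂ)) ^ x * (v ^ x * Q (x + 1))))))) =
     ∑ j ∈ Finset.range (K + 1), (-(2 * Real.pi * I)) * (((K.factorial : ℂ) / (j.factorial : ℂ)) *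
        ((4 * Real.pi) ^ j * (v ^ j * qS (nmul (j + 1) cm) (-conj τ)))) from
     Finset.sum_congr rfl fun j _ => by simp only [hQ]; ring]
  ring

lemma mB_diff (hm : CoeffBound α cm) (K : ℕ) {z : ℂ} (hz : 0 < z.im) :
    DifferentiableAt ℂ (mB K cm) z := by
  unfold mB
  have := (qS_hasDerivAt (hm.nmul (K+1)) hz).differentiableAt
  fun_prop

lemma mF_eq (hp : CoeffBound α cp) (hm : CoeffBound α cm) (K : ℕ) {τ : ℂ} (hτ : 0 < τ.im) :
    maassSeries (-(K:ℤ)) cp cm τ = mF K cp cm τ := by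
  have hτ' : 0 < (-conj τ).im := by rw [neg_conj_im]; exact hτ
  have hS := summable_qterm hp hτ
  unfold maassSeries mF
  congr 1
  · congr 1
    · have : Summable (fun n : ℕ => cp n * Complex.exp (2 * Real.pi * Complex.I * n * τ)) := by
        rw [← summable_nat_add_iff 1]; push_cast; exact hS
      rw [this.tsum_eq_zero_add]
      simp [qS]
    · rw [show (1 - -(K:ℤ)) = ((K+1:ℕ):ℤ) by push_cast; ring, zpow_natCast]
  · have hs : ∀ j ∈ Finset.range (K+1), HasSum (fun n : ℕ => ((K.factorial : ℂ) / (j.factorial : ℂ)) *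
        ((4 * Real.pi) ^ j * ((τ.im : ℂ) ^ j * (nmul j cm (n+1) * exp (2 * Real.pi * I * (n + 1) * (-conj τ))))))
        (((K.factorial : ℂ) / (j.factorial : ℂ)) *
        ((4 * Real.pi) ^ j * ((τ.im : ℂ) ^ j * qS (nmul j cm) (-conj τ)))) := fun j _ =>
      (((summable_qterm (hm.nmul j) hτ').hasSum.mul_left _).mul_left _).mul_left _
    rw [← (hasSum_sum hs).tsum_eq]
    refine tsum_congr fun n => ?_
    rw [castK, incGamma_nat K (by positivity)]
    have he : exp (2 * Real.pi * I * (n + 1) * (-conj τ)) =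
        (Real.exp (-(4 * Real.pi * (n+1) * τ.im)) : ℂ) * exp (-(2 * Real.pi * I * (n + 1) * τ)) := by
      rw [ofReal_exp, ← Complex.exp_add]
      congr 1
      have : conj τ = τ - 2 * I * τ.im := by
        apply Complex.ext <;> simp; ring
      rw [this]; push_cast
      linear_combination (4 * Real.pi * (n+1) * τ.im : ℂ) * I_sq
    rw [he]
    push_cast
    simp only [Finset.mul_sum, Finset.sum_mul]
    refine Finset.sum_congr rfl fun j _ => ?_
    simp only [nmul]; push_cast
    rw [mul_pow, mul_pow]
    ring

end PartD

section PartE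

lemma isOpen_UHP' : IsOpen {z : ℂ | 0 < z.im} := isOpen_lt continuous_const continuous_im

lemma eq_zero_of_axis {C : ℂ → ℂ} (hC : ∀ z : ℂ, 0 < z.im → DifferentiableAt ℂ C z)
    (h0 : ∀ r : ℝ, 0 < r → C (I * r) = 0) {z : ℂ} (hz : 0 < z.im) : C z = 0 := by
  have han : AnalyticOnNhd ℂ C {z : ℂ | 0 < z.im} :=
    DifferentiableOn.analyticOnNhd (fun z hz => (hC z hz).differentiableWithinAt) isOpen_UHP'
  have hpre : IsPreconnected {z : ℂ | 0 < z.im} := (convex_halfSpace_im_gt 0).isPreconnected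
  have hfr : ∃ᶠ z in 𝓝[≠] I, C z = 0 := by
    have ht : Tendsto (fun r : ℝ => I * (r:ℂ)) (𝓝[>] 1) (𝓝[≠] I) := by
      refine tendsto_nhdsWithin_iff.mpr ⟨?_, ?_⟩
      · have : Continuous (fun r : ℝ => I * (r:ℂ)) := by fun_prop
        have h := this.tendsto 1
        simp only [ofReal_one, mul_one] at h
        exact h.mono_left nhdsWithin_le_nhds
      · filter_upwards [self_mem_nhdsWithin] with r hr
        intro h
        have h1 := congrArg Complex.im h
        simp at h1
        exact (ne_of_gt hr) h1
    refine ht.frequently (Eventually.frequently ?_)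
    filter_upwards [self_mem_nhdsWithin] with r hr
    exact h0 r (lt_trans one_pos hr)
  exact han.eqOn_zero_of_preconnected_of_frequently_eq_zero hpre (by simp) hfr hz

/-- Fricke image of the explicit shape -/
def mS (K N : ℕ) (κ : ℂ) (F : ℂ → ℂ) (τ : ℂ) : ℂ := κ * ((N * τ) ^ K * F (-1 / (N * τ)))

/-- antiholomorphic part of the Fricke image -/
def mBS (K N : ℕ) (κ : ℂ) (B : ℂ → ℂ) (z : ℂ) : ℂ :=
  κ * (((-z) ^ K)⁻¹ * (1 / (N * z ^ 2)) * B (-1 / (N * z)))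

lemma ne_zero_of_im {z : ℂ} (hz : 0 < z.im) : z ≠ 0 := by
  rintro rfl; simp at hz

lemma w_im {N : ℕ} (hN : 1 ≤ N) {τ : ℂ} (hτ : 0 < τ.im) : 0 < (-1 / (N * τ)).im := by
  have hn : (0:ℝ) < N := by exact_mod_cast hN
  have h0 := ne_zero_of_im hτ
  have h1 : 0 < normSq τ := normSq_pos.mpr h0
  rw [show (-1 / ((N:ℂ) * τ)) = ((-(1/(N:ℝ)) : ℝ):ℂ) * τ⁻¹ by
    push_cast; field_simp]
  rw [im_ofReal_mul, inv_im]
  have : -(1 / (N:ℝ)) * (-τ.im / normSq τ) = τ.im / (N * normSq τ) := by field_simp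
  rw [this]; positivity

lemma w_im_eq {N : ℕ} (hN : 1 ≤ N) {τ : ℂ} (hτ : 0 < τ.im) :
    (((-1 / (N * τ)).im : ℝ) : ℂ) = τ.im / (N * τ * conj τ) := by
  have hn : (N:ℂ) ≠ 0 := by exact_mod_cast (by omega : N ≠ 0)
  have h0 := ne_zero_of_im hτ
  rw [show (-1 / ((N:ℂ) * τ)) = ((-(1/(N:ℝ)) : ℝ):ℂ) * τ⁻¹ by
    push_cast; field_simp]
  rw [im_ofReal_mul, inv_im, mul_assoc (N:ℂ), mul_conj]
  have h1 : (normSq τ : ℂ) ≠ 0 := by exact_mod_cast (normSq_pos.mpr h0).ne'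
  push_cast
  field_simp

lemma mS_hasW {K N : ℕ} (hN : 1 ≤ N) (κ : ℂ) {F B : ℂ → ℂ} {p τ : ℂ} (hτ : 0 < τ.im)
    (hF : HasW F p (((-1 / (N * τ)).im : ℂ) ^ K * B (-conj (-1 / (N * τ)))) (-1 / (N * τ))) :
    HasW (mS K N κ F) (κ * (K * (N * τ) ^ K / τ * F (-1 / (N * τ)) + (N * τ) ^ K * (p * (1 / (N * τ ^ 2)))))
      ((τ.im : ℂ) ^ K * mBS K N κ B (-conj τ)) τ := by
  have hn : (N:ℂ) ≠ 0 := by exact_mod_cast (by omega : N ≠ 0)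
  have h0 := ne_zero_of_im hτ
  have h0' : conj τ ≠ 0 := by simpa using h0
  have hw : HasDerivAt (fun z : ℂ => -1 / (N * z)) (1 / (N * τ ^ 2)) τ := by
    have h1 : HasDerivAt (fun z : ℂ => (N:ℂ) * z) N τ := by
      simpa using (hasDerivAt_id τ).const_mul (N:ℂ)
    refine ((hasDerivAt_const τ (-1:ℂ)).div h1 (mul_ne_zero hn h0)).congr_deriv ?_
    field_simp; ring
  have hpow : HasDerivAt (fun z : ℂ => ((N:ℂ) * z) ^ K) (K * (N * τ) ^ K / τ) τ := by
    have h1 : HasDerivAt (fun z : ℂ => (N:ℂ) * z) N τ := by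
      simpa using (hasDerivAt_id τ).const_mul (N:ℂ)
    refine (h1.pow K).congr_deriv ?_
    rcases K with _ | K
    · simp
    · simp only [Nat.add_sub_cancel]; rw [pow_succ]; field_simp
  have := ((hasW_of_holo hpow).mul (HasW.inner (h := fun z : ℂ => -1 / (N * z)) hF hw)).const_mul κ
  refine this.congr rfl ?_
  rw [w_im_eq hN hτ, mBS]
  rw [show -conj (-1 / ((N:ℂ) * τ)) = -1 / (N * -conj τ) by simp; field_simp]
  rw [show conj (1 / ((N:ℂ) * τ ^ 2)) = 1 / (N * (-conj τ) ^ 2) by simp]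
  rw [neg_neg, div_pow, mul_pow, mul_pow, mul_pow]
  field_simp
  ring

lemma mBS_diff {K N : ℕ} (hN : 1 ≤ N) (κ : ℂ) {B : ℂ → ℂ}
    (hB : ∀ z : ℂ, 0 < z.im → DifferentiableAt ℂ B z) {z : ℂ} (hz : 0 < z.im) :
    DifferentiableAt ℂ (mBS K N κ B) z := by
  have hn : (N:ℂ) ≠ 0 := by exact_mod_cast (by omega : N ≠ 0)
  have h0 := ne_zero_of_im hz
  have h1 : DifferentiableAt ℂ (fun z : ℂ => -1 / (N * z)) z :=
    (differentiableAt_const _).div (by fun_prop) (mul_ne_zero hn h0)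
  have h2 : DifferentiableAt ℂ (fun z : ℂ => B (-1 / (N * z))) z :=
    DifferentiableAt.comp z (hB _ (w_im hN hz)) h1
  have h3 : DifferentiableAt ℂ (fun z : ℂ => ((-z) ^ K)⁻¹) z :=
    DifferentiableAt.inv (by fun_prop) (pow_ne_zero _ (neg_ne_zero.mpr h0))
  have h4 : DifferentiableAt ℂ (fun z : ℂ => 1 / ((N:ℂ) * z ^ 2)) z :=
    (differentiableAt_const _).div (by fun_prop) (mul_ne_zero hn (pow_ne_zero _ h0))
  exact ((h3.mul h4).mul h2).const_mul κ

/-- Uniqueness core. -/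
lemma core_iff {K : ℕ} {G S Gu Su B C : ℂ → ℂ}
    (hB : ∀ z : ℂ, 0 < z.im → DifferentiableAt ℂ B z)
    (hC : ∀ z : ℂ, 0 < z.im → DifferentiableAt ℂ C z)
    (hG : ∀ τ : ℂ, 0 < τ.im → HasW G (Gu τ - (τ.im : ℂ) ^ K * B (-conj τ)) ((τ.im : ℂ) ^ K * B (-conj τ)) τ)
    (hS : ∀ τ : ℂ, 0 < τ.im → HasW S (Su τ - (τ.im : ℂ) ^ K * C (-conj τ)) ((τ.im : ℂ) ^ K * C (-conj τ)) τ) :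
    (∀ τ : ℂ, 0 < τ.im → G τ = S τ) ↔
      ∀ r : ℝ, 0 < r → G (I * r) = S (I * r) ∧ Gu (I * r) = Su (I * r) := by
  have him : ∀ r : ℝ, 0 < r → 0 < (I * (r:ℂ)).im := fun r hr => by simpa using hr
  constructor
  · intro h r hr
    refine ⟨h _ (him r hr), ?_⟩
    have h1 := (hS _ (him r hr)).congr_fun (f' := G) (by
      filter_upwards [isOpen_UHP'.mem_nhds (him r hr)] with z hz using h z hz)
    obtain ⟨e1, e2⟩ := (hG _ (him r hr)).unique h1
    linear_combination e1 + e2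
  · intro h τ hτ
    have hD : ∀ τ : ℂ, 0 < τ.im → HasW (fun z => G z - S z)
        ((Gu τ - Su τ) - (τ.im : ℂ) ^ K * (B (-conj τ) - C (-conj τ)))
        ((τ.im : ℂ) ^ K * (B (-conj τ) - C (-conj τ))) τ := fun τ hτ =>
      ((hG τ hτ).sub (hS τ hτ)).congr (by ring) (by ring)
    have hz : ∀ r : ℝ, 0 < r → B (I * r) - C (I * r) = 0 := by
      intro r hr
      have h1 := (hD _ (him r hr)).axis hr (fun t ht => by rw [(h t ht).1, sub_self])
      rw [(h r hr).2, sub_self] at h1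
      have h2 : -conj (I * (r:ℂ)) = I * r := by simp
      rw [h2] at h1
      have h3 : ((I * (r:ℂ)).im : ℂ) ^ K ≠ 0 := by
        refine pow_ne_zero _ ?_
        exact_mod_cast (him r hr).ne'
      have h4 : ((I * (r:ℂ)).im : ℂ) ^ K * (B (I * r) - C (I * r)) = 0 := by linear_combination -h1 / 2
      exact (mul_eq_zero.mp h4).resolve_left h3
    have hBC : ∀ z : ℂ, 0 < z.im → B z - C z = 0 := fun z hz' =>
      eq_zero_of_axis (C := fun z => B z - C z) (fun z h => (hB z h).sub (hC z h)) hz hz'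
    have hhol : ∀ z : ℂ, 0 < z.im → DifferentiableAt ℂ (fun z => G z - S z) z := by
      intro z hz'
      refine HasW.holo (a := Gu z - Su z) ((hD z hz').congr ?_ ?_) <;>
      · rw [hBC _ (by rw [neg_conj_im]; exact hz')]; ring
    exact sub_eq_zero.mp (eq_zero_of_axis hhol (fun r hr => by rw [(h r hr).1, sub_self]) hτ)

end PartE

section PartF

lemma cpow_half (N : ℕ) (m : ℤ) : (N:ℂ) ^ ((m:ℂ) / 2) = ((Real.sqrt N : ℝ) : ℂ) ^ m := by
  rw [Real.sqrt_eq_rpow, Complex.ofReal_cpow (by positivity), ← Complex.cpow_mul_int]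
  congr 1
  push_cast; ring

lemma Npow_nat (N K : ℕ) : Npow N (-(K:ℤ)) = ((Real.sqrt N : ℝ) : ℂ) ^ (K + 1) := by
  have h := cpow_half N ((K + 1 : ℕ) : ℤ)
  rw [zpow_natCast] at h
  rw [← h, Npow]
  congr 1
  push_cast; ring

lemma nmul_zero' (c : ℕ → ℂ) : nmul 0 c = c := by funext n; simp [nmul]

lemma sqrtN_pos {N : ℕ} (hN : 1 ≤ N) : 0 < Real.sqrt N := Real.sqrt_pos.mpr (by exact_mod_cast hN)

lemma axis_L {N : ℕ} (hN : 1 ≤ N) (K : ℕ) (cp cm : ℕ → ℂ) (t : ℝ) :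
    full K (tailL K (2 * Real.pi / Real.sqrt N) cp cm) (cp 0) (cm 0 / Npow N (-(K:ℤ))) t
      = mF K cp cm (I * ((t / Real.sqrt N : ℝ) : ℂ)) := by
  have hq : (Real.sqrt N : ℂ) ≠ 0 := by exact_mod_cast (sqrtN_pos hN).ne'
  have e1 : -conj (I * ((t / Real.sqrt N : ℝ) : ℂ)) = I * ((t / Real.sqrt N : ℝ) : ℂ) := by
    simp only [map_mul, conj_I, conj_ofReal]; ring
  have e2 : (2 * Real.pi / Real.sqrt N) / (2 * Real.pi) * t = t / Real.sqrt N := by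
    field_simp
  have e3 : (I * ((t / Real.sqrt N : ℝ) : ℂ)).im = t / Real.sqrt N := by
    rw [I_mul_im, ofReal_re]
  simp only [full, tailL, mF, Tf, e1, e2, e3, nmul_zero', Npow_nat, pow_zero, one_mul]
  have : ∀ j, (K.factorial : ℂ) * 2 ^ j / (j.factorial : ℂ) * (((2 * Real.pi / Real.sqrt N * t : ℝ) : ℂ) ^ j *
      qS (nmul j cm) (I * ((t / Real.sqrt N : ℝ) : ℂ))) = (K.factorial : ℂ) / (j.factorial : ℂ) *
      ((4 * Real.pi) ^ j * (((t / Real.sqrt N : ℝ) : ℂ) ^ j * qS (nmul j cm) (I * ((t / Real.sqrt N : ℝ) : ℂ)))) := by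
    intro j
    have : (4 * (Real.pi:ℂ)) ^ j * ((t / Real.sqrt N : ℝ) : ℂ) ^ j = 2 ^ j * ((2 * Real.pi / Real.sqrt N * t : ℝ) : ℂ) ^ j := by
      rw [← mul_pow, ← mul_pow]; congr 1; push_cast; ring
    rw [← mul_assoc ((4 * (Real.pi:ℂ)) ^ j), this]; ring
  simp only [this]
  push_cast
  rw [div_pow]
  ring

/-- Combination giving Omega along the axis. -/
def mO (K : ℕ) (F Fu : ℂ → ℂ) (r : ℝ) : ℂ := -(K:ℂ) * F (I * r) + 2 * I * r * Fu (I * r)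

lemma axis_O {N : ℕ} (hN : 1 ≤ N) (K : ℕ) (cp cm : ℕ → ℂ) (t : ℝ) :
    full K (tailO K (2 * Real.pi / Real.sqrt N) cp cm) (-(K:ℂ) * cp 0) (-(K:ℂ) * (cm 0 / Npow N (-(K:ℤ)))) t
      = mO K (mF K cp cm) (mFu K cp cm) (t / Real.sqrt N) := by
  have hq : (Real.sqrt N : ℂ) ≠ 0 := by exact_mod_cast (sqrtN_pos hN).ne'
  have e1 : -conj (I * ((t / Real.sqrt N : ℝ) : ℂ)) = I * ((t / Real.sqrt N : ℝ) : ℂ) := by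
    simp only [map_mul, conj_I, conj_ofReal]; ring
  have e2 : (2 * Real.pi / Real.sqrt N) / (2 * Real.pi) * t = t / Real.sqrt N := by
    field_simp
  have e3 : (I * ((t / Real.sqrt N : ℝ) : ℂ)).im = t / Real.sqrt N := by
    rw [I_mul_im, ofReal_re]
  have hX : (-2) * tailX K (2 * Real.pi / Real.sqrt N) cp cm t =
      2 * I * ((t / Real.sqrt N : ℝ) : ℂ) * mFu K cp cm (I * ((t / Real.sqrt N : ℝ) : ℂ)) := by
    simp only [tailX, mFu, Tf, e1, e2, e3]
    have : ∀ j, (K.factorial : ℂ) * 2 ^ j / (j.factorial : ℂ) * (((2 * Real.pi / Real.sqrt N * t : ℝ) : ℂ) ^ (j + 1) *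
      qS (nmul (j + 1) cm) (I * ((t / Real.sqrt N : ℝ) : ℂ))) = (2 * Real.pi * ((t / Real.sqrt N : ℝ) : ℂ)) * ((K.factorial : ℂ) / (j.factorial : ℂ) *
      ((4 * Real.pi) ^ j * (((t / Real.sqrt N : ℝ) : ℂ) ^ j * qS (nmul (j + 1) cm) (I * ((t / Real.sqrt N : ℝ) : ℂ))))) := by
      intro j
      have : (4 * (Real.pi:ℂ)) ^ j * ((t / Real.sqrt N : ℝ) : ℂ) ^ j = 2 ^ j * ((2 * Real.pi / Real.sqrt N * t : ℝ) : ℂ) ^ j := by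
        rw [← mul_pow, ← mul_pow]; congr 1; push_cast; ring
      rw [← mul_assoc ((4 * (Real.pi:ℂ)) ^ j), this, pow_succ]; push_cast; ring
    simp only [this, ← Finset.mul_sum]
    generalize (∑ j ∈ Finset.range (K + 1), _ : ℂ) = A
    generalize qS (nmul 1 cp) _ = A'
    push_cast
    linear_combination (-4 * Real.pi * (t / Real.sqrt N) * (A' - A) : ℂ) * I_sq
  have hL := axis_L hN K cp cm t
  simp only [full] at hL
  simp only [full, tailO, mO]
  rw [← hL, hX]; ring

lemma fricke_eq {K N : ℕ} (f : ℂ → ℂ) (τ : ℂ) :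
    fricke (-(K:ℤ)) N f τ = mS K N (((Real.sqrt N : ℝ) : ℂ) ^ K)⁻¹ f τ := by
  have h := cpow_half N (-(K:ℤ))
  rw [zpow_neg, zpow_natCast] at h
  rw [fricke, slash, mS, ← h, neg_neg, zpow_natCast]
  simp [mul_assoc]

/-- `u`-derivative of the Fricke image -/
def mSu (K N : ℕ) (κ : ℂ) (F Fu B : ℂ → ℂ) (τ : ℂ) : ℂ :=
  κ * (K * (N * τ) ^ K / τ * F (-1 / (N * τ)) + (N * τ) ^ K *
      ((Fu (-1 / (N * τ)) - ((-1 / (N * τ)).im : ℂ) ^ K * B (-conj (-1 / (N * τ)))) * (1 / (N * τ ^ 2))))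
    + (τ.im : ℂ) ^ K * mBS K N κ B (-conj τ)

lemma axis_w {N : ℕ} (hN : 1 ≤ N) {t : ℝ} (ht : 0 < t) :
    -1 / ((N:ℂ) * (I * ((t / Real.sqrt N : ℝ) : ℂ))) = I * ((t⁻¹ / Real.sqrt N : ℝ) : ℂ) := by
  have hq : (Real.sqrt N : ℂ) ≠ 0 := by exact_mod_cast (sqrtN_pos hN).ne'
  have ht' : (t:ℂ) ≠ 0 := by exact_mod_cast ht.ne'
  have hN2 : (N:ℂ) = (Real.sqrt N : ℂ) ^ 2 := by
    rw [← ofReal_pow, Real.sq_sqrt (by positivity)]; simp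
  rw [hN2]; push_cast
  rw [div_eq_iff (by simp [hq, ht'])]
  field_simp
  rw [I_sq]

lemma axis_fac {N : ℕ} (hN : 1 ≤ N) (K : ℕ) (t : ℝ) :
    (((Real.sqrt N : ℝ) : ℂ) ^ K)⁻¹ * ((N:ℂ) * (I * ((t / Real.sqrt N : ℝ) : ℂ))) ^ K = I ^ K * (t:ℂ) ^ K := by
  have hq : (Real.sqrt N : ℂ) ≠ 0 := by exact_mod_cast (sqrtN_pos hN).ne'
  have hN2 : (N:ℂ) = (Real.sqrt N : ℂ) ^ 2 := by
    rw [← ofReal_pow, Real.sq_sqrt (by positivity)]; simp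
  rw [← inv_pow, ← mul_pow, ← mul_pow]
  congr 1
  rw [hN2]; push_cast; field_simp

lemma axis_S {N : ℕ} (hN : 1 ≤ N) (K : ℕ) (F : ℂ → ℂ) {t : ℝ} (ht : 0 < t) :
    mS K N (((Real.sqrt N : ℝ) : ℂ) ^ K)⁻¹ F (I * ((t / Real.sqrt N : ℝ) : ℂ)) =
      I ^ K * (t:ℂ) ^ K * F (I * ((t⁻¹ / Real.sqrt N : ℝ) : ℂ)) := by
  rw [mS, axis_w hN ht, ← mul_assoc, axis_fac hN]

lemma axis_SO {N : ℕ} (hN : 1 ≤ N) (K : ℕ) (F Fu B : ℂ → ℂ) {t : ℝ} (ht : 0 < t) :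
    mO K (mS K N (((Real.sqrt N : ℝ) : ℂ) ^ K)⁻¹ F) (mSu K N (((Real.sqrt N : ℝ) : ℂ) ^ K)⁻¹ F Fu B)
        (t / Real.sqrt N) =
      -(I ^ K * (t:ℂ) ^ K) * mO K F Fu (t⁻¹ / Real.sqrt N) := by
  have hq : (Real.sqrt N : ℂ) ≠ 0 := by exact_mod_cast (sqrtN_pos hN).ne'
  have ht' : (t:ℂ) ≠ 0 := by exact_mod_cast ht.ne'
  have hN2 : (N:ℂ) = (Real.sqrt N : ℂ) ^ 2 := by
    rw [← ofReal_pow, Real.sq_sqrt (by positivity)]; simp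
  have e1 : ∀ r : ℝ, -conj (I * (r : ℂ)) = I * (r : ℂ) := by
    intro r; simp only [map_mul, conj_I, conj_ofReal]; ring
  have e3 : ∀ r : ℝ, (I * (r : ℂ)).im = r := by
    intro r; rw [I_mul_im, ofReal_re]
  have hfac := axis_fac hN K t
  have hS := axis_S hN K F ht
  set κ := (((Real.sqrt N : ℝ) : ℂ) ^ K)⁻¹ with hκ
  simp only [mO, hS, mSu, mBS, axis_w hN ht, e1, e3]
  set b := B (I * ((t⁻¹ / Real.sqrt N : ℝ) : ℂ))
  have hcan : ((t / Real.sqrt N : ℝ) : ℂ) ^ K * ((-(I * ((t / Real.sqrt N : ℝ) : ℂ))) ^ K)⁻¹ = 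
      ((N:ℂ) * (I * ((t / Real.sqrt N : ℝ) : ℂ))) ^ K * ((t⁻¹ / Real.sqrt N : ℝ) : ℂ) ^ K := by
    rw [← inv_pow, ← mul_pow, ← mul_pow]
    congr 1
    rw [hN2]; push_cast
    have : (-(I * ((t:ℂ) / (Real.sqrt N:ℂ))))⁻¹ = I * (Real.sqrt N / t) := by
      refine inv_eq_of_mul_eq_one_right ?_
      field_simp
      rw [I_sq]; ring
    rw [this]
    field_simp
  have hb : ((t / Real.sqrt N : ℝ) : ℂ) ^ K * (κ * (((-(I * ((t / Real.sqrt N : ℝ) : ℂ))) ^ K)⁻¹ *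
      (1 / ((N:ℂ) * (I * ((t / Real.sqrt N : ℝ) : ℂ)) ^ 2)) * b)) =
      κ * (((N:ℂ) * (I * ((t / Real.sqrt N : ℝ) : ℂ))) ^ K * ((t⁻¹ / Real.sqrt N : ℝ) : ℂ) ^ K *
      (1 / ((N:ℂ) * (I * ((t / Real.sqrt N : ℝ) : ℂ)) ^ 2)) * b) := by
    rw [← hcan]; ring
  rw [hb, ← hfac]
  have hτ2 : 2 * I * ((t / Real.sqrt N : ℝ) : ℂ) * (1 / ((N:ℂ) * (I * ((t / Real.sqrt N : ℝ) : ℂ)) ^ 2))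
     = - (2 * I * ((t⁻¹ / Real.sqrt N : ℝ) : ℂ)) := by
    rw [hN2]; push_cast
    field_simp
    rw [I_sq]; 
    try ring
  have hτ1 : 2 * I * ((t / Real.sqrt N : ℝ) : ℂ) / (I * ((t / Real.sqrt N : ℝ) : ℂ)) = 2 := by
    push_cast; field_simp
  generalize ((N:ℂ) * (I * ((t / Real.sqrt N : ℝ) : ℂ))) ^ K = P at *
  generalize F (I * ((t⁻¹ / Real.sqrt N : ℝ) : ℂ)) = F0 at *
  generalize Fu (I * ((t⁻¹ / Real.sqrt N : ℝ) : ℂ)) = F1 at *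
  linear_combination (κ * P * F1) * hτ2 + (κ * K * P * F0) * hτ1

lemma flip_iff {K : ℕ} {ε ε' : ℂ} (hε : ε' * ε = 1) (X Y : ℝ → ℂ) :
    (∀ t : ℝ, 0 < t → X t = ε * (t:ℂ) ^ K * Y t⁻¹) ↔ (∀ t : ℝ, 0 < t → Y t = ε' * (t:ℂ) ^ K * X t⁻¹) := by
  constructor
  · intro h t ht
    have ht' : (t:ℂ) ^ K ≠ 0 := pow_ne_zero _ (by exact_mod_cast ht.ne')
    rw [h t⁻¹ (inv_pos.mpr ht), inv_inv]
    push_cast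
    rw [inv_pow]
    field_simp
    linear_combination -Y t * hε
  · intro h t ht
    have ht' : (t:ℂ) ^ K ≠ 0 := pow_ne_zero _ (by exact_mod_cast ht.ne')
    rw [h t⁻¹ (inv_pos.mpr ht), inv_inv]
    push_cast
    rw [inv_pow]
    field_simp
    linear_combination -X t * hε

lemma main_iff {α : ℝ} (K N : ℕ) (hN : 1 ≤ N)
    (cfp cfm cgp cgm : ℕ → ℂ) (f g : ℂ → ℂ)
    (hf : FourierShape (-(K:ℤ)) cfp cfm f) (hg : FourierShape (-(K:ℤ)) cgp cgm g)
    (hbfp : CoeffBound α cfp) (hbfm : CoeffBound α cfm)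
    (hbgp : CoeffBound α cgp) (hbgm : CoeffBound α cgm) :
    (∀ τ ∈ UHP, g τ = fricke (-(K:ℤ)) N f τ) ↔
    (∀ t : ℝ, 0 < t →
      full K (tailL K (2 * Real.pi / Real.sqrt N) cfp cfm) (cfp 0) (cfm 0 / Npow N (-(K:ℤ))) t =
      I ^ (-(K:ℤ)) * (t:ℂ) ^ K *
      full K (tailL K (2 * Real.pi / Real.sqrt N) cgp cgm) (cgp 0) (cgm 0 / Npow N (-(K:ℤ))) t⁻¹) ∧
    (∀ t : ℝ, 0 < t →
      full K (tailO K (2 * Real.pi / Real.sqrt N) cfp cfm) (-(K:ℂ) * cfp 0) (-(K:ℂ) * (cfm 0 / Npow N (-(K:ℤ)))) t =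
      -(I ^ (-(K:ℤ))) * (t:ℂ) ^ K *
      full K (tailO K (2 * Real.pi / Real.sqrt N) cgp cgm) (-(K:ℂ) * cgp 0) (-(K:ℂ) * (cgm 0 / Npow N (-(K:ℤ)))) t⁻¹) := by
  have hq := sqrtN_pos hN
  set κ := (((Real.sqrt N : ℝ) : ℂ) ^ K)⁻¹ with hκ
  set F := mF K cfp cfm
  set G := mF K cgp cgm
  have hI : I ^ K * I ^ (-(K:ℤ)) = 1 := by
    rw [← zpow_natCast, ← zpow_add₀ I_ne_zero]; simp
  have h1 : (∀ τ ∈ UHP, g τ = fricke (-(K:ℤ)) N f τ) ↔ (∀ τ : ℂ, 0 < τ.im → G τ = mS K N κ F τ) := by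
    refine forall_congr' fun τ => forall_congr' fun hτ => ?_
    have hτ : 0 < τ.im := hτ
    rw [hg τ hτ, mF_eq hbgp hbgm K hτ, fricke_eq]
    simp only [mS]
    rw [hf _ (w_im hN hτ), mF_eq hbfp hbfm K (w_im hN hτ)]
  have h2 := core_iff (K := K) (G := G) (S := mS K N κ F) (Gu := mFu K cgp cgm)
    (Su := mSu K N κ F (mFu K cfp cfm) (mB K cfm)) (B := mB K cgm) (C := mBS K N κ (mB K cfm))
    (fun z hz => mB_diff hbgm K hz) (fun z hz => mBS_diff hN κ (fun z hz => mB_diff hbfm K hz) hz)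
    (fun τ hτ => mF_hasW hbgp hbgm K hτ)
    (fun τ hτ => (mS_hasW hN κ hτ (mF_hasW hbfp hbfm K (w_im hN hτ))).congr
      (by simp only [mSu]; ring) rfl)
  have h3 : (∀ r : ℝ, 0 < r → G (I * r) = mS K N κ F (I * r) ∧
        mFu K cgp cgm (I * r) = mSu K N κ F (mFu K cfp cfm) (mB K cfm) (I * r)) ↔
      (∀ t : ℝ, 0 < t → G (I * ((t / Real.sqrt N : ℝ) : ℂ)) = I ^ K * (t:ℂ) ^ K * F (I * ((t⁻¹ / Real.sqrt N : ℝ) : ℂ))) ∧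
      (∀ t : ℝ, 0 < t → mO K G (mFu K cgp cgm) (t / Real.sqrt N) =
        -(I ^ K) * (t:ℂ) ^ K * mO K F (mFu K cfp cfm) (t⁻¹ / Real.sqrt N)) := by
    constructor
    · intro h
      refine ⟨fun t ht => ?_, fun t ht => ?_⟩
      · rw [(h _ (div_pos ht hq)).1, axis_S hN K F ht]
      · have := axis_SO hN K F (mFu K cfp cfm) (mB K cfm) ht
        rw [neg_mul, ← this, mO, mO, (h _ (div_pos ht hq)).1, (h _ (div_pos ht hq)).2]
    · rintro ⟨ha, hb⟩ r hr
      have ht : 0 < r * Real.sqrt N := mul_pos hr hq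
      have hr' : r * Real.sqrt N / Real.sqrt N = r := by field_simp
      have e1 := ha _ ht
      have e2 := hb _ ht
      rw [← axis_S hN K F ht, hr'] at e1
      rw [neg_mul, ← axis_SO hN K F (mFu K cfp cfm) (mB K cfm) ht, hr', mO, mO, e1] at e2
      refine ⟨e1, ?_⟩
      have e3 := add_left_cancel e2
      have hr0 : (2 * I * (r:ℂ)) ≠ 0 := by
        have : (r:ℂ) ≠ 0 := by exact_mod_cast hr.ne'
        simp [this]
      exact mul_left_cancel₀ hr0 e3
  rw [h1, h2, h3]
  simp only [axis_L hN, axis_O hN]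
  exact and_congr
    (flip_iff (K := K) (ε := I ^ (-(K:ℤ))) (ε' := I ^ K) hI (fun t => F (I * ((t / Real.sqrt N : ℝ) : ℂ)))
      (fun t => G (I * ((t / Real.sqrt N : ℝ) : ℂ)))).symm
    (flip_iff (K := K) (ε := -(I ^ (-(K:ℤ)))) (ε' := -(I ^ K)) (by linear_combination hI)
      (fun t => mO K F (mFu K cfp cfm) (t / Real.sqrt N))
      (fun t => mO K G (mFu K cgp cgm) (t / Real.sqrt N))).symm

lemma corrL_eq (N K : ℕ) (ι c0 d0 c1 d1 : ℂ) : corrL N (-(K:ℤ)) ι c0 d0 c1 d1 =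
    corr K ι c0 (c1 / Npow N (-(K:ℤ))) d0 (d1 / Npow N (-(K:ℤ))) := by
  funext s
  simp only [corrL, corr]
  push_cast
  rw [show s - -(K:ℂ) + 1 = s + K + 1 by ring]
  ring

lemma corrO_eq (N K : ℕ) (ι c0 d0 c1 d1 : ℂ) : corrO N (-(K:ℤ)) ι c0 d0 c1 d1 =
    corr K (-ι) (-(K:ℂ) * c0) (-(K:ℂ) * (c1 / Npow N (-(K:ℤ)))) (-(K:ℂ) * d0) (-(K:ℂ) * (d1 / Npow N (-(K:ℤ)))) := by
  funext s
  simp only [corrO, corr]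
  push_cast
  rw [show s - -(K:ℂ) + 1 = s + K + 1 by ring]
  ring

theorem main_nat (K N : ℕ) (hN : 1 ≤ N) (α : ℝ) (hα : 0 ≤ α)
    (cfp cfm cgp cgm : ℕ → ℂ) (f g : ℂ → ℂ)
    (hf : FourierShape (-(K:ℤ)) cfp cfm f) (hg : FourierShape (-(K:ℤ)) cgp cgm g)
    (hbfp : CoeffBound α cfp) (hbfm : CoeffBound α cfm)
    (hbgp : CoeffBound α cgp) (hbgm : CoeffBound α cgm) :
    (∀ τ ∈ UHP, g τ = fricke (-(K:ℤ)) N f τ) ↔ AnalyticPackage N (-(K:ℤ)) α cfp cfm cgp cgm := by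
  have hy : 0 < 2 * Real.pi / Real.sqrt N := div_pos (by positivity) (sqrtN_pos hN)
  have hI : I ^ (-(K:ℤ)) ≠ 0 := zpow_ne_zero _ I_ne_zero
  rw [main_iff K N hN cfp cfm cgp cgm f g hf hg hbfp hbfm hbgp hbgm,
    abstract_hecke (σ := α + 1) (by linarith) K hI (tailL_tail hα hbfp hbfm hy K)
      (tailL_tail hα hbgp hbgm hy K),
    abstract_hecke (σ := α + 1) (by linarith) K (neg_ne_zero.mpr hI) (tailO_tail hα hbfp hbfm hy K)
      (tailO_tail hα hbgp hbgm hy K)]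
  have hinv : I ^ (- -(K:ℤ)) = (I ^ (-(K:ℤ)))⁻¹ := zpow_neg _ _
  have hinv' : -(I ^ (- -(K:ℤ))) = (-(I ^ (-(K:ℤ))))⁻¹ := by rw [hinv, inv_neg]
  unfold AnalyticPackage
  simp only [corrL_eq, corrO_eq, hinv']
  rw [hinv]
  constructor
  · rintro ⟨⟨Lf, Lg, a1, a2, a3, a4, a5⟩, ⟨Of, Og, b1, b2, b3, b4, b5⟩⟩
    exact ⟨Lf, Lg, Of, Og, fun s hs => by rw [a1 s hs, tailL_Lambda hα hbfp hbfm hN K hs],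
      fun s hs => by rw [a2 s hs, tailL_Lambda hα hbgp hbgm hN K hs],
      fun s hs => by rw [b1 s hs, tailO_Omega hα hbfp hbfm hN K hs],
      fun s hs => by rw [b2 s hs, tailO_Omega hα hbgp hbgm hN K hs], a3, b3, a4, a5, b4, b5⟩
  · rintro ⟨Lf, Lg, Of, Og, a1, a2, b1, b2, a3, b3, a4, a5, b4, b5⟩
    exact ⟨⟨Lf, Lg, fun s hs => by rw [a1 s hs, tailL_Lambda hα hbfp hbfm hN K hs],
      fun s hs => by rw [a2 s hs, tailL_Lambda hα hbgp hbgm hN K hs], a3, a4, a5⟩,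
      ⟨Of, Og, fun s hs => by rw [b1 s hs, tailO_Omega hα hbfp hbfm hN K hs],
      fun s hs => by rw [b2 s hs, tailO_Omega hα hbgp hbgm hN K hs], b3, b4, b5⟩⟩

end PartF

/-- **Hecke-type converse theorem** (Theorem 4.5): `g = f|_k ω(N)` iff the completed
Dirichlet series `Λ_N, Ω_N` of `f` and `g` admit meromorphic continuation, satisfy the
functional equations, and have entire pole-corrected completions bounded on vertical
strips. -/
theorem hecke_converse_theorem
    (k : ℤ) (hk : k < 0) (N : ℕ) (hN : 1 ≤ N) (α : ℝ) (hα : 0 ≤ α)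
    (cfp cfm cgp cgm : ℕ → ℂ) (f g : ℂ → ℂ)
    (hf : FourierShape k cfp cfm f) (hg : FourierShape k cgp cgm g)
    (hbfp : CoeffBound α cfp) (hbfm : CoeffBound α cfm)
    (hbgp : CoeffBound α cgp) (hbgm : CoeffBound α cgm) :
    (∀ τ ∈ UHP, g τ = fricke k N f τ) ↔ AnalyticPackage N k α cfp cfm cgp cgm := by
  obtain ⟨K, rfl⟩ : ∃ K : ℕ, k = -(K:ℤ) := ⟨(-k).toNat, by omega⟩
  exact main_nat K N hN α hα cfp cfm cgp cgm f g hf hg hbfp hbfm hbgp hbgm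
end
end

section
/- Construction of harmonic Maass forms of polynomial growth with Eisenstein shadow. Let k be a negative integer, N ≥ 1 an integer, and χ a Dirichlet character mod N with χ(−1) = (−1)^k. Let ρ be a cusp of Γ₀(N), γ_ρ ∈ SL₂(ℤ) with γ_ρ(i∞) = ρ, Γ_ρ = Γ₀(N) ∩ γ_ρ Γ_∞ γ_ρ^{−1}, and assume χ is trivial on Γ_ρ. Then the series 𝓕_{k,ρ}(N,χ;τ) = Σ_{g ∈ Γ_ρ\Γ₀(N)} χ̄(g) ((v^{1−k}/(1−k))|_k γ_ρ^{−1}g)(τ) converges absolutely, defines an element of H^!_k(N,χ), and has at most polynomial growth at every cusp of Γ₀(N); more precisely, for any cusp ν of Γ₀(N) with scaling matrix γ_ν ∈ SL₂(ℤ), γ_ν(i∞) = ν, one has (𝓕_{k,ρ}(N,χ;·)|_k γ_ν)(τ) = O(δ_{ρ,ν} v^{1−k} + v^{−k/2}) as v → ∞, where δ_{ρ,ν} = 1 if ν is Γ₀(N)-equivalent to ρ and 0 otherwise. In particular 𝓕_{k,ρ}(N,χ;·) ∈ H^#_k(N,χ), and its shadow is the Eisenstein series: ξ_k(𝓕_{k,ρ}(N,χ;·))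 = E_{2−k,ρ}(N,χ̄;·). -/
open Complex MeasureTheory Set Filter

noncomputable section

namespace EisAux

open ComplexConjugate

lemma lower_bound (A B : ℝ) (hB : 0 < B) : ∃ ρ : ℝ, 0 < ρ ∧ ∀ z : ℂ, |z.re| ≤ A → B ≤ z.im →
    ∀ x : Fin 2 → ℤ, x ≠ 0 → ρ * ‖x‖ ≤ ‖(x 0 : ℂ) * z + x 1‖ := by
  refine ⟨EisensteinSeries.r ⟨⟨A, B⟩, hB⟩, EisensteinSeries.r_pos _, ?_⟩
  intro z h1 h2 x hx
  have hz : 0 < z.im := lt_of_lt_of_le hB h2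
  have h3 := EisensteinSeries.r_mul_max_le ⟨z, hz⟩ hx
  refine le_trans ?_ h3
  gcongr
  exact EisensteinSeries.r_lower_bound_on_verticalStrip (z := ⟨z, hz⟩) hB ⟨h1, h2⟩

lemma denom_ne {z : ℂ} (hz : z ∈ UHP) {x : Fin 2 → ℤ} (hx : x ≠ 0) : (x 0 : ℂ) * z + x 1 ≠ 0 := by
  obtain ⟨ρ, h0, h⟩ := lower_bound |z.re| z.im hz
  have := h z le_rfl le_rfl x hx
  rw [← norm_pos_iff]
  have : 0 < ‖x‖ := norm_pos_iff.2 hx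
  nlinarith [mul_pos h0 this]

lemma conj_denom (z : ℂ) (x : Fin 2 → ℤ) :
    (x 0 : ℂ) * conj z + x 1 = conj ((x 0 : ℂ) * z + x 1) := by simp

/-- One term of the two-variable series. -/
def tm (x : Fin 2 → ℤ) (p q : ℕ) (z : ℂ) : ℂ :=
  (((x 0 : ℂ) * z + x 1)⁻¹) ^ p * (((x 0 : ℂ) * conj z + x 1)⁻¹) ^ q

lemma norm_tm (x : Fin 2 → ℤ) (p q : ℕ) (z : ℂ) :
    ‖tm x p q z‖ = (‖(x 0 : ℂ) * z + x 1‖⁻¹) ^ (p + q) := by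
  rw [tm, conj_denom, norm_mul, norm_pow, norm_pow, norm_inv, norm_inv, RCLike.norm_conj, pow_add]

lemma tm_bound {ρ : ℝ} (hρ : 0 < ρ) {z : ℂ} {x : Fin 2 → ℤ} (hx : x ≠ 0)
    (h : ρ * ‖x‖ ≤ ‖(x 0 : ℂ) * z + x 1‖) (p q : ℕ) :
    ‖tm x p q z‖ ≤ (ρ⁻¹) ^ (p + q) * (‖x‖⁻¹) ^ (p + q) := by
  rw [norm_tm, ← mul_pow, ← mul_inv]
  have : 0 < ‖x‖ := norm_pos_iff.2 hx
  gcongr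

variable {ι : Type*}

/-- The general series. -/
def TT (x : ι → Fin 2 → ℤ) (a : ι → ℂ) (p q : ℕ) (z : ℂ) : ℂ := ∑' i, a i * tm (x i) p q z

lemma TT_summable {x : ι → Fin 2 → ℤ} (hx : ∀ i, x i ≠ 0) {a : ι → ℂ} {p q : ℕ}
    (hs : Summable fun i => ‖a i‖ * (‖x i‖⁻¹) ^ (p + q)) {z : ℂ} (hz : z ∈ UHP) :
    Summable fun i => ‖a i * tm (x i) p q z‖ := by
  obtain ⟨ρ, h0, h⟩ := lower_bound |z.re| z.im hz
  refine Summable.of_nonneg_of_le (fun _ => norm_nonneg _) (fun i => ?_)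
    (hs.mul_left ((ρ⁻¹) ^ (p + q)))
  rw [norm_mul]
  have := tm_bound h0 (hx i) (h z le_rfl le_rfl (x i) (hx i)) p q
  calc _ ≤ ‖a i‖ * ((ρ⁻¹) ^ (p + q) * (‖x i‖⁻¹) ^ (p + q)) := by gcongr
    _ = _ := by ring

lemma hasFDerivAt_conj (z : ℂ) : HasFDerivAt (fun z : ℂ => conj z) (conjCLE : ℂ →L[ℝ] ℂ) z :=
  (conjCLE : ℂ →L[ℝ] ℂ).hasFDerivAt

lemma tm_hasFDerivAt {x : Fin 2 → ℤ} (hx : x ≠ 0) (p q : ℕ) {z : ℂ} (hz : z ∈ UHP) :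
    HasFDerivAt (tm x p q)
      ((-(p : ℂ) * x 0 * tm x (p + 1) q z) • (ContinuousLinearMap.id ℝ ℂ) +
        (-(q : ℂ) * x 0 * tm x p (q + 1) z) • (conjCLE : ℂ →L[ℝ] ℂ)) z := by
  have h1 : (x 0 : ℂ) * z + x 1 ≠ 0 := denom_ne hz hx
  have h2 : (x 0 : ℂ) * conj z + x 1 ≠ 0 := by
    rw [conj_denom]; exact (map_ne_zero _).2 h1
  have key : ∀ (n : ℕ) (w : ℂ), (x 0 : ℂ) * w + x 1 ≠ 0 →
      HasDerivAt (fun w : ℂ => (((x 0 : ℂ) * w + x 1)⁻¹) ^ n)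
        (-(n : ℂ) * x 0 * (((x 0 : ℂ) * w + x 1)⁻¹) ^ (n + 1)) w := by
    intro n w hw
    have h := ((((hasDerivAt_id w).const_mul (x 0 : ℂ)).add_const (x 1 : ℂ)).inv hw).pow n
    refine h.congr_deriv ?_
    rcases n with _ | n
    · simp
    · simp only [id, Nat.add_sub_cancel, Pi.inv_apply, div_eq_mul_inv, ← inv_pow]
      ring
  have k1 := (key p z h1).hasFDerivAt.restrictScalars ℝ
  have k2 := ((key q _ h2).hasFDerivAt.restrictScalars ℝ).comp z (hasFDerivAt_conj z)
  have := k1.mul k2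
  refine this.congr_fderiv ?_
  ext w <;> (simp [tm]; ring)

lemma coe_le_norm (x : Fin 2 → ℤ) : ‖(x 0 : ℂ)‖ ≤ ‖x‖ := by
  have := norm_le_pi_norm x 0
  rwa [Int.norm_eq_abs, ← Complex.norm_intCast] at this

lemma shift_le (x : Fin 2 → ℤ) (hx : x ≠ 0) (a : ℂ) (p n : ℕ) :
    ‖-(p : ℂ) * x 0 * a‖ * (‖x‖⁻¹) ^ (n + 1) ≤ p * (‖a‖ * (‖x‖⁻¹) ^ n) := by
  have h0 : 0 < ‖x‖ := norm_pos_iff.2 hx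
  rw [norm_mul, norm_mul, norm_neg, Complex.norm_natCast, pow_succ]
  have h1 : ‖(x 0 : ℂ)‖ * ‖x‖⁻¹ ≤ 1 := by
    rw [← div_eq_mul_inv, div_le_one h0]; exact coe_le_norm x
  calc _ = (p * (‖a‖ * (‖x‖⁻¹) ^ n)) * (‖(x 0 : ℂ)‖ * ‖x‖⁻¹) := by ring
    _ ≤ (p * (‖a‖ * (‖x‖⁻¹) ^ n)) * 1 := by gcongr
    _ = _ := mul_one _

lemma shift_summable {x : ι → Fin 2 → ℤ} (hx : ∀ i, x i ≠ 0) {a : ι → ℂ} {n : ℕ}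
    (hs : Summable fun i => ‖a i‖ * (‖x i‖⁻¹) ^ n) (p : ℕ) :
    Summable fun i => ‖-(p : ℂ) * x i 0 * a i‖ * (‖x i‖⁻¹) ^ (n + 1) :=
  Summable.of_nonneg_of_le (fun _ => by positivity) (fun i => shift_le _ (hx i) _ _ _)
    (hs.mul_left _)

lemma TT_hasFDerivAt {x : ι → Fin 2 → ℤ} (hx : ∀ i, x i ≠ 0) {a : ι → ℂ} {p q : ℕ}
    (hs : Summable fun i => ‖a i‖ * (‖x i‖⁻¹) ^ (p + q)) {z : ℂ} (hz : z ∈ UHP) :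
    HasFDerivAt (TT x a p q)
      ((TT x (fun i => -(p : ℂ) * x i 0 * a i) (p + 1) q z) • (ContinuousLinearMap.id ℝ ℂ) +
        (TT x (fun i => -(q : ℂ) * x i 0 * a i) p (q + 1) z) • (conjCLE : ℂ →L[ℝ] ℂ)) z := by
  have hzi : 0 < z.im := hz
  set s : Set ℂ := (Complex.re ⁻¹' Ioo (-(|z.re| + 1)) (|z.re| + 1)) ∩
    (Complex.im ⁻¹' Ioi (z.im / 2)) with hsdef
  have hso : IsOpen s := (isOpen_Ioo.preimage continuous_re).inter
    (isOpen_Ioi.preimage continuous_im)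
  have hsc : Convex ℝ s :=
    ((convex_Ioo _ _).linear_preimage Complex.reLm).inter
      ((convex_Ioi _).linear_preimage Complex.imLm)
  have hzs : z ∈ s := by
    refine ⟨⟨?_, ?_⟩, ?_⟩
    · linarith [neg_abs_le z.re]
    · linarith [le_abs_self z.re]
    · show z.im / 2 < z.im
      linarith
  obtain ⟨ρ, h0, h⟩ := lower_bound (|z.re| + 1) (z.im / 2) (by linarith)
  have hl : ∀ i, ∀ w ∈ s, ρ * ‖x i‖ ≤ ‖(x i 0 : ℂ) * w + x i 1‖ := fun i w hw =>
    h w (abs_le.2 ⟨hw.1.1.le, hw.1.2.le⟩) (le_of_lt hw.2) (x i) (hx i)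
  have hsU : ∀ w ∈ s, w ∈ UHP := fun w hw => by
    have : z.im / 2 < w.im := hw.2
    show 0 < w.im
    linarith
  have hs1 := shift_summable hx hs p
  have hs2 := shift_summable hx hs q
  have hs1' : Summable fun i => ‖-(p : ℂ) * x i 0 * a i‖ * (‖x i‖⁻¹) ^ (p + 1 + q) := by
    convert hs1 using 4; ring
  have hs2' : Summable fun i => ‖-(q : ℂ) * x i 0 * a i‖ * (‖x i‖⁻¹) ^ (p + (q + 1)) := hs2
  have hf := hasFDerivAt_tsum_of_isPreconnected (𝕜 := ℝ) (f := fun i w => a i * tm (x i) p q w)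
    (f' := fun i w => ((-(p : ℂ) * x i 0 * a i) * tm (x i) (p + 1) q w) •
        (ContinuousLinearMap.id ℝ ℂ) +
        ((-(q : ℂ) * x i 0 * a i) * tm (x i) p (q + 1) w) • (conjCLE : ℂ →L[ℝ] ℂ))
    (s := s) (x₀ := z) (x := z)
    (u := fun i => (ρ⁻¹) ^ (p + q + 1) * (‖-(p : ℂ) * x i 0 * a i‖ * (‖x i‖⁻¹) ^ (p + q + 1)) *
          ‖ContinuousLinearMap.id ℝ ℂ‖ +
        (ρ⁻¹) ^ (p + q + 1) * (‖-(q : ℂ) * x i 0 * a i‖ * (‖x i‖⁻¹) ^ (p + q + 1)) *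
          ‖(conjCLE : ℂ →L[ℝ] ℂ)‖)
    (((hs1.mul_left _).mul_right _).add ((hs2.mul_left _).mul_right _)) hso hsc.isPreconnected
    ?_ ?_ hzs (TT_summable hx hs hz).of_norm hzs
  · refine hf.congr_fderiv ?_
    exact (((TT_summable hx hs1' hz).of_norm.hasSum.smul_const _).add
      ((TT_summable hx hs2' hz).of_norm.hasSum.smul_const _)).tsum_eq
  · intro i w hw
    refine ((tm_hasFDerivAt (hx i) p q (hsU w hw)).const_mul (a i)).congr_fderiv ?_
    ext u <;> (simp; ring)
  · intro i w hw
    refine (norm_add_le _ _).trans ?_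
    rw [norm_smul, norm_smul, norm_mul _ (tm _ _ _ _), norm_mul _ (tm _ _ _ _)]
    have b1 := tm_bound h0 (hx i) (hl i w hw) (p + 1) q
    have b2 := tm_bound h0 (hx i) (hl i w hw) p (q + 1)
    rw [show p + 1 + q = p + q + 1 by ring] at b1
    rw [← add_assoc] at b2
    have c1 := mul_le_mul_of_nonneg_left b1 (norm_nonneg (-(p : ℂ) * x i 0 * a i))
    have c2 := mul_le_mul_of_nonneg_left b2 (norm_nonneg (-(q : ℂ) * x i 0 * a i))
    refine add_le_add (mul_le_mul_of_nonneg_right (c1.trans_eq ?_) (norm_nonneg _))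
      (mul_le_mul_of_nonneg_right (c2.trans_eq ?_) (norm_nonneg _)) <;> ring

lemma isOpen_UHP : IsOpen UHP := isOpen_Ioi.preimage continuous_im

lemma TT_contDiffOn {x : ι → Fin 2 → ℤ} (hx : ∀ i, x i ≠ 0) (n : ℕ) : ∀ (a : ι → ℂ) (p q : ℕ)
    (_ : Summable fun i => ‖a i‖ * (‖x i‖⁻¹) ^ (p + q)), ContDiffOn ℝ n (TT x a p q) UHP := by
  induction n with
  | zero =>
    intro a p q hs
    rw [Nat.cast_zero, contDiffOn_zero]
    exact fun z hz => (TT_hasFDerivAt hx hs hz).continuousAt.continuousWithinAt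
  | succ n ih =>
    intro a p q hs
    have hs1 := shift_summable hx hs p
    have hs2 := shift_summable hx hs q
    have hs1' : Summable fun i => ‖-(p : ℂ) * x i 0 * a i‖ * (‖x i‖⁻¹) ^ (p + 1 + q) := by
      convert hs1 using 4; ring
    rw [Nat.cast_succ, contDiffOn_succ_iff_hasFDerivWithinAt_of_uniqueDiffOn
      isOpen_UHP.uniqueDiffOn]
    refine ⟨by simp, _, ?_, fun z hz => (TT_hasFDerivAt hx hs hz).hasFDerivWithinAt⟩
    exact ((ih _ _ _ hs1').smul contDiffOn_const).add ((ih _ p (q + 1) hs2).smul contDiffOn_const)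

lemma TT_contDiffOn_top {x : ι → Fin 2 → ℤ} (hx : ∀ i, x i ≠ 0) {a : ι → ℂ} {p q : ℕ}
    (hs : Summable fun i => ‖a i‖ * (‖x i‖⁻¹) ^ (p + q)) :
    ContDiffOn ℝ (⊤ : ℕ∞) (TT x a p q) UHP :=
  contDiffOn_infty.2 fun n => TT_contDiffOn hx n a p q hs

end EisAux

namespace EisAux

open ComplexConjugate

variable {ι : Type*}

/-- The model series `v^(m+1)/(m+1) * Σ ...`. -/
def FF (x : ι → Fin 2 → ℤ) (a : ι → ℂ) (m : ℕ) (z : ℂ) : ℂ :=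
  (z.im : ℂ) ^ (m + 1) / ((m : ℂ) + 1) * TT x a 1 (m + 1) z

lemma hasFDerivAt_im (z : ℂ) :
    HasFDerivAt (fun z : ℂ => (z.im : ℂ)) (ofRealCLM.comp imCLM) z :=
  (ofRealCLM.comp imCLM).hasFDerivAt

lemma hasFDerivAt_im_pow (z : ℂ) (n : ℕ) :
    HasFDerivAt (fun z : ℂ => (z.im : ℂ) ^ n)
      (((n : ℂ) * (z.im : ℂ) ^ (n - 1)) • (ofRealCLM.comp imCLM)) z := by
  refine ((hasFDerivAt_im z).pow n).congr_fderiv ?_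
  ext w <;> simp

lemma FF_contDiffOn {x : ι → Fin 2 → ℤ} (hx : ∀ i, x i ≠ 0) {a : ι → ℂ} {m : ℕ}
    (hs : Summable fun i => ‖a i‖ * (‖x i‖⁻¹) ^ (m + 2)) :
    ContDiffOn ℝ (⊤ : ℕ∞) (FF x a m) UHP := by
  have h1 : ContDiff ℝ (⊤ : ℕ∞) (fun z : ℂ => (z.im : ℂ)) := (ofRealCLM.comp imCLM).contDiff
  have hs' : Summable fun i => ‖a i‖ * (‖x i‖⁻¹) ^ (1 + (m + 1)) := by
    convert hs using 4; ring
  exact ((h1.pow (m + 1)).div_const _).contDiffOn.mul (TT_contDiffOn_top hx hs')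

lemma FF_dbar {x : ι → Fin 2 → ℤ} (hx : ∀ i, x i ≠ 0) {a : ι → ℂ} {m : ℕ}
    (hs : Summable fun i => ‖a i‖ * (‖x i‖⁻¹) ^ (m + 2)) {z : ℂ} (hz : z ∈ UHP) :
    pdU (FF x a m) z + I * pdV (FF x a m) z = I * (z.im : ℂ) ^ m * TT x a 0 (m + 2) z := by
  have hs' : Summable fun i => ‖a i‖ * (‖x i‖⁻¹) ^ (1 + (m + 1)) := by
    convert hs using 4; ring
  have hs0 : Summable fun i => ‖a i‖ * (‖x i‖⁻¹) ^ (0 + (m + 2)) := by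
    convert hs using 4; ring
  have hs2 := shift_summable hx hs' (m + 1)
  have hs2' : Summable fun i => ‖-((m + 1 : ℕ) : ℂ) * x i 0 * a i‖ *
    (‖x i‖⁻¹) ^ (1 + (m + 1 + 1)) := hs2
  have hm : (m : ℂ) + 1 ≠ 0 := by exact_mod_cast Nat.succ_ne_zero m
  have hD := ((hasFDerivAt_im_pow z (m + 1)).mul_const (((m : ℂ) + 1)⁻¹)).mul
    (TT_hasFDerivAt hx hs' hz)
  have hD' : HasFDerivAt (FF x a m) _ z := hD
  -- relation between the series
  have hrel : TT x a 0 (m + 2) z = TT x a 1 (m + 1) z -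
      2 * I * (z.im : ℂ) / ((m : ℂ) + 1) *
        TT x (fun i => -((m + 1 : ℕ) : ℂ) * x i 0 * a i) 1 (m + 1 + 1) z := by
    unfold TT
    rw [← tsum_mul_left, ← (TT_summable hx hs' hz).of_norm.tsum_sub
      ((TT_summable hx hs2' hz).of_norm.mul_left _)]
    refine tsum_congr fun i => ?_
    have h1 : (x i 0 : ℂ) * z + x i 1 ≠ 0 := denom_ne hz (hx i)
    have h2 : (x i 0 : ℂ) * conj z + x i 1 ≠ 0 := by
      rw [conj_denom]; exact (map_ne_zero _).2 h1
    have h3 : (2 * I * (z.im : ℂ)) = z - conj z := by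
      rw [Complex.sub_conj]; push_cast; ring
    rw [h3]
    simp only [tm]
    push_cast
    have h4 : ((x i 0 : ℂ) * conj z + x i 1)⁻¹ ^ (m + 1) =
        ((x i 0 : ℂ) * conj z + x i 1)⁻¹ ^ (m + 2) * ((x i 0 : ℂ) * conj z + x i 1) := by
      rw [pow_succ _ (m + 1), mul_assoc, inv_mul_cancel₀ h2, mul_one]
    have h5 : (((x i 0 : ℂ) * conj z + x i 1) + x i 0 * (z - conj z)) *
        ((x i 0 : ℂ) * z + x i 1)⁻¹ = 1 := by
      rw [show ((x i 0 : ℂ) * conj z + x i 1) + x i 0 * (z - conj z) =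
        (x i 0 : ℂ) * z + x i 1 by ring, mul_inv_cancel₀ h1]
    have h6 : (z - conj z) / ((m : ℂ) + 1) * (-((m : ℂ) + 1) * x i 0 * a i *
        (((x i 0 : ℂ) * z + x i 1)⁻¹ ^ 1 * ((x i 0 : ℂ) * conj z + x i 1)⁻¹ ^ (m + 1 + 1))) =
        - (x i 0 * (z - conj z) * ((x i 0 : ℂ) * z + x i 1)⁻¹ * a i *
          ((x i 0 : ℂ) * conj z + x i 1)⁻¹ ^ (m + 2)) := by
      rw [div_mul_eq_mul_div, div_eq_iff hm]
      ring
    rw [h6, h4]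
    linear_combination (-(a i * ((x i 0 : ℂ) * conj z + x i 1)⁻¹ ^ (m + 2))) * h5
  rw [hrel]
  simp only [pdU, pdV]
  rw [hD'.fderiv]
  simp
  field_simp
  ring_nf
  simp only [I_sq]
  ring

lemma FF_laplacian {x : ι → Fin 2 → ℤ} (hx : ∀ i, x i ≠ 0) {a : ι → ℂ} {m : ℕ}
    (hs : Summable fun i => ‖a i‖ * (‖x i‖⁻¹) ^ (m + 2)) {z : ℂ} (hz : z ∈ UHP) :
    hypLaplacian (-(m : ℤ)) (FF x a m) z = 0 := by
  have hs0 : Summable fun i => ‖a i‖ * (‖x i‖⁻¹) ^ (0 + (m + 2)) := by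
    convert hs using 4; ring
  have hnhds : UHP ∈ nhds z := isOpen_UHP.mem_nhds hz
  have hC : ContDiffAt ℝ 2 (FF x a m) z :=
    (contDiffOn_infty.1 (FF_contDiffOn hx hs) 2).contDiffAt hnhds
  have hsym : IsSymmSndFDerivAt ℝ (FF x a m) z := hC.isSymmSndFDerivAt (by simp)
  have hd : DifferentiableAt ℝ (fderiv ℝ (FF x a m)) z :=
    (hC.fderiv_right (m := 1) one_add_one_eq_two.le).differentiableAt (by simp)
  have happ : ∀ e : ℂ, HasFDerivAt (fun w => fderiv ℝ (FF x a m) w e)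
      ((fderiv ℝ (fderiv ℝ (FF x a m)) z).flip e) z := by
    intro e
    refine (hd.hasFDerivAt.clm_apply (hasFDerivAt_const e z)).congr_fderiv ?_
    ext w <;> simp
  -- the first order operator
  have hH : HasFDerivAt (fun w => pdU (FF x a m) w + I * pdV (FF x a m) w)
      ((fderiv ℝ (fderiv ℝ (FF x a m)) z).flip 1 +
        I • (fderiv ℝ (fderiv ℝ (FF x a m)) z).flip I) z :=
    (happ 1).add ((happ I).const_mul I)
  have hG := ((hasFDerivAt_im_pow z m).const_mul I).mul (TT_hasFDerivAt hx hs0 hz)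
  have hHG : (fun w => pdU (FF x a m) w + I * pdV (FF x a m) w) =ᶠ[nhds z]
      fun w => I * (w.im : ℂ) ^ m * TT x a 0 (m + 2) w := by
    filter_upwards [hnhds] with w hw using FF_dbar hx hs hw
  have huniq := (hH.congr_of_eventuallyEq hHG.symm).unique hG
  have e1 := congrArg (fun L : ℂ →L[ℝ] ℂ => L 1) huniq
  have e2 := congrArg (fun L : ℂ →L[ℝ] ℂ => L I) huniq
  simp only [add_apply, smul_apply,
    ContinuousLinearMap.flip_apply] at e1 e2
  have hs12 := hsym 1 I
  have hT0 : TT x (fun i => -((0 : ℕ) : ℂ) * x i 0 * a i) (0 + 1) (m + 2) z = 0 := by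
    simp [TT]
  rw [hT0] at e1 e2
  have huu : pdU (pdU (FF x a m)) z = fderiv ℝ (fderiv ℝ (FF x a m)) z 1 1 := by
    show fderiv ℝ (fun w => fderiv ℝ (FF x a m) w 1) z 1 = _
    rw [(happ 1).fderiv]; rfl
  have hvv : pdV (pdV (FF x a m)) z = fderiv ℝ (fderiv ℝ (FF x a m)) z I I := by
    show fderiv ℝ (fun w => fderiv ℝ (FF x a m) w I) z I = _
    rw [(happ I).fderiv]; rfl
  unfold hypLaplacian
  rw [FF_dbar hx hs hz, huu, hvv]
  simp at e1 e2
  rw [hs12] at e1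
  have e3 : fderiv ℝ (fderiv ℝ (FF x a m)) z 1 1 + fderiv ℝ (fderiv ℝ (FF x a m)) z I I =
      (m : ℂ) * (z.im : ℂ) ^ (m - 1) * TT x a 0 (m + 2) z := by
    generalize TT x (fun i => (-2 + -(m : ℂ)) * (x i 0 : ℂ) * a i) 0 (m + 2 + 1) z = T2 at e1 e2
    linear_combination e1 - I * e2 + (fderiv ℝ (fderiv ℝ (FF x a m)) z I I -
      (m : ℂ) * (z.im : ℂ) ^ (m - 1) * TT x a 0 (m + 2) z + I * (z.im : ℂ) ^ m * T2) * I_sq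
  rw [e3]
  push_cast
  rcases m with _ | m
  · simp
  · simp only [Nat.add_sub_cancel]
    linear_combination (-((m + 1 : ℕ) : ℂ) * z.im ^ (m + 2) * TT x a 0 (m + 1 + 2) z) * I_sq

end EisAux

namespace EisAux

open ComplexConjugate

/-- Bottom row. -/
def row (g : SL2Z) : Fin 2 → ℤ := fun j => mEntry g 1 j

lemma mEntry_mul (g h : SL2Z) (i j : Fin 2) :
    mEntry (g * h) i j = mEntry g i 0 * mEntry h 0 j + mEntry g i 1 * mEntry h 1 j := by
  simp [mEntry, Matrix.mul_apply, Fin.sum_univ_two]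

lemma mEntry_det (g : SL2Z) :
    mEntry g 0 0 * mEntry g 1 1 - mEntry g 0 1 * mEntry g 1 0 = 1 := by
  have := g.det_coe
  rwa [Matrix.det_fin_two] at this

lemma mEntry_inv (g : SL2Z) : mEntry g⁻¹ 0 0 = mEntry g 1 1 ∧ mEntry g⁻¹ 0 1 = -mEntry g 0 1 ∧
    mEntry g⁻¹ 1 0 = -mEntry g 1 0 ∧ mEntry g⁻¹ 1 1 = mEntry g 0 0 := by
  rw [Matrix.SpecialLinearGroup.SL2_inv_expl]
  exact ⟨rfl, rfl, rfl, rfl⟩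

lemma row_ne (g : SL2Z) : row g ≠ 0 := by
  intro h
  have h0 : mEntry g 1 0 = 0 := congrFun h 0
  have h1 : mEntry g 1 1 = 0 := congrFun h 1
  have := mEntry_det g
  simp [h0, h1] at this

/-- Automorphy factor. -/
def jj (g : SL2Z) (z : ℂ) : ℂ := (mEntry g 1 0 : ℂ) * z + mEntry g 1 1

/-- Moebius action. -/
def act (g : SL2Z) (z : ℂ) : ℂ := ((mEntry g 0 0 : ℂ) * z + mEntry g 0 1) / jj g z

lemma det_c (g : SL2Z) : (mEntry g 0 0 : ℂ) * mEntry g 1 1 - mEntry g 0 1 * mEntry g 1 0 = 1 := by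
  exact_mod_cast mEntry_det g

lemma slashM_eq (k : ℤ) (g : SL2Z) (f : ℂ → ℂ) (z : ℂ) :
    slashM k g f z = (jj g z) ^ (-k) * f (act g z) := by
  unfold slashM slash
  rw [det_c, one_cpow, one_mul]
  rfl

lemma jj_ne (g : SL2Z) {z : ℂ} (hz : z ∈ UHP) : jj g z ≠ 0 := denom_ne hz (row_ne g)

lemma act_im (g : SL2Z) (z : ℂ) : (act g z).im = z.im / normSq (jj g z) := by
  have h : (mEntry g 0 0 : ℝ) * mEntry g 1 1 - mEntry g 0 1 * mEntry g 1 0 = 1 := by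
    exact_mod_cast mEntry_det g
  rw [act, Complex.div_im, ← sub_div]
  congr 1
  simp [jj]
  linear_combination z.im * h

lemma act_mem (g : SL2Z) {z : ℂ} (hz : z ∈ UHP) : act g z ∈ UHP := by
  show 0 < (act g z).im
  rw [act_im]
  exact div_pos hz (normSq_pos.2 (jj_ne g hz))

lemma jj_mul (g h : SL2Z) {z : ℂ} (hz : z ∈ UHP) :
    jj (g * h) z = jj g (act h z) * jj h z := by
  have := jj_ne h hz
  conv_rhs => rw [jj, act]
  field_simp
  simp only [jj, mEntry_mul]
  push_cast
  ring

lemma act_mul (g h : SL2Z) {z : ℂ} (hz : z ∈ UHP) : act (g * h) z = act g (act h z) := by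
  have h1 := jj_ne h hz
  have h2 := jj_ne g (act_mem h hz)
  have h3 := jj_ne (g * h) hz
  rw [act, div_eq_iff h3, jj_mul g h hz]
  conv_rhs => rw [act, ← mul_assoc, div_mul_cancel₀ _ h2, act]
  field_simp
  simp only [jj, mEntry_mul]
  push_cast
  ring

lemma slashM_mul (k : ℤ) (g h : SL2Z) (f : ℂ → ℂ) {z : ℂ} (hz : z ∈ UHP) :
    slashM k (g * h) f z = slashM k h (slashM k g f) z := by
  simp only [slashM_eq]
  rw [jj_mul g h hz, act_mul g h hz, mul_zpow]
  ring

/-- The seed function. -/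
def seed (k : ℤ) : ℂ → ℂ := fun z => (z.im : ℂ) ^ (1 - k) / ((1 : ℂ) - (k : ℂ))

lemma slashM_seed (m : ℕ) (g : SL2Z) (z : ℂ) :
    slashM (-(m : ℤ)) g (seed (-(m : ℤ))) z =
      (z.im : ℂ) ^ (m + 1) / ((m : ℂ) + 1) * tm (row g) 1 (m + 1) z := by
  rw [slashM_eq, seed, act_im, neg_neg, zpow_natCast,
    show (1 - -(m : ℤ)) = ((m + 1 : ℕ) : ℤ) by push_cast; ring, zpow_natCast]
  push_cast
  have h1 : ((normSq (jj g z) : ℝ) : ℂ) = jj g z * conj (jj g z) := (mul_conj _).symm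
  have h2 : tm (row g) 1 (m + 1) z = (jj g z)⁻¹ * ((conj (jj g z))⁻¹) ^ (m + 1) := by
    rw [tm, conj_denom, pow_one]; rfl
  rw [h1, h2, sub_neg_eq_add, add_comm (1 : ℂ)]
  by_cases hj : jj g z = 0
  · simp [hj]
  · rw [div_eq_mul_inv (z.im : ℂ), mul_pow, mul_inv, mul_pow, pow_succ ((jj g z)⁻¹)]
    have : jj g z ^ m * (jj g z)⁻¹ ^ m = 1 := by
      rw [← mul_pow, mul_inv_cancel₀ hj, one_pow]
    linear_combination ((z.im : ℂ) ^ (m + 1) / ((m : ℂ) + 1) * (jj g z)⁻¹ *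
      ((conj (jj g z))⁻¹) ^ (m + 1)) * this

/-! ### groups -/

lemma G0_mul {N : ℕ} {g h : SL2Z} (hg : g ∈ Gamma0Set N) (hh : h ∈ Gamma0Set N) :
    g * h ∈ Gamma0Set N := by
  show (N : ℤ) ∣ _
  rw [mEntry_mul]
  exact dvd_add (Dvd.dvd.mul_right hg _) (Dvd.dvd.mul_left hh _)

lemma G0_inv {N : ℕ} {g : SL2Z} (hg : g ∈ Gamma0Set N) : g⁻¹ ∈ Gamma0Set N := by
  show (N : ℤ) ∣ _
  rw [(mEntry_inv g).2.2.1]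
  exact (dvd_neg).2 hg

lemma Ginf_mul {g h : SL2Z} (hg : g ∈ GammaInfSet) (hh : h ∈ GammaInfSet) :
    g * h ∈ GammaInfSet := by
  have h1 : mEntry g 1 0 = 0 := hg
  have h2 : mEntry h 1 0 = 0 := hh
  show mEntry (g * h) 1 0 = 0
  rw [mEntry_mul, h1, h2]; simp

lemma Ginf_inv {g : SL2Z} (hg : g ∈ GammaInfSet) : g⁻¹ ∈ GammaInfSet := by
  have h1 : mEntry g 1 0 = 0 := hg
  show mEntry g⁻¹ 1 0 = 0
  rw [(mEntry_inv g).2.2.1, h1]; simp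

lemma Gc_mul {N : ℕ} {γ g h : SL2Z} (hg : g ∈ GammaCusp N γ) (hh : h ∈ GammaCusp N γ) :
    g * h ∈ GammaCusp N γ := by
  refine ⟨G0_mul hg.1 hh.1, ?_⟩
  have := Ginf_mul hg.2 hh.2
  convert this using 1
  group

lemma Gc_inv {N : ℕ} {γ g : SL2Z} (hg : g ∈ GammaCusp N γ) : g⁻¹ ∈ GammaCusp N γ := by
  refine ⟨G0_inv hg.1, ?_⟩
  have := Ginf_inv hg.2
  convert this using 1
  group

lemma one_mem_G0 (N : ℕ) : (1 : SL2Z) ∈ Gamma0Set N := by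
  show (N : ℤ) ∣ _
  simp [mEntry]

lemma one_mem_Gc (N : ℕ) (γ : SL2Z) : (1 : SL2Z) ∈ GammaCusp N γ := by
  refine ⟨one_mem_G0 N, ?_⟩
  simp [GammaInfSet, mEntry]

lemma neg_one_mem_Gc (N : ℕ) (γ : SL2Z) : (-1 : SL2Z) ∈ GammaCusp N γ := by
  refine ⟨?_, ?_⟩
  · show (N : ℤ) ∣ _
    simp [mEntry]
  · simp [GammaInfSet, mEntry]

lemma chi_mul {N : ℕ} (χ : DirichletCharacter ℂ N) {g : SL2Z} (hg : g ∈ Gamma0Set N) (h : SL2Z) :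
    chiOf χ (g * h) = chiOf χ g * chiOf χ h := by
  unfold chiOf
  rw [← map_mul, mEntry_mul]
  congr 1
  have : ((mEntry g 1 0 : ℤ) : ZMod N) = 0 := (ZMod.intCast_zmod_eq_zero_iff_dvd _ _).2 hg
  push_cast
  rw [this]; ring

lemma chi_one {N : ℕ} (χ : DirichletCharacter ℂ N) : chiOf χ 1 = 1 := by
  simp [chiOf, mEntry]

lemma chi_norm_le {N : ℕ} (χ : DirichletCharacter ℂ N) (g : SL2Z) : ‖chiOf χ g‖ ≤ 1 :=
  DirichletCharacter.norm_le_one χ _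

lemma chi_conj {N : ℕ} (χ : DirichletCharacter ℂ N) {g : SL2Z} (hg : g ∈ Gamma0Set N) :
    conj (chiOf χ g) * chiOf χ g = 1 := by
  have h1 : chiOf χ g * chiOf χ g⁻¹ = 1 := by rw [← chi_mul χ hg, mul_inv_cancel, chi_one]
  have h2 := congrArg norm h1
  rw [norm_mul, norm_one] at h2
  have h3 : ‖chiOf χ g‖ = 1 := by
    nlinarith [chi_norm_le χ g, chi_norm_le χ g⁻¹, norm_nonneg (chiOf χ g),
      norm_nonneg (chiOf χ g⁻¹)]
  rw [mul_comm, mul_conj, normSq_eq_norm_sq, h3]; simp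

lemma rows_eq {g h : SL2Z} (e : row g = row h) : g * h⁻¹ ∈ GammaInfSet := by
  have h0 : mEntry g 1 0 = mEntry h 1 0 := congrFun e 0
  have h1 : mEntry g 1 1 = mEntry h 1 1 := congrFun e 1
  show mEntry _ 1 0 = 0
  rw [mEntry_mul, (mEntry_inv h).1, (mEntry_inv h).2.2.1, h0, h1]
  ring

lemma reps_eq {N : ℕ} {γρ : SL2Z} {R : Set SL2Z} (hR : IsCosetReps N γρ R) {r s : SL2Z}
    (hr : r ∈ R) (hs : s ∈ R) (h : r * s⁻¹ ∈ GammaCusp N γρ) : r = s := by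
  refine (hR.2 r (hR.1 hr)).unique ⟨hr, 1, one_mem_Gc _ _, by simp⟩ ⟨hs, _, h, by simp⟩

lemma row_inj {N : ℕ} {γρ : SL2Z} {R : Set SL2Z} (hR : IsCosetReps N γρ R) (γ : SL2Z) :
    Function.Injective (fun r : R => row (γρ⁻¹ * (r : SL2Z) * γ)) := by
  intro r s h
  have h1 := rows_eq h
  apply Subtype.ext
  refine reps_eq hR r.2 s.2 ⟨G0_mul (hR.1 r.2) (G0_inv (hR.1 s.2)), ?_⟩
  convert h1 using 1
  group

lemma row_mul_inf {t : SL2Z} (ht : t ∈ GammaInfSet) (g : SL2Z) :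
    (row (t * g) = row g) ∨ (row (t * g) = - row g) := by
  have h0 : mEntry t 1 0 = 0 := ht
  have hd := mEntry_det t
  rw [h0, mul_zero, sub_zero, mul_comm] at hd
  rcases Int.eq_one_or_neg_one_of_mul_eq_one hd with h | h
  · left
    funext j
    simp [row, mEntry_mul, h0, h]
  · right
    funext j
    simp [row, mEntry_mul, h0, h]

lemma tm_neg (x : Fin 2 → ℤ) (l : ℕ) (z : ℂ) :
    tm (-x) 1 (2 * l + 1) z = tm x 1 (2 * l + 1) z := by
  simp only [tm, Pi.neg_apply]
  push_cast
  rw [show -(x 0 : ℂ) * z + -(x 1 : ℂ) = -((x 0 : ℂ) * z + x 1) by ring,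
    show -(x 0 : ℂ) * conj z + -(x 1 : ℂ) = -((x 0 : ℂ) * conj z + x 1) by ring, inv_neg, inv_neg,
    (odd_two_mul_add_one l).neg_pow, pow_one, pow_one, neg_mul_neg]

lemma tm_inf {t : SL2Z} (ht : t ∈ GammaInfSet) (g : SL2Z) (l : ℕ) (z : ℂ) :
    tm (row (t * g)) 1 (2 * l + 1) z = tm (row g) 1 (2 * l + 1) z := by
  rcases row_mul_inf ht g with h | h <;> rw [h]
  exact tm_neg _ _ _

lemma base_summable {ι : Type*} {x : ι → Fin 2 → ℤ} (hx : Function.Injective x) {a : ι → ℂ}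
    (ha : ∀ i, ‖a i‖ ≤ 1) {m : ℕ} (hm : 1 ≤ m) :
    Summable fun i => ‖a i‖ * (‖x i‖⁻¹) ^ (m + 2) := by
  have h1 := EisensteinSeries.summable_one_div_norm_rpow (k := ((m + 2 : ℕ) : ℝ))
    (by push_cast; have : (1 : ℝ) ≤ m := by exact_mod_cast hm
        linarith)
  refine Summable.of_nonneg_of_le (fun _ => by positivity) (fun i => ?_) (h1.comp_injective hx)
  simp only [Function.comp]
  rw [Real.rpow_neg (norm_nonneg _), Real.rpow_natCast, inv_pow]
  exact mul_le_of_le_one_left (by positivity) (ha i)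

lemma FEis_eq (m N : ℕ) (χ : DirichletCharacter ℂ N) (γρ : SL2Z) (R : Set SL2Z) :
    FEis (-(m : ℤ)) N χ γρ R =
      FF (fun r : R => row (γρ⁻¹ * (r : SL2Z))) (fun r => conj (chiOf χ (r : SL2Z))) m := by
  funext z
  unfold FEis FF TT
  rw [← tsum_mul_left]
  refine tsum_congr fun r => ?_
  have := slashM_seed m (γρ⁻¹ * (r : SL2Z)) z
  unfold seed at this
  rw [this]
  ring

lemma slashM_FEis (m N : ℕ) (χ : DirichletCharacter ℂ N) (γρ : SL2Z) (R : Set SL2Z) (γ : SL2Z)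
    {z : ℂ} (hz : z ∈ UHP) :
    slashM (-(m : ℤ)) γ (FEis (-(m : ℤ)) N χ γρ R) z =
      FF (fun r : R => row (γρ⁻¹ * (r : SL2Z) * γ)) (fun r => conj (chiOf χ (r : SL2Z))) m z := by
  rw [slashM_eq]
  unfold FEis FF TT
  rw [← tsum_mul_left, ← tsum_mul_left]
  refine tsum_congr fun r => ?_
  have h1 := slashM_seed m (γρ⁻¹ * (r : SL2Z) * γ) z
  rw [slashM_mul _ _ _ _ hz, slashM_eq] at h1
  unfold seed at h1
  linear_combination (conj (chiOf χ (r : SL2Z))) * h1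

lemma slashM_inv {l N : ℕ} (χ : DirichletCharacter ℂ N) {γρ : SL2Z}
    (htriv : ∀ g ∈ GammaCusp N γρ, chiOf χ g = 1) {R : Set SL2Z} (hR : IsCosetReps N γρ R)
    {γ : SL2Z} (hγ : γ ∈ Gamma0Set N) {z : ℂ} (hz : z ∈ UHP) :
    slashM (-((2 * l : ℕ) : ℤ)) γ (FEis (-((2 * l : ℕ) : ℤ)) N χ γρ R) z =
      chiOf χ γ * FEis (-((2 * l : ℕ) : ℤ)) N χ γρ R z := by
  rw [slashM_FEis _ _ _ _ _ _ hz, FEis_eq]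
  have hex : ∀ r : R, ∃ s : R, ∃ h ∈ GammaCusp N γρ, (r : SL2Z) * γ = h * s := by
    intro r
    obtain ⟨s, ⟨hs, h, hh, e⟩, -⟩ := hR.2 ((r : SL2Z) * γ) (G0_mul (hR.1 r.2) hγ)
    exact ⟨⟨s, hs⟩, h, hh, e⟩
  choose σ h hh e using hex
  have hinj : Function.Injective σ := by
    intro r r' hrr
    apply Subtype.ext
    refine reps_eq hR r.2 r'.2 ?_
    have h1 : (r : SL2Z) = h r * σ r * γ⁻¹ := by rw [← e]; group
    have h2 : (r' : SL2Z) = h r' * σ r * γ⁻¹ := by rw [hrr, ← e]; group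
    have h3 : (r : SL2Z) * (r' : SL2Z)⁻¹ = h r * (h r')⁻¹ := by rw [h1, h2]; group
    rw [h3]
    exact Gc_mul (hh r) (Gc_inv (hh r'))
  have hsurj : Function.Surjective σ := by
    intro s
    obtain ⟨r, ⟨hr, t, ht, et⟩, -⟩ := hR.2 ((s : SL2Z) * γ⁻¹) (G0_mul (hR.1 s.2) (G0_inv hγ))
    refine ⟨⟨r, hr⟩, ?_⟩
    apply Subtype.ext
    refine reps_eq hR (σ ⟨r, hr⟩).2 s.2 ?_
    have h1 : (σ ⟨r, hr⟩ : SL2Z) = (h ⟨r, hr⟩)⁻¹ * (r * γ) := by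
      have := e ⟨r, hr⟩
      simp only at this
      rw [this]; group
    have h2 : (s : SL2Z) = t * r * γ := by rw [← et]; group
    have h3 : (σ ⟨r, hr⟩ : SL2Z) * (s : SL2Z)⁻¹ = (h ⟨r, hr⟩)⁻¹ * t⁻¹ := by rw [h1, h2]; group
    rw [h3]
    exact Gc_mul (Gc_inv (hh _)) (Gc_inv ht)
  have hbij : Function.Bijective σ := ⟨hinj, hsurj⟩
  unfold FF TT
  rw [mul_left_comm]
  congr 1
  rw [← tsum_mul_left]
  conv_rhs => rw [← (Equiv.ofBijective σ hbij).tsum_eq]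
  refine tsum_congr fun r => ?_
  simp only [Equiv.ofBijective_apply]
  have h1 : γρ⁻¹ * (r : SL2Z) * γ = (γρ⁻¹ * h r * γρ) * (γρ⁻¹ * (σ r : SL2Z)) := by
    rw [mul_assoc, e r]; group
  rw [h1, tm_inf (hh r).2]
  have h2 : chiOf χ (r : SL2Z) * chiOf χ γ = chiOf χ (σ r : SL2Z) := by
    rw [← chi_mul χ (hR.1 r.2), e r, chi_mul χ (hh r).1, htriv _ (hh r), one_mul]
  rw [← h2, map_mul]
  linear_combination (-(conj (chiOf χ (r : SL2Z))) *
    tm (row (γρ⁻¹ * (σ r : SL2Z))) 1 (2 * l + 1) z) * chi_conj χ hγ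

end EisAux

namespace EisAux

open ComplexConjugate

/-- Majorant on `ℤ²`. -/
def gg (p : ℤ × ℤ) : ℝ := 1 / ((p.1 : ℝ) ^ 2 + 1) * (1 / ((p.2 : ℝ) ^ 2 + 1))

lemma gg_nonneg (p : ℤ × ℤ) : 0 ≤ gg p := by unfold gg; positivity

lemma gg_summable : Summable gg := by
  have h : Summable fun n : ℤ => 1 / ((n : ℝ) ^ 2 + 1) := by
    have h1 : Summable fun n : ℤ => 1 / (n : ℝ) ^ 2 :=
      Real.summable_one_div_int_pow.2 (by norm_num)
    have h2 : Summable fun n : ℤ => if n = 0 then (1 : ℝ) else 0 := (hasSum_ite_eq 0 1).summable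
    refine Summable.of_nonneg_of_le (fun _ => by positivity) (fun n => ?_) (h1.add h2)
    by_cases hn : n = 0
    · simp [hn]
    · have : (0 : ℝ) < (n : ℝ) ^ 2 := by positivity
      simp only [hn, if_false, add_zero]
      gcongr
      linarith
  exact Summable.mul_of_nonneg h h (fun _ => by positivity) (fun _ => by positivity)

lemma sq_norm_denom (x : Fin 2 → ℤ) (z : ℂ) : ‖(x 0 : ℂ) * z + x 1‖ ^ 2 =
    ((x 0 : ℝ) * z.re + x 1) ^ 2 + (x 0 : ℝ) ^ 2 * z.im ^ 2 := by
  rw [← normSq_eq_norm_sq, normSq_apply]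
  simp
  ring

lemma growth_nonzero (x : Fin 2 → ℤ) (hx : x 0 ≠ 0) {z : ℂ} (hz : 1 ≤ z.im) (l : ℕ)
    (hl : 1 ≤ l) : z.im ^ (2 * l + 1) * (‖(x 0 : ℂ) * z + x 1‖⁻¹) ^ (2 * l + 2) ≤
      z.im ^ l * (8 * gg (x 0, x 1 + ⌊(x 0 : ℝ) * z.re⌋)) := by
  obtain ⟨n, rfl⟩ : ∃ n, l = n + 1 := ⟨l - 1, by omega⟩
  rw [show 2 * (n + 1) + 2 = 2 * (n + 2) by ring, pow_mul, inv_pow, sq_norm_denom]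
  have hc : (1 : ℝ) ≤ (x 0 : ℝ) ^ 2 := by
    have : (1 : ℤ) ≤ (x 0) ^ 2 := by have := sq_pos_of_ne_zero hx; omega
    exact_mod_cast this
  have hf0 := Int.floor_le ((x 0 : ℝ) * z.re)
  have hf1 := Int.lt_floor_add_one ((x 0 : ℝ) * z.re)
  unfold gg
  push_cast
  set e : ℝ := (x 1 : ℝ) + ⌊(x 0 : ℝ) * z.re⌋ with he
  set y : ℝ := (x 0 : ℝ) * z.re + x 1 with hy
  set c : ℝ := (x 0 : ℝ) with hcdef
  set v := z.im with hv
  set Q : ℝ := y ^ 2 + c ^ 2 * v ^ 2 with hQ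
  have hv0 : 0 < v := by linarith
  have hvv : v ≤ v ^ 2 := by nlinarith
  have hcv : v ^ 2 ≤ c ^ 2 * v ^ 2 := by nlinarith [sq_nonneg v]
  have hcQ : c ^ 2 * v ^ 2 ≤ Q := by nlinarith [sq_nonneg y]
  have hvQ : v ≤ Q := by linarith
  have hyQ : y ^ 2 + 1 ≤ Q := by linarith
  have hQ0 : 0 < Q := by linarith
  have heQ : e ^ 2 + 1 ≤ 3 * Q := by
    have h1 : 0 ≤ y - e := by rw [hy, he]; linarith
    have h2 : y - e ≤ 1 := by rw [hy, he]; linarith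
    nlinarith [sq_nonneg (y - (e - y)), sq_nonneg (e - y), sq_nonneg (e + y - y - y + y)]
  have key : (v ^ 2 * (c ^ 2 + 1)) * (e ^ 2 + 1) ≤ 8 * Q ^ 2 := by
    have h1 : v ^ 2 * (c ^ 2 + 1) ≤ 2 * Q := by nlinarith
    calc (v ^ 2 * (c ^ 2 + 1)) * (e ^ 2 + 1) ≤ (2 * Q) * (3 * Q) := by gcongr
      _ ≤ _ := by nlinarith
  have hpow : v ^ n ≤ Q ^ n := by gcongr
  have fin : v ^ (2 * (n + 1) + 1) * ((c ^ 2 + 1) * (e ^ 2 + 1)) ≤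
      v ^ (n + 1) * 8 * Q ^ (n + 2) := by
    calc v ^ (2 * (n + 1) + 1) * ((c ^ 2 + 1) * (e ^ 2 + 1))
        = v ^ (n + 1) * (v ^ n * ((v ^ 2 * (c ^ 2 + 1)) * (e ^ 2 + 1))) := by ring
      _ ≤ v ^ (n + 1) * (Q ^ n * (8 * Q ^ 2)) := by gcongr
      _ = _ := by ring
  rw [inv_pow, ← div_eq_mul_inv, div_le_iff₀ (by positivity)]
  have hA : 0 < (c ^ 2 + 1) * (e ^ 2 + 1) := by positivity
  rw [← le_div_iff₀ hA] at fin
  refine fin.trans_eq ?_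
  field_simp

lemma growth_main {l N : ℕ} (hl : 1 ≤ l) (χ : DirichletCharacter ℂ N) {γρ : SL2Z}
    {R : Set SL2Z} (hR : IsCosetReps N γρ R) :
    ∃ C : ℝ, 0 ≤ C ∧ ∀ γν : SL2Z, ∀ δ : ℝ, 0 ≤ δ → (CuspEquiv N γν γρ → δ = 1) →
      ∀ z ∈ UHP, 1 ≤ z.im →
      ‖slashM (-((2 * l : ℕ) : ℤ)) γν (FEis (-((2 * l : ℕ) : ℤ)) N χ γρ R) z‖ ≤
        C * (δ * z.im ^ (2 * l + 1) + z.im ^ l) := by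
  refine ⟨8 * ∑' p, gg p, mul_nonneg (by norm_num) (tsum_nonneg gg_nonneg), ?_⟩
  intro γν δ hδ hδ1 z hz hz1
  rw [slashM_FEis _ _ _ _ _ _ hz]
  have hz0 : 0 < z.im := hz
  set x : R → Fin 2 → ℤ := fun r : R => row (γρ⁻¹ * (r : SL2Z) * γν) with hxdef
  set φ : R → ℤ × ℤ := fun r => (x r 0, x r 1 + ⌊(x r 0 : ℝ) * z.re⌋) with hφ
  have hφi : Function.Injective φ := by
    intro r s h
    apply row_inj hR γν
    have h0 : x r 0 = x s 0 := congrArg Prod.fst h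
    have h1 : x r 1 + ⌊(x r 0 : ℝ) * z.re⌋ = x s 1 + ⌊(x s 0 : ℝ) * z.re⌋ := congrArg Prod.snd h
    rw [h0] at h1
    funext j
    fin_cases j
    · exact h0
    · exact add_right_cancel h1
  set B : ℝ := δ * z.im ^ (2 * l + 1) + z.im ^ l with hB
  have hB0 : 0 ≤ B := by positivity
  have hsum : Summable fun r => B * (8 * gg (φ r)) :=
    ((gg_summable.comp_injective hφi).mul_left 8).mul_left B
  have hle : ∑' r, B * (8 * gg (φ r)) ≤ 8 * (∑' p, gg p) * B := by
    rw [tsum_mul_left, tsum_mul_left]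
    have := tsum_comp_le_tsum_of_inj gg_summable gg_nonneg hφi
    have h2 : ∑' r, gg (φ r) ≤ ∑' p, gg p := this
    calc B * (8 * ∑' r, gg (φ r)) ≤ B * (8 * ∑' p, gg p) := by gcongr
      _ = _ := by ring
  refine le_trans ?_ hle
  unfold FF TT
  rw [← tsum_mul_left]
  refine tsum_of_norm_bounded hsum.hasSum fun r => ?_
  have hm1 : ‖((2 * l : ℕ) : ℂ) + 1‖ = (2 * l : ℝ) + 1 := by
    have : ((2 * l : ℕ) : ℂ) + 1 = ((2 * l + 1 : ℕ) : ℂ) := by push_cast; ring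
    rw [this, Complex.norm_natCast]; push_cast; ring
  have hlem : z.im ^ (2 * l + 1) * (‖(x r 0 : ℂ) * z + x r 1‖⁻¹) ^ (2 * l + 2) ≤
      B * (8 * gg (φ r)) := by
    by_cases h0 : x r 0 = 0
    · have hce : CuspEquiv N γν γρ := by
        refine ⟨(r : SL2Z)⁻¹, G0_inv (hR.1 r.2), γρ⁻¹ * (r : SL2Z) * γν, h0, ?_⟩
        group
      have hd : x r 1 ^ 2 = 1 := by
        have hdet := mEntry_det (γρ⁻¹ * (r : SL2Z) * γν)
        have h0' : mEntry (γρ⁻¹ * (r : SL2Z) * γν) 1 0 = 0 := h0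
        rw [h0', mul_zero, sub_zero, mul_comm] at hdet
        have h1' : x r 1 = mEntry (γρ⁻¹ * (r : SL2Z) * γν) 1 1 := rfl
        rcases Int.eq_one_or_neg_one_of_mul_eq_one hdet with h | h <;> rw [h1', h] <;> norm_num
      have hd' : (x r 1 : ℝ) ^ 2 = 1 := by exact_mod_cast hd
      have hn : ‖(x r 1 : ℂ)‖ = 1 := by
        rw [Complex.norm_intCast]
        have : |(x r 1 : ℝ)| ^ 2 = 1 := by rw [sq_abs]; exact hd'
        nlinarith [abs_nonneg (x r 1 : ℝ)]
      have hg : gg (φ r) = 1 / 2 := by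
        simp only [hφ, gg, h0]
        simp [hd']
        norm_num
      rw [hg, h0]
      simp only [Int.cast_zero, zero_mul, zero_add, hn, inv_one, one_pow, mul_one]
      rw [hB, hδ1 hce]
      have : 0 ≤ z.im ^ l := by positivity
      have : 0 ≤ z.im ^ (2 * l + 1) := by positivity
      linarith
    · refine (growth_nonzero (x r) h0 hz1 l hl).trans ?_
      have := gg_nonneg (φ r)
      have : z.im ^ l ≤ B := by
        rw [hB]
        have : 0 ≤ δ * z.im ^ (2 * l + 1) := by positivity
        linarith
      have h8 : 0 ≤ 8 * gg (φ r) := by positivity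
      exact mul_le_mul_of_nonneg_right this h8
  refine le_trans ?_ hlem
  rw [norm_mul, norm_mul, norm_div, norm_pow, norm_real, Real.norm_eq_abs, abs_of_pos hz0, hm1,
    RCLike.norm_conj, norm_tm, show 1 + (2 * l + 1) = 2 * l + 2 by ring]
  have h1 : z.im ^ (2 * l + 1) / ((2 * l : ℝ) + 1) ≤ z.im ^ (2 * l + 1) :=
    div_le_self (by positivity) (by have : (0 : ℝ) ≤ l := by positivity
                                    linarith)
  have h2 := chi_norm_le χ (r : SL2Z)
  calc _ ≤ z.im ^ (2 * l + 1) * (1 * (‖(x r 0 : ℂ) * z + x r 1‖⁻¹) ^ (2 * l + 2)) := by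
        gcongr
    _ = _ := by rw [one_mul]

/-- An element of `SL₂(ℤ)` from its entries. -/
def mk (a b c d : ℤ) (h : a * d - b * c = 1) : SL2Z :=
  ⟨!![a, b; c, d], by rw [Matrix.det_fin_two_of]; exact h⟩

lemma slash_mk (k a b c d : ℤ) (h : a * d - b * c = 1) (f : ℂ → ℂ) (z : ℂ) :
    slash k (a : ℂ) (b : ℂ) (c : ℂ) (d : ℂ) f z = slashM k (mk a b c d h) f z := rfl

lemma poly_bound {l N : ℕ} (hl : 1 ≤ l) (χ : DirichletCharacter ℂ N) {γρ : SL2Z}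
    {R : Set SL2Z} (hR : IsCosetReps N γρ R) :
    ∃ C : ℝ, 0 ≤ C ∧ ∀ γν : SL2Z, ∀ z ∈ UHP, 1 ≤ z.im →
      ‖slashM (-((2 * l : ℕ) : ℤ)) γν (FEis (-((2 * l : ℕ) : ℤ)) N χ γρ R) z‖ ≤
        C * z.im ^ (2 * l + 1) := by
  obtain ⟨C, hC, h⟩ := growth_main hl χ hR
  refine ⟨2 * C, by positivity, fun γν z hz hz1 => (h γν 1 (by norm_num) (fun _ => rfl) z hz hz1).trans ?_⟩
  have : z.im ^ l ≤ z.im ^ (2 * l + 1) := pow_le_pow_right₀ hz1 (by omega)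
  nlinarith

end EisAux

/-- **Construction of harmonic Maass forms of polynomial growth with Eisenstein
shadow** (Theorem 3.3): the series `𝓕_{k,ρ}(N,χ;τ)` converges absolutely, lies in
`H^!_k(N,χ)`, satisfies the growth estimate
`(𝓕|_k γ_ν)(τ) = O(δ_{ρ,ν} v^{1-k} + v^{-k/2})` at each cusp, hence lies in
`H^#_k(N,χ)`, and its shadow is the Eisenstein series `E_{2-k,ρ}(N,χ̄;·)`. -/
theorem eisenstein_preimage_construction
    (k : ℤ) (hk : k < 0) (N : ℕ) (hN : 1 ≤ N)
    (χ : DirichletCharacter ℂ N) (hχ : χ (-1) = (-1) ^ k)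
    (γρ : SL2Z) (htriv : ∀ g ∈ GammaCusp N γρ, chiOf χ g = 1)
    (R : Set SL2Z) (hR : IsCosetReps N γρ R) :
    (∀ τ ∈ UHP, Summable (fun r : R => ‖(starRingEnd ℂ) (chiOf χ (r : SL2Z)) *
        slashM k (γρ⁻¹ * (r : SL2Z))
          (fun z => (z.im : ℂ) ^ (1 - k) / ((1 : ℂ) - (k : ℂ))) τ‖)) ∧
    IsHarmonicMaassMG k N χ (FEis k N χ γρ R) ∧
    (∀ γν : SL2Z, ∀ δ : ℝ,
      ((CuspEquiv N γν γρ → δ = 1) ∧ (¬ CuspEquiv N γν γρ → δ = 0)) →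
      ∃ C v₀ : ℝ, ∀ τ ∈ UHP, v₀ ≤ τ.im →
        ‖slashM k γν (FEis k N χ γρ R) τ‖ ≤
          C * (δ * τ.im ^ ((1 - k : ℤ) : ℝ) + τ.im ^ (-(k : ℝ) / 2))) ∧
    IsHMFPolyGrowth k N χ (FEis k N χ γρ R) ∧
    (∀ τ ∈ UHP, xiOp k (FEis k N χ γρ R) τ = EisSeries k N (conjChar χ) γρ R τ) := by
  classical
  -- `k` is even
  have hkeven : Even k := by
    have h1 := htriv _ (EisAux.neg_one_mem_Gc N γρ)
    have h2 : chiOf χ (-1) = χ (-1) := by simp [chiOf, mEntry]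
    rw [h2, hχ] at h1
    rcases Int.even_or_odd k with h | h
    · exact h
    · rw [h.neg_one_zpow] at h1
      norm_num at h1
  obtain ⟨l, hl, rfl⟩ : ∃ l : ℕ, 1 ≤ l ∧ k = -((2 * l : ℕ) : ℤ) := by
    obtain ⟨t, ht⟩ := hkeven
    exact ⟨(-t).toNat, by omega, by omega⟩
  have hm : 1 ≤ 2 * l := by omega
  have hx : ∀ r : R, EisAux.row (γρ⁻¹ * (r : SL2Z)) ≠ 0 := fun r => EisAux.row_ne _
  have hinj : Function.Injective (fun r : R => EisAux.row (γρ⁻¹ * (r : SL2Z))) := by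
    simpa using EisAux.row_inj hR 1
  have hs := EisAux.base_summable hinj (a := fun r : R => (starRingEnd ℂ) (chiOf χ (r : SL2Z)))
    (fun r => by rw [RCLike.norm_conj]; exact EisAux.chi_norm_le χ _) hm
  obtain ⟨C, hC, hgrow⟩ := EisAux.growth_main hl χ hR
  obtain ⟨C', hC', hpoly⟩ := EisAux.poly_bound hl χ hR
  have hMG : IsHarmonicMaassMG (-((2 * l : ℕ) : ℤ)) N χ (FEis (-((2 * l : ℕ) : ℤ)) N χ γρ R) := by
    refine ⟨?_, ?_, ?_, ?_⟩
    · rw [EisAux.FEis_eq]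
      exact EisAux.FF_contDiffOn hx hs
    · intro a b c d hdet hc τ hτ
      rw [EisAux.slash_mk _ _ _ _ _ hdet]
      exact EisAux.slashM_inv χ htriv hR (γ := EisAux.mk a b c d hdet) hc hτ
    · intro τ hτ
      rw [EisAux.FEis_eq]
      exact EisAux.FF_laplacian hx hs hτ
    · intro a b c d hdet
      refine ⟨1, one_pos, C' * (2 * l + 1).factorial, 1, fun τ hτ h1 => ?_⟩
      rw [EisAux.slash_mk _ _ _ _ _ hdet]
      refine (hpoly _ τ hτ h1).trans ?_
      rw [one_mul, mul_assoc]
      have h2 := Real.pow_div_factorial_le_exp τ.im (by linarith) (2 * l + 1)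
      rw [div_le_iff₀ (by positivity)] at h2
      gcongr
      linarith
  refine ⟨?_, hMG, ?_, ⟨hMG, ?_⟩, ?_⟩
  · intro τ hτ
    have hs' : Summable fun r : R => ‖(starRingEnd ℂ) (chiOf χ (r : SL2Z))‖ *
        (‖EisAux.row (γρ⁻¹ * (r : SL2Z))‖⁻¹) ^ (1 + (2 * l + 1)) := by
      convert hs using 4; ring
    have h1 := (EisAux.TT_summable hx hs' hτ).mul_left
      ‖(τ.im : ℂ) ^ (2 * l + 1) / (((2 * l : ℕ) : ℂ) + 1)‖
    refine h1.congr fun r => ?_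
    have h2 := EisAux.slashM_seed (2 * l) (γρ⁻¹ * (r : SL2Z)) τ
    unfold EisAux.seed at h2
    rw [h2, ← norm_mul]
    congr 1
    ring
  · intro γν δ hδ
    refine ⟨C, 1, fun τ hτ h1 => ?_⟩
    have hδ0 : 0 ≤ δ := by
      by_cases h : CuspEquiv N γν γρ
      · rw [hδ.1 h]; norm_num
      · rw [hδ.2 h]
    have h2 := hgrow γν δ hδ0 hδ.1 τ hτ h1
    have e1 : (((1 - -((2 * l : ℕ) : ℤ)) : ℤ) : ℝ) = ((2 * l + 1 : ℕ) : ℝ) := by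
      push_cast; ring
    have e2 : -((-((2 * l : ℕ) : ℤ) : ℤ) : ℝ) / 2 = (l : ℝ) := by
      push_cast; ring
    rw [e1, e2, Real.rpow_natCast, Real.rpow_natCast]
    exact h2
  · intro a b c d hdet
    refine ⟨((2 * l + 1 : ℕ) : ℝ), C', 1, fun τ hτ h1 => ?_⟩
    rw [EisAux.slash_mk _ _ _ _ _ hdet, Real.rpow_natCast]
    exact hpoly _ τ hτ h1
  · intro τ hτ
    have h0 : (τ.im : ℂ) ≠ 0 := by
      have : 0 < τ.im := hτ
      exact_mod_cast this.ne'
    unfold xiOp wirtBar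
    rw [EisAux.FEis_eq, EisAux.FF_dbar hx hs hτ, zpow_neg, zpow_natCast]
    have h1 : (starRingEnd ℂ) (EisAux.TT (fun r : R => EisAux.row (γρ⁻¹ * (r : SL2Z)))
        (fun r => (starRingEnd ℂ) (chiOf χ (r : SL2Z))) 0 (2 * l + 2) τ) =
        EisSeries (-((2 * l : ℕ) : ℤ)) N (conjChar χ) γρ R τ := by
      unfold EisAux.TT EisSeries
      rw [Complex.conj_tsum]
      refine tsum_congr fun r => ?_
      have e1 : chiOf (conjChar χ) (r : SL2Z) = (starRingEnd ℂ) (chiOf χ (r : SL2Z)) := by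
        simp [chiOf, conjChar]
      rw [e1, EisAux.tm, EisAux.conj_denom, pow_zero, one_mul, map_mul, map_pow, map_inv₀,
        Complex.conj_conj, Complex.conj_conj,
        show (-((2 * l : ℕ) : ℤ) - 2) = -((2 * l + 2 : ℕ) : ℤ) by push_cast; ring,
        zpow_neg, zpow_natCast, inv_pow]
      rfl
    rw [← h1]
    simp only [map_div₀, map_mul, map_pow, conj_I, conj_ofReal, map_ofNat]
    field_simp
    simp
end
end
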